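/- arXiv:1706.06578 — 4 statements merged into one kernel-verified Lean document; each statement's English description precedes it below -/
import Mathlib

section
/- Let q = p^h with p prime, and suppose either (r = 3 and q > 4), or (r ≥ 4 and q = p > 4), or (r ≥ 4, q = p^2 and p > 3). Then a quasi-Hermitian variety V of PG(r,q^2) is a non-singular Hermitian variety if and only if its characteristic vector v^V belongs to C_p, the F_p-code spanned by the characteristic vectors of the hyperplanes of PG(r,q^2). -/
/-!
Common framework: `ProjPoint F n` is the set of points of the projective space
PG(n-1, |F|) (so PG(r, q²) corresponds to `n = r + 1` and `Fintype.card F = q ^ 2`).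
Projective subspaces of projective dimension `k` are the submodules of `Fin n → F`
of `finrank` equal to `k + 1`; lines have finrank 2, planes finrank 3 and
hyperplanes finrank `n - 1 = r`.
-/

open Module Matrix

/-- The points of the projective space PG(n-1, |F|): one-dimensional subspaces
of `F^n`. -/
def ProjPoint (F : Type) [Field F] (n : ℕ) : Type :=
  {W : Submodule F (Fin n → F) // finrank F W = 1}

/-- The set of projective points lying in a given subspace `W`. -/
def pointsIn (F : Type) [Field F] (n : ℕ) (W : Submodule F (Fin n → F)) :
    Set (ProjPoint F n) :=
  {P | P.1 ≤ W}

/-- The number of points of `V` lying in the subspace `W`. -/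
noncomputable def secant (F : Type) [Field F] (n : ℕ) (V : Set (ProjPoint F n))
    (W : Submodule F (Fin n → F)) : ℕ :=
  (V ∩ pointsIn F n W).ncard

/-- The characteristic vector of a set of projective points, with values in `F_p`. -/
noncomputable def charVec (F : Type) [Field F] (p n : ℕ) (S : Set (ProjPoint F n)) :
    ProjPoint F n → ZMod p :=
  Set.indicator S 1

/-- `C_p`: the `F_p`-code spanned by the characteristic vectors of hyperplanes. -/
def hypCode (F : Type) [Field F] (p n : ℕ) :
    Submodule (ZMod p) (ProjPoint F n → ZMod p) :=
  Submodule.span (ZMod p)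
    {v | ∃ H : Submodule F (Fin n → F), finrank F H = n - 1 ∧
      v = charVec F p n (pointsIn F n H)}

/-- A quasi-Hermitian variety of PG(r, q²): it has the size of a non-singular
Hermitian variety and the same two intersection numbers with hyperplanes.
(All identities are stated multiplied through by `q² - 1`.) -/
def IsQuasiHermitian (F : Type) [Field F] (q r : ℕ)
    (V : Set (ProjPoint F (r + 1))) : Prop :=
  (V.ncard : ℤ) * ((q : ℤ) ^ 2 - 1)
      = ((q : ℤ) ^ (r + 1) + (-1) ^ r) * ((q : ℤ) ^ r - (-1) ^ r) ∧
  ∀ H : Submodule F (Fin (r + 1) → F), finrank F H = r →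
    ((secant F (r + 1) V H : ℤ) * ((q : ℤ) ^ 2 - 1)
        = ((q : ℤ) ^ r + (-1) ^ (r - 1)) * ((q : ℤ) ^ (r - 1) - (-1) ^ (r - 1)) ∨
     (secant F (r + 1) V H : ℤ) * ((q : ℤ) ^ 2 - 1)
        = ((q : ℤ) ^ 2 - 1)
          + (q : ℤ) ^ 2 * (((q : ℤ) ^ (r - 1) + (-1) ^ r) * ((q : ℤ) ^ (r - 2) - (-1) ^ r)))

/-- The zero set, in PG(n-1,|F|), of the Hermitian form `x ↦ xᵀ A x^(q)`. -/
def hermSet (F : Type) [Field F] (q n : ℕ) (A : Matrix (Fin n) (Fin n) F) :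
    Set (ProjPoint F n) :=
  {P | ∀ x ∈ P.1, ∑ i, ∑ j, x i * A i j * (x j) ^ q = 0}

/-- A non-singular Hermitian variety of PG(n-1, q²). -/
def IsNonsingHermitian (F : Type) [Field F] (q n : ℕ)
    (V : Set (ProjPoint F n)) : Prop :=
  ∃ A : Matrix (Fin n) (Fin n) F, IsUnit A.det ∧
    Aᵀ = A.map (fun a => a ^ q) ∧ V = hermSet F q n A

/-- A singular Hermitian variety of PG(n-1, q²) whose singular space (the radical
of the Hermitian form) has projective dimension `d`. -/
def IsSingularHermitian (F : Type) [Field F] (q n d : ℕ)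
    (S : Set (ProjPoint F n)) : Prop :=
  ∃ A : Matrix (Fin n) (Fin n) F,
    Aᵀ = A.map (fun a => a ^ q) ∧
    finrank F (LinearMap.ker (Matrix.toLin' Aᵀ)) = d + 1 ∧
    S = hermSet F q n A

/-- A `d`-singular quasi-Hermitian variety of PG(r, q²). -/
def IsSingularQuasiHermitian (F : Type) [Field F] (q r d : ℕ)
    (S : Set (ProjPoint F (r + 1))) : Prop :=
  ∃ S₀ : Set (ProjPoint F (r + 1)), IsSingularHermitian F q (r + 1) d S₀ ∧
    S.ncard = S₀.ncard ∧
    ∀ H : Submodule F (Fin (r + 1) → F), finrank F H = r →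
      ∃ H₀ : Submodule F (Fin (r + 1) → F), finrank F H₀ = r ∧
        secant F (r + 1) S H = secant F (r + 1) S₀ H₀

/-- `U` is a classical unital (Hermitian curve) of the plane `π` of PG(n-1, q²):
in some coordinatization `e` of `π`, it is the zero set of a non-degenerate
Hermitian form on `F³`. -/
def IsClassicalUnital (F : Type) [Field F] (q n : ℕ)
    (π : Submodule F (Fin n → F)) (U : Set (ProjPoint F n)) : Prop :=
  ∃ e : (Fin 3 → F) →ₗ[F] (Fin n → F), LinearMap.ker e = ⊥ ∧ LinearMap.range e = π ∧
    ∃ A : Matrix (Fin 3) (Fin 3) F, IsUnit A.det ∧ Aᵀ = A.map (fun a => a ^ q) ∧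
      U = {P | ∃ y : Fin 3 → F, y ≠ 0 ∧ P.1 = Submodule.span F {e y} ∧
        ∑ i, ∑ j, y i * A i j * (y j) ^ q = 0}

open scoped Classical in
/-- The span of (characteristic functions of) kernels of linear forms. -/
noncomputable def Cd (F E : Type) [Field F] [AddCommGroup E] [Module F E] : Submodule F (E → F) :=
  Submodule.span F (Set.range fun L : Dual F E => fun v => if L v = 0 then (1:F) else 0)

section
open Polynomial
variable {F : Type} [Field F] [Fintype F]

open scoped Classical in
lemma one_sub_pow_card (x : F) :
    1 - x ^ (Fintype.card F - 1) = if x = 0 then (1:F) else 0 := by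
  split_ifs with h
  · subst h
    have : 1 < Fintype.card F := Fintype.one_lt_card
    rw [zero_pow (by omega)]; simp
  · rw [FiniteField.pow_card_sub_one_eq_one x h]; simp

open scoped Classical in
lemma gen_poly (α β γ : F) (k : ℕ) : ∃ P : F[X], P.natDegree ≤ k ∧
    ∀ m, P.eval m = ∑ z : F, (if α + m * β + z * γ = 0 then (1:F) else 0) * z ^ k := by
  by_cases hγ : γ = 0
  · subst hγ
    by_cases hk : k < Fintype.card F - 1
    · refine ⟨0, by simp, fun m => ?_⟩
      simp only [mul_zero, add_zero, ← Finset.mul_sum, FiniteField.sum_pow_lt_card_sub_one F k hk]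
      simp
    · refine ⟨(1 - (C α + C β * X) ^ (Fintype.card F - 1)) * C (∑ z : F, z ^ k), ?_, fun m => ?_⟩
      · refine (natDegree_mul_C_le _ _).trans ?_
        refine (natDegree_sub_le _ _).trans ?_
        simp only [natDegree_one]
        refine max_le (Nat.zero_le _) (natDegree_pow_le.trans ?_)
        have : (C α + C β * X : F[X]).natDegree ≤ 1 := by compute_degree
        calc _ ≤ (Fintype.card F - 1) * 1 := Nat.mul_le_mul_left _ this
          _ ≤ k := by omega
      · simp only [mul_zero, add_zero, ← Finset.mul_sum]
        rw [← one_sub_pow_card]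
        simp only [eval_mul, eval_sub, eval_one, eval_pow, eval_add, eval_C, eval_X]
        rw [mul_comm β m]
  · refine ⟨(C (-γ⁻¹) * (C α + C β * X)) ^ k, ?_, fun m => ?_⟩
    · refine natDegree_pow_le.trans ?_
      have : (C (-γ⁻¹) * (C α + C β * X) : F[X]).natDegree ≤ 1 := by
        refine (natDegree_C_mul_le _ _).trans ?_
        compute_degree
      calc _ ≤ k * 1 := Nat.mul_le_mul_left _ this
        _ = k := by omega
    · rw [Finset.sum_eq_single (-γ⁻¹ * (α + β * m))]
      · rw [if_pos (by field_simp; ring)]; simp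
      · intro z _ hz
        rw [if_neg, zero_mul]
        intro h
        apply hz
        field_simp
        linear_combination h
      · simp

lemma exists_poly {E : Type} [AddCommGroup E] [Module F E] {c : E → F} (hc : c ∈ Cd F E)
    (y0 y1 x : E) (k : ℕ) : ∃ P : F[X], P.natDegree ≤ k ∧
    ∀ m, P.eval m = ∑ z : F, c (y0 + m • y1 + z • x) * z ^ k := by
  classical
  induction hc using Submodule.span_induction with
  | mem c h =>
    obtain ⟨L, rfl⟩ := h
    obtain ⟨P, h1, h2⟩ := gen_poly (L y0) (L y1) (L x) k
    refine ⟨P, h1, fun m => ?_⟩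
    rw [h2]
    simp
  | zero => exact ⟨0, by simp, by simp⟩
  | add c d _ _ g1 g2 =>
    obtain ⟨P, h1, h2⟩ := g1
    obtain ⟨P', h1', h2'⟩ := g2
    refine ⟨P + P', (natDegree_add_le _ _).trans (max_le h1 h1'), fun m => ?_⟩
    simp [h2, h2', add_mul, Finset.sum_add_distrib]
  | smul a c _ h1 =>
    obtain ⟨P, h1, h2⟩ := h1
    refine ⟨C a * P, (natDegree_C_mul_le _ _).trans h1, fun m => ?_⟩
    simp [h2, Finset.mul_sum, mul_assoc]

open scoped Classical in
lemma hankel (g : F → F → F) (P : ℕ → F[X]) (hd : ∀ k, (P k).natDegree ≤ k)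
    (he : ∀ k m, (P k).eval m = ∑ z : F, g m z * z ^ k) (a : F → ℕ)
    (ha : ∀ m, a m = (Finset.univ.filter fun z => g m z ≠ 0).card) (m0 : F) :
    ∑ m : F, (a m0 - a m) ≤ a m0 * (a m0 - 1) := by
  set d := a m0 with hd0
  let Mt : Matrix (Fin d) (Fin d) F[X] := Matrix.of fun i j => P (i + j)
  have hdeg : Mt.det.natDegree ≤ d * (d - 1) := by
    rw [Matrix.det_apply]
    refine natDegree_sum_le_of_forall_le _ _ fun σ _ => ?_
    refine (natDegree_smul_le _ _).trans ?_
    refine (natDegree_prod_le _ _).trans ?_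
    calc _ ≤ ∑ i : Fin d, (((σ i : Fin d) : ℕ) + (i : ℕ)) := Finset.sum_le_sum fun i _ => hd _
      _ = ∑ i : Fin d, (i : ℕ) + ∑ i : Fin d, (i : ℕ) := by
        rw [Finset.sum_add_distrib, Equiv.sum_comp σ (fun i : Fin d => (i : ℕ))]
      _ = d * (d - 1) := by
        rw [Fin.sum_univ_eq_sum_range (fun i => i) d, ← Finset.sum_range_id_mul_two]; ring
  have hne : Mt.det ≠ 0 := by
    intro h0
    have h1 : (Mt.map (eval m0)).det = 0 := by
      have := congrArg (evalRingHom m0) h0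
      rw [RingHom.map_det] at this
      simpa using this
    have hcard : (Finset.univ.filter fun z => g m0 z ≠ 0).card = d := (ha m0).symm
    let e := (Finset.univ.filter fun z => g m0 z ≠ 0).equivFinOfCardEq hcard
    let v : Fin d → F := fun l => (e.symm l : F)
    have hvm : ∀ l, g m0 (v l) ≠ 0 := fun l => by
      exact (Finset.mem_filter.1 (e.symm l).2).2
    have h2 : Mt.map (eval m0) = (vandermonde v)ᵀ * Matrix.diagonal (fun l => g m0 (v l)) * vandermonde v := by
      ext i j
      rw [Matrix.mul_apply]
      simp only [Matrix.map_apply, Mt, Matrix.of_apply, Matrix.mul_diagonal, Matrix.transpose_apply,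
        vandermonde_apply, he]
      rw [← Finset.sum_filter_of_ne (p := fun z => g m0 z ≠ 0)]
      · rw [← Finset.sum_coe_sort, ← Equiv.sum_comp e.symm]
        refine Finset.sum_congr rfl fun l _ => ?_
        simp only [v]; ring
      · intro z _ h hz
        apply h; rw [hz, zero_mul]
    rw [h2, det_mul, det_mul, det_transpose, det_diagonal] at h1
    have h3 : (vandermonde v).det ≠ 0 := det_vandermonde_ne_zero_iff.2
      (fun i j h => e.symm.injective (Subtype.ext h))
    have h4 : ∏ l, g m0 (v l) ≠ 0 := Finset.prod_ne_zero_iff.2 fun l _ => hvm l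
    simp_all
  have hdvd : ∀ m, (X - C m) ^ (d - a m) ∣ Mt.det := by
    intro m
    by_cases hlt : d ≤ a m
    · rw [Nat.sub_eq_zero_of_le hlt]; simp
    push Not at hlt
    let ρ : F[X] := ∏ z ∈ Finset.univ.filter (fun z => g m z ≠ 0), (X - C z)
    have hρm : ρ.Monic := monic_prod_of_monic _ _ fun z _ => monic_X_sub_C z
    have hρd : ρ.natDegree = a m := by
      rw [natDegree_prod_of_monic _ _ fun z _ => monic_X_sub_C z]
      simp [ha]
    let pp : Fin d → F[X] := fun i => if (i : ℕ) < a m then X ^ (i : ℕ) else X ^ ((i : ℕ) - a m) * ρ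
    have hppm : ∀ i, (pp i).Monic := fun i => by
      simp only [pp]; split_ifs
      · exact monic_X_pow _
      · exact (monic_X_pow _).mul hρm
    have hppd : ∀ i, (pp i).natDegree = i := fun i => by
      simp only [pp]; split_ifs
      · simp
      · rw [(monic_X_pow _).natDegree_mul hρm, natDegree_X_pow, hρd]; omega
    let U : Matrix (Fin d) (Fin d) F := Matrix.of fun i j => (pp j).coeff i
    have hU : U.det = 1 := det_matrixOfPolynomials pp hppd hppm
    let N := Mt * U.map C
    have hN : N.det = Mt.det := by
      rw [det_mul]
      have : (U.map C).det = C U.det := by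
        rw [RingHom.map_det]; rfl
      rw [this, hU]; simp
    rw [← hN, Matrix.det_apply]
    refine Finset.dvd_sum fun σ _ => ?_
    rw [Units.smul_def, zsmul_eq_mul]
    refine Dvd.dvd.mul_left ?_ _
    have hcol : ∀ i j : Fin d, (if (j : ℕ) < a m then (1 : F[X]) else X - C m) ∣ N i j := by
      intro i j
      split_ifs with hj
      · exact one_dvd _
      rw [dvd_iff_isRoot, IsRoot.def]
      simp only [N, Matrix.mul_apply, Mt, Matrix.of_apply, U, Matrix.map_apply, eval_finsetSum, eval_mul, eval_C, he]
      have : ∀ z, g m z * z ^ (i : ℕ) * (pp j).eval z = 0 := by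
        intro z
        by_cases hz : g m z = 0
        · simp [hz]
        · have : ρ.eval z = 0 := by
            rw [eval_prod]
            exact Finset.prod_eq_zero (i := z) (by simp [hz]) (by simp)
          simp [pp, hj, this]
      rw [← Finset.sum_eq_zero fun z _ => this z]
      simp_rw [Finset.sum_mul]
      rw [Finset.sum_comm]
      refine Finset.sum_congr rfl fun z _ => ?_
      rw [eval_eq_sum_range' (n := d) (by rw [hppd]; exact j.2), Finset.mul_sum, Finset.sum_range]
      refine Finset.sum_congr rfl fun l _ => ?_
      ring
    calc (X - C m) ^ (d - a m) = ∏ j : Fin d, (if (j : ℕ) < a m then (1 : F[X]) else X - C m) := by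
          rw [Finset.prod_ite, Finset.prod_const_one, one_mul, Finset.prod_const]
          congr 1
          have h1 := Finset.card_filter_add_card_filter_not (s := (Finset.univ : Finset (Fin d))) (fun j => (j : ℕ) < a m)
          have h2 : (Finset.univ.filter fun j : Fin d => (j : ℕ) < a m).card = a m := by
            rw [Fin.card_filter_val_lt]; omega
          simp at h1 h2
          simp
          omega
      _ ∣ _ := Finset.prod_dvd_prod_of_dvd _ _ fun j _ => hcol _ _
  calc ∑ m : F, (d - a m) ≤ ∑ m : F, Mt.det.roots.count m := Finset.sum_le_sum fun m _ => by
        rw [count_roots]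
        exact (le_rootMultiplicity_iff hne).2 (hdvd m)
    _ = Multiset.card Mt.det.roots := Multiset.sum_count_eq_card (by simp)
    _ ≤ Mt.det.natDegree := card_roots' _
    _ ≤ _ := hdeg

open scoped Classical in
lemma lemmaH {E : Type} [AddCommGroup E] [Module F E] {c : E → F} (hc : c ∈ Cd F E)
    (y0 y1 x : E) (m0 : F) (a : F → ℕ)
    (ha : ∀ m, a m = (Finset.univ.filter fun z : F => c (y0 + m • y1 + z • x) ≠ 0).card) :
    ∑ m : F, (a m0 - a m) ≤ a m0 * (a m0 - 1) := by
  choose P h1 h2 using exists_poly hc y0 y1 x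
  exact hankel (fun m z => c (y0 + m • y1 + z • x)) P h1 h2 a ha m0

end

section
open scoped Classical
variable {F : Type} [Field F] [Fintype F]

lemma fib_card {G : Type} [AddCommGroup G] [Module F G] [Fintype G] (φ : G →ₗ[F] F)
    (hφ : φ ≠ 0) : Fintype.card F * (Finset.univ.filter fun g => φ g = 0).card = Fintype.card G := by
  have hs : Function.Surjective φ := LinearMap.surjective hφ
  have h1 : ∀ c, (Finset.univ.filter fun g => φ g = c).card
      = (Finset.univ.filter fun g => φ g = 0).card := by
    intro c
    obtain ⟨g0, hg0⟩ := hs c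
    refine Finset.card_bij (fun g _ => g - g0) ?_ ?_ ?_
    · intro g hg; simp at hg ⊢; rw [hg, hg0, sub_self]
    · intro g _ g' _ h; exact sub_left_injective h
    · intro g hg; refine ⟨g + g0, ?_, by simp⟩
      simp at hg ⊢; rw [hg, hg0, zero_add]
  have h2 := Finset.card_eq_sum_card_fiberwise (s := (Finset.univ : Finset G)) (t := Finset.univ)
    (f := φ) (by simp)
  rw [Finset.card_univ] at h2
  rw [h2, Finset.sum_congr rfl fun c _ => h1 c]
  simp

variable {E : Type} [AddCommGroup E] [Module F E] [Fintype E]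

/-- number of vectors of `A` in the kernel of `L` -/
noncomputable def nL (A : Finset E) (L : Dual F E) : ℕ := (A.filter fun v => L v = 0).card

lemma pair_count (A : Finset E) (hs : ∀ (c : F) v, v ∈ A → c • v ∈ A) (L : Dual F E) :
    ((Fintype.card F : ℤ) - 1) * ((A ×ˢ A).filter fun w => L (w.1 - w.2) = 0).card
      = Fintype.card F * (nL A L : ℤ) ^ 2 - 2 * A.card * nL A L + (A.card : ℤ) ^ 2 := by
  let m : F → ℕ := fun c => (A.filter fun v => L v = c).card
  have h1 : ∀ c, c ≠ 0 → m c = m 1 := by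
    intro c hc
    refine Finset.card_bij (fun g _ => c⁻¹ • g) ?_ ?_ ?_
    · intro g hg; simp at hg ⊢; exact ⟨hs _ _ hg.1, by rw [hg.2]; field_simp⟩
    · intro g _ g' _ h; exact smul_right_injective E (inv_ne_zero hc) h
    · intro g hg; refine ⟨c • g, ?_, by simp [smul_smul, hc]⟩
      simp at hg ⊢; exact ⟨hs _ _ hg.1, by rw [hg.2]; simp⟩
  have h0 : m 0 = nL A L := rfl
  have hc1 : (Fintype.card F : ℤ) - 1 = ((Finset.univ.erase (0:F)).card : ℤ) := by
    rw [Finset.card_erase_of_mem (Finset.mem_univ _), Finset.card_univ]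
    have : 1 < Fintype.card F := Fintype.one_lt_card
    omega
  have h2 : (A.card : ℤ) = nL A L + ((Fintype.card F : ℤ) - 1) * m 1 := by
    have h2 := Finset.card_eq_sum_card_fiberwise (s := A) (t := Finset.univ)
      (f := fun v => L v) (by simp)
    rw [h2, ← Finset.add_sum_erase _ _ (Finset.mem_univ (0:F))]
    rw [Finset.sum_congr rfl fun c hc => h1 c (Finset.ne_of_mem_erase hc)]
    rw [Finset.sum_const, hc1]; simp [nL]
  have h3 : (((A ×ˢ A).filter fun w => L (w.1 - w.2) = 0).card : ℤ)
      = (nL A L : ℤ) ^ 2 + ((Fintype.card F : ℤ) - 1) * (m 1 : ℤ) ^ 2 := by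
    have h3 := Finset.card_eq_sum_card_fiberwise (s := (A ×ˢ A).filter fun w => L (w.1 - w.2) = 0)
      (t := Finset.univ) (f := fun w => L w.1) (by simp)
    have h4 : ∀ c, (((A ×ˢ A).filter fun w => L (w.1 - w.2) = 0).filter fun w => L w.1 = c).card
       = m c ^ 2 := by
      intro c
      rw [sq, ← Finset.card_product]
      congr 1
      ext ⟨u, v⟩
      simp only [Finset.mem_filter, Finset.mem_product, map_sub, sub_eq_zero]
      constructor
      · rintro ⟨⟨⟨h1, h2⟩, h3⟩, h4⟩; exact ⟨⟨h1, h4⟩, ⟨h2, h3 ▸ h4⟩⟩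
      · rintro ⟨⟨h1, h4⟩, ⟨h2, h3⟩⟩; exact ⟨⟨⟨h1, h2⟩, h4.trans h3.symm⟩, h4⟩
    rw [h3, Finset.sum_congr rfl fun c _ => h4 c, ← Finset.add_sum_erase _ _ (Finset.mem_univ (0:F))]
    rw [Finset.sum_congr rfl fun c hc => by rw [h1 c (Finset.ne_of_mem_erase hc)]]
    rw [Finset.sum_const, hc1, h0]; simp
  rw [h3, h2]; ring

lemma sum_card_comm {α β : Type*} (s : Finset α) (t : Finset β) (R : α → β → Prop)
    [∀ a b, Decidable (R a b)] :
    ∑ a ∈ s, (t.filter fun b => R a b).card = ∑ b ∈ t, (s.filter fun a => R a b).card := by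
  simp only [Finset.card_filter]
  exact Finset.sum_comm

lemma moments (A : Finset E) (hs : ∀ (c : F) v, v ∈ A → c • v ∈ A) (n1 n2 : ℤ)
    (hn : ∀ L : Dual F E, L ≠ 0 → (nL A L : ℤ) = n1 ∨ (nL A L : ℤ) = n2)
    {G : Type} [AddCommGroup G] [Module F G] [Fintype G] (Λ : G →ₗ[F] Dual F E)
    (hΛ : Function.Injective Λ)
    {J : Type} [AddCommGroup J] [Module F J] [Fintype J] (ι : J →ₗ[F] E)
    (hι : Function.Injective ι) (hD : ∀ v, (∀ g, Λ g v = 0) ↔ ∃ j, ι j = v)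
    (Q M j k MD U1 U2 : ℤ) (hQ : Q = Fintype.card F) (hM : M = A.card) (hj : j = Fintype.card J)
    (hk : k = Fintype.card G) (hMD : MD = (Finset.univ.filter fun j => ι j ∈ A).card)
    (hU1 : U1 = ∑ w : E, ((Finset.univ.filter fun j => w + ι j ∈ A).card : ℤ))
    (hU2 : U2 = ∑ w : E, ((Finset.univ.filter fun j => w + ι j ∈ A).card : ℤ) ^ 2) :
    U1 = j * M ∧ ∃ N1 N2 : ℤ, Q * N1 = k * (Q * MD + M - MD) ∧
      N2 = (n1 + n2) * N1 - k * n1 * n2 + (M - n1) * (M - n2) ∧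
      j * Q * (Q * N2 - 2 * M * N1 + k * M ^ 2) = (Q - 1) * k * ((Q - 1) * U2 + j * M ^ 2) := by
  have hQ1 : (1:ℤ) < Q := by rw [hQ]; exact_mod_cast Fintype.one_lt_card
  -- kernel counts
  have hker : ∀ v, Q * ((Finset.univ.filter fun g => Λ g v = 0).card : ℤ)
      = k * (if ∃ j, ι j = v then Q else 1) := by
    intro v
    split_ifs with h
    · rw [← hD] at h
      rw [Finset.filter_true_of_mem (by simpa using h), Finset.card_univ, hk]; ring
    · rw [← hD] at h
      have := fib_card ((Dual.eval F E v).comp Λ) (by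
        intro h0; apply h; intro g
        simpa using LinearMap.congr_fun h0 g)
      rw [hk, hQ, mul_one]
      exact_mod_cast this
  -- U1
  have e1 : U1 = j * M := by
    have h := sum_card_comm (Finset.univ : Finset E) (Finset.univ : Finset J) (fun w j => w + ι j ∈ A)
    have h' : ∀ j : J, (Finset.univ.filter fun w => w + ι j ∈ A).card = A.card := by
      intro j
      refine Finset.card_bij (fun w _ => w + ι j) (by simp) (by simp) ?_
      intro b hb; exact ⟨b - ι j, by simpa using hb, by simp⟩
    rw [Finset.sum_congr rfl fun j _ => h' j] at h
    rw [hU1, hj, hM]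
    rw [Finset.sum_const, Finset.card_univ, smul_eq_mul] at h
    exact_mod_cast h
  -- T2
  obtain ⟨T2, hT2⟩ : ∃ T2 : ℤ, T2 = (((A ×ˢ A).filter fun w => ∃ j, ι j = w.1 - w.2).card : ℤ) := ⟨_, rfl⟩
  have e2 : U2 = j * T2 := by
    have h1 : ∀ w : E, ((Finset.univ.filter fun j => w + ι j ∈ A).card) ^ 2
       = ((Finset.univ : Finset (J × J)).filter fun jj => w + ι jj.1 ∈ A ∧ w + ι jj.2 ∈ A).card := by
      intro w
      rw [sq, ← Finset.card_product]
      congr 1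
      ext ⟨a, b⟩; simp
    have h2 : ∀ i : J, ∑ j : J, (Finset.univ.filter fun w => w + ι i ∈ A ∧ w + ι j ∈ A).card
       = ((A ×ˢ A).filter fun w => ∃ j, ι j = w.1 - w.2).card := by
      intro i
      rw [← Finset.card_sigma]
      refine Finset.card_bij (fun a _ => (a.2 + ι a.1, a.2 + ι i)) ?_ ?_ ?_
      · rintro ⟨b, w⟩ h
        simp at h ⊢
        refine ⟨⟨h.2, h.1⟩, b - i, by simp⟩
      · rintro ⟨b, w⟩ h ⟨b', w'⟩ h' he
        simp at he
        obtain ⟨h1, h2⟩ := he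
        subst h2
        have := hι (add_left_cancel h1)
        subst this; rfl
      · rintro ⟨u, v⟩ h
        simp at h
        obtain ⟨⟨h1, h2⟩, b, h3⟩ := h
        refine ⟨⟨b + i, v - ι i⟩, ?_, ?_⟩
        · simp [h2, h3, h1]
        · simp [h3]
    rw [hU2, hj, hT2]
    have h3 := sum_card_comm (Finset.univ : Finset E) (Finset.univ : Finset (J × J))
      (fun w jj => w + ι jj.1 ∈ A ∧ w + ι jj.2 ∈ A)
    rw [Fintype.sum_prod_type] at h3
    simp only at h3
    rw [Finset.sum_congr rfl fun i _ => h2 i, Finset.sum_const, Finset.card_univ, smul_eq_mul] at h3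
    rw [← Nat.cast_mul, ← h3]
    push_cast
    exact Finset.sum_congr rfl fun w _ => by exact_mod_cast h1 w
  refine ⟨e1, ∑ g : G, (nL A (Λ g) : ℤ), ∑ g : G, (nL A (Λ g) : ℤ) ^ 2, ?_, ?_, ?_⟩
  · have h := sum_card_comm (Finset.univ : Finset G) A (fun g v => Λ g v = 0)
    have h' : Q * ∑ g : G, (nL A (Λ g) : ℤ) = Q * ∑ v ∈ A, ((Finset.univ.filter fun g => Λ g v = 0).card : ℤ) := by
      congr 1
      unfold nL
      exact_mod_cast h
    rw [h', Finset.mul_sum, Finset.sum_congr rfl fun v _ => hker v, ← Finset.mul_sum]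
    congr 1
    rw [Finset.sum_ite, Finset.sum_const, Finset.sum_const]
    have h1 := Finset.card_filter_add_card_filter_not (s := A) (fun v => ∃ j, ι j = v)
    have h2 : (A.filter fun v => ∃ j, ι j = v).card = (Finset.univ.filter fun j => ι j ∈ A).card := by
      symm
      refine Finset.card_bij (fun j _ => ι j) (by simp) (fun a _ b _ h => hι h) ?_
      intro b hb
      simp at hb
      obtain ⟨h1, j, rfl⟩ := hb
      exact ⟨j, by simpa using h1, rfl⟩
    rw [h2] at h1 ⊢
    rw [hMD, hM, ← h1]
    simp; ring
  · have h : ∀ g : G, g ≠ 0 → ((nL A (Λ g) : ℤ) - n1) * ((nL A (Λ g) : ℤ) - n2) = 0 := by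
      intro g hg
      rcases hn (Λ g) (fun h => hg (hΛ (by rw [h, map_zero]))) with h | h <;> rw [h] <;> ring
    have h2 : ∑ g : G, ((nL A (Λ g) : ℤ) - n1) * ((nL A (Λ g) : ℤ) - n2) = (M - n1) * (M - n2) := by
      rw [Finset.sum_eq_single 0 (fun g _ hg => h g hg) (by simp)]
      have : nL A (Λ 0) = A.card := by simp [nL]
      rw [this, hM]
    rw [← h2, hk]
    have : ∀ g, ((nL A (Λ g) : ℤ) - n1) * ((nL A (Λ g) : ℤ) - n2)
      = (nL A (Λ g) : ℤ) ^ 2 - (n1 + n2) * (nL A (Λ g) : ℤ) + n1 * n2 := fun g => by ring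
    simp only [this, Finset.sum_add_distrib, Finset.sum_sub_distrib, ← Finset.mul_sum]
    simp
    ring
  · have h1 : ∀ g, _ := fun g => pair_count A hs (Λ g)
    have h2 : Q * ∑ g : G, (((A ×ˢ A).filter fun w => Λ g (w.1 - w.2) = 0).card : ℤ)
       = k * ((Q - 1) * T2 + M ^ 2) := by
      have h := sum_card_comm (Finset.univ : Finset G) (A ×ˢ A) (fun g w => Λ g (w.1 - w.2) = 0)
      have h' : ∑ g : G, (((A ×ˢ A).filter fun w => Λ g (w.1 - w.2) = 0).card : ℤ)
         = ∑ w ∈ A ×ˢ A, ((Finset.univ.filter fun g => Λ g (w.1 - w.2) = 0).card : ℤ) := by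
        exact_mod_cast h
      rw [h', Finset.mul_sum, Finset.sum_congr rfl fun v _ => hker _, ← Finset.mul_sum]
      congr 1
      rw [Finset.sum_ite, Finset.sum_const, Finset.sum_const]
      have h1 := Finset.card_filter_add_card_filter_not (s := A ×ˢ A) (fun w => ∃ j, ι j = w.1 - w.2)
      rw [Finset.card_product] at h1
      have h1' : (T2:ℤ) + ((A ×ˢ A).filter fun w => ¬ ∃ j, ι j = w.1 - w.2).card = M * M := by
        rw [hM, hT2]; exact_mod_cast h1
      simp only [nsmul_eq_mul, mul_one]
      rw [← hT2]
      linear_combination h1'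
    have h3 : (Q - 1) * ∑ g : G, (((A ×ˢ A).filter fun w => Λ g (w.1 - w.2) = 0).card : ℤ)
       = Q * ∑ g : G, (nL A (Λ g) : ℤ) ^ 2 - 2 * M * ∑ g : G, (nL A (Λ g) : ℤ) + k * M ^ 2 := by
      rw [Finset.mul_sum, hQ, Finset.sum_congr rfl fun g _ => h1 g, hk]
      simp only [Finset.sum_add_distrib, Finset.sum_sub_distrib, ← Finset.mul_sum]
      simp [hM]
    rw [e2, ← h3]
    linear_combination j * (Q - 1) * h2

end

section
set_option linter.unusedSectionVars false
open scoped Classical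
variable {F : Type} [Field F] [Fintype F]
variable {E : Type} [AddCommGroup E] [Module F E] [Fintype E]

lemma moments' (A : Finset E) (hs : ∀ (c : F) v, v ∈ A → c • v ∈ A) (n1 n2 : ℤ)
    (hn : ∀ L : Dual F E, L ≠ 0 → (nL A L : ℤ) = n1 ∨ (nL A L : ℤ) = n2)
    {J : Type} [AddCommGroup J] [Module F J] [Fintype J] (ι : J →ₗ[F] E)
    (hι : Function.Injective ι)
    (Q M j k MD U1 U2 : ℤ) (hQ : Q = Fintype.card F) (hM : M = A.card) (hj : j = Fintype.card J)
    (hk : k * j = Q ^ (finrank F E)) (hMD : MD = (Finset.univ.filter fun j => ι j ∈ A).card)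
    (hU1 : U1 = ∑ w : E, ((Finset.univ.filter fun j => w + ι j ∈ A).card : ℤ))
    (hU2 : U2 = ∑ w : E, ((Finset.univ.filter fun j => w + ι j ∈ A).card : ℤ) ^ 2) :
    U1 = j * M ∧ ∃ N1 N2 : ℤ, Q * N1 = k * (Q * MD + M - MD) ∧
      N2 = (n1 + n2) * N1 - k * n1 * n2 + (M - n1) * (M - n2) ∧
      j * Q * (Q * N2 - 2 * M * N1 + k * M ^ 2) = (Q - 1) * k * ((Q - 1) * U2 + j * M ^ 2) := by
  have : Finite (Dual F E) := Finite.of_injective (fun L : Dual F E => (L : E → F)) DFunLike.coe_injective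
  let W : Subspace F E := LinearMap.range ι
  let _ : Fintype (Submodule.dualAnnihilator W) := Fintype.ofFinite _
  have hdim := Subspace.finrank_add_finrank_dualAnnihilator_eq W
  have hW : finrank F W = finrank F J := LinearMap.finrank_range_of_inj hι
  refine moments A hs n1 n2 hn (G := Submodule.dualAnnihilator W) (Submodule.dualAnnihilator W).subtype
    (Submodule.subtype_injective _) ι hι ?_ Q M j k MD U1 U2 hQ hM hj ?_ hMD hU1 hU2
  · intro v
    have h : (v ∈ (Submodule.dualAnnihilator W).dualCoannihilator) ↔ v ∈ W := by
      rw [Subspace.dualAnnihilator_dualCoannihilator_eq]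
    rw [Submodule.mem_dualCoannihilator] at h
    rw [← LinearMap.mem_range, ← h]
    simp
  · have hQ1 : (1:ℤ) < Q := by rw [hQ]; exact_mod_cast Fintype.one_lt_card
    rw [card_eq_pow_finrank (K := F)] at hj ⊢
    push_cast at hj ⊢
    rw [← hQ] at hj ⊢
    rw [← hdim, hW, pow_add, hj, mul_comm] at hk
    exact mul_left_cancel₀ (by positivity) hk

/-- vector form of a quasi-Hermitian variety -/
structure QH (F : Type) [Field F] [Fintype F] {E : Type} [AddCommGroup E] [Module F E] [Fintype E]
    (q r : ℕ) (A : Finset E) : Prop where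
  q2 : 2 ≤ q
  r3 : 3 ≤ r
  hF : Fintype.card F = q ^ 2
  hE : finrank F E = r + 1
  zero : (0 : E) ∈ A
  smul : ∀ (c : F) v, v ∈ A → c • v ∈ A
  hM : (A.card : ℤ) = (q:ℤ) ^ 3 * ((q:ℤ) ^ (r - 1)) ^ 2 - (-1) ^ r * (q:ℤ) ^ (r - 1) * q * (q - 1)
  hn : ∀ L : Dual F E, L ≠ 0 →
    (nL A L : ℤ) = q * ((q:ℤ) ^ (r - 1)) ^ 2 + (-1) ^ r * (q:ℤ) ^ (r - 1) * (q - 1) ∨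
    (nL A L : ℤ) = q * ((q:ℤ) ^ (r - 1)) ^ 2 - (-1) ^ r * (q:ℤ) ^ (r - 1) * q * (q - 1)

/-- number of points of `A` on the affine line through `v` with direction `x` -/
noncomputable def sC (F : Type) [Field F] [Fintype F] {E : Type} [AddCommGroup E] [Module F E]
   (A : Finset E) (x v : E) : ℕ := (Finset.univ.filter fun z : F => v + z • x ∈ A).card

/-- number of points of `A` on an affine plane -/
noncomputable def uC (F : Type) [Field F] [Fintype F] {E : Type} [AddCommGroup E] [Module F E]
   (A : Finset E) (x v w : E) : ℕ := (Finset.univ.filter fun z : F × F => w + (z.1 • v + z.2 • x) ∈ A).card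

namespace QH
variable {q r : ℕ} {A : Finset E}

lemma smul_mem (h : QH F q r A) {c : F} (hc : c ≠ 0) (v : E) : c • v ∈ A ↔ v ∈ A :=
  ⟨fun hv => by simpa [smul_smul, hc] using h.smul c⁻¹ _ hv, h.smul c v⟩

lemma x_ne (h : QH F q r A) {x : E} (hx : x ∉ A) : x ≠ 0 := fun h0 => hx (h0 ▸ h.zero)

lemma smul_x_mem (h : QH F q r A) {x : E} (hx : x ∉ A) (c : F) : c • x ∈ A ↔ c = 0 := by
  constructor
  · intro hc; by_contra h0; exact hx ((h.smul_mem h0 x).1 hc)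
  · rintro rfl; simpa using h.zero

lemma s_mult (h : QH F q r A) {x : E} (hx : x ∉ A) (c : F) : sC F A x (c • x) = 1 := by
  unfold sC
  rw [Finset.card_eq_one]
  refine ⟨-c, ?_⟩
  ext z
  simp [← add_smul, h.smul_x_mem hx, add_eq_zero_iff_neg_eq, eq_comm]

lemma s_smul (h : QH F q r A) (x v : E) {c : F} (hc : c ≠ 0) : sC F A x (c • v) = sC F A x v := by
  unfold sC
  refine Finset.card_bij (fun z _ => c⁻¹ * z) ?_ ?_ ?_
  · intro z hz; simp at hz ⊢
    rw [← h.smul_mem hc]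
    simpa [smul_smul, hc] using hz
  · intro z _ z' _ hh; simpa [hc] using hh
  · intro z hz; refine ⟨c * z, ?_, by simp [hc]⟩
    simp at hz ⊢
    rw [mul_smul, ← smul_add, h.smul_mem hc]; exact hz

lemma s_add (x v : E) (c : F) : sC F A x (v + c • x) = sC F A x v := by
  unfold sC
  refine Finset.card_bij (fun z _ => c + z) ?_ ?_ ?_
  · intro z hz; simp at hz ⊢; rwa [add_smul, ← add_assoc]
  · intro z _ z' _ hh; simpa using hh
  · intro z hz; refine ⟨z - c, ?_, by simp⟩
    simp at hz ⊢
    rw [add_assoc, ← add_smul]; simpa using hz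

lemma s_le (h : QH F q r A) (x v : E) : sC F A x v ≤ q ^ 2 := by
  rw [← h.hF]; exact Finset.card_le_univ _

lemma cardE (h : QH F q r A) : (Fintype.card E : ℤ) = (q:ℤ) ^ 4 * ((q:ℤ) ^ (r - 1)) ^ 2 := by
  rw [card_eq_pow_finrank (K := F), h.hE, h.hF]
  push_cast
  rw [← pow_mul, ← pow_mul, ← pow_add]
  congr 1
  have := h.r3
  omega

lemma eps (r : ℕ) : ((-1 : ℤ)) ^ r = 1 ∨ ((-1 : ℤ)) ^ r = -1 := neg_one_pow_eq_or ℤ r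

lemma s_sum (h : QH F q r A) {x : E} (hx : x ∉ A) :
    ∑ v : E, (sC F A x v : ℤ) = (q:ℤ) ^ 2 * A.card := by
  have hinj : Function.Injective (LinearMap.toSpanSingleton F E x) := by
    intro a b hab
    exact smul_left_injective F (h.x_ne hx) (by simpa using hab)
  obtain ⟨e1, -⟩ := moments' A h.smul _ _ h.hn (LinearMap.toSpanSingleton F E x) hinj
    ((q:ℤ) ^ 2) (A.card) ((q:ℤ) ^ 2) ((q:ℤ) ^ 2 * ((q:ℤ) ^ (r - 1)) ^ 2) _ _ _ (by rw [h.hF]; simp) rfl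
    (by rw [h.hF]; simp)
    (by have := h.cardE; rw [card_eq_pow_finrank (K := F), h.hF] at this; push_cast at this
        rw [this]; ring) rfl rfl rfl
  simpa [sC] using e1

lemma s_moment (h : QH F q r A) {x : E} (hx : x ∉ A) :
    ∑ v : E, ((sC F A x v : ℤ) - 1) * ((sC F A x v : ℤ) - q - 1) = 0 := by
  have hinj : Function.Injective (LinearMap.toSpanSingleton F E x) := by
    intro a b hab
    exact smul_left_injective F (h.x_ne hx) (by simpa using hab)
  obtain ⟨e1, N1, N2, h1, h2, h3⟩ := moments' A h.smul _ _ h.hn (LinearMap.toSpanSingleton F E x) hinj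
    ((q:ℤ) ^ 2) (A.card) ((q:ℤ) ^ 2) ((q:ℤ) ^ 2 * ((q:ℤ) ^ (r - 1)) ^ 2) _ _ _ (by rw [h.hF]; simp) rfl
    (by rw [h.hF]; simp)
    (by have := h.cardE; rw [card_eq_pow_finrank (K := F), h.hF] at this; push_cast at this
        rw [this]; ring) rfl rfl rfl
  have hMD : (Finset.univ.filter fun j => (LinearMap.toSpanSingleton F E x) j ∈ A).card = 1 := by
    have := h.s_mult hx 0
    simpa [sC] using this
  rw [hMD] at h1
  have es : ∀ w, (Finset.univ.filter fun j => w + (LinearMap.toSpanSingleton F E x) j ∈ A).card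
     = sC F A x w := fun w => by simp [sC]
  simp only [es] at e1 h3
  have hexp : ∑ v : E, ((sC F A x v : ℤ) - 1) * ((sC F A x v : ℤ) - q - 1)
     = ∑ v : E, (sC F A x v : ℤ) ^ 2 - (q + 2) * ∑ v : E, (sC F A x v : ℤ) + (q + 1) * Fintype.card E := by
    have : ∀ v, ((sC F A x v : ℤ) - 1) * ((sC F A x v : ℤ) - q - 1)
      = (sC F A x v : ℤ) ^ 2 - (q + 2) * (sC F A x v : ℤ) + (q + 1) := fun v => by ring
    simp only [this, Finset.sum_add_distrib, Finset.sum_sub_distrib, ← Finset.mul_sum]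
    simp; ring
  rw [hexp, e1, h.cardE]
  generalize ∑ v : E, (sC F A x v : ℤ) ^ 2 = U2 at h3 ⊢
  rw [h.hM] at h1 h2 h3 ⊢
  have ha : (0:ℤ) < (q:ℤ) ^ (r - 1) := by have := h.q2; positivity
  generalize (q:ℤ) ^ (r - 1) = a at *
  have hq2 : (2:ℤ) ≤ q := by exact_mod_cast h.q2
  generalize (q:ℤ) = q at *
  have hne : (q ^ 2 - 1) ^ 2 * (q ^ 2 * a ^ 2) ≠ 0 := by
    have : 0 < q ^ 2 - 1 := by nlinarith
    positivity
  apply mul_left_cancel₀ hne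
  subst h2
  rcases eps r with he | he <;> rw [he] at h1 h3 ⊢
  · linear_combination (-1) * h3 + q ^ 2 * (q^2 * ((q * a ^ 2 + 1 * a * (q - 1)) + (q * a ^ 2 - 1 * a * q * (q - 1))) - 2 * (q ^ 3 * a ^ 2 - 1 * a * q * (q - 1))) * h1
  · linear_combination (-1) * h3 + q ^ 2 * (q^2 * ((q * a ^ 2 + (-1) * a * (q - 1)) + (q * a ^ 2 - (-1) * a * q * (q - 1))) - 2 * (q ^ 3 * a ^ 2 - (-1) * a * q * (q - 1))) * h1

/-- the linear map parametrizing a plane -/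
noncomputable def ι2 (F : Type) [Field F] {E : Type} [AddCommGroup E] [Module F E] (x v : E) : F × F →ₗ[F] E :=
  (LinearMap.toSpanSingleton F E v).coprod (LinearMap.toSpanSingleton F E x)

lemma ι2_apply (x v : E) (j : F × F) : ι2 F x v j = j.1 • v + j.2 • x := by simp [ι2]

lemma ι2_inj (h : QH F q r A) {x v : E} (hx : x ∉ A) (hv : ∀ c : F, v ≠ c • x) :
    Function.Injective (ι2 F x v) := by
  rw [← LinearMap.ker_eq_bot, LinearMap.ker_eq_bot']
  rintro ⟨a, b⟩ hab
  rw [ι2_apply] at hab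
  simp only at hab
  have ha : a = 0 := by
    by_contra ha
    apply hv (-(a⁻¹ * b))
    have : a⁻¹ • (a • v + b • x) = 0 := by rw [hab, smul_zero]
    rw [smul_add, smul_smul, smul_smul, inv_mul_cancel₀ ha, one_smul] at this
    rw [neg_smul]; exact eq_neg_of_add_eq_zero_left this
  subst ha
  simp [h.x_ne hx] at hab
  simp [hab]

lemma u_eq_sum (x v w : E) : uC F A x v w = ∑ α : F, sC F A x (w + α • v) := by
  unfold uC sC
  rw [Finset.card_filter, Fintype.sum_prod_type]
  refine Finset.sum_congr rfl fun α _ => ?_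
  rw [Finset.card_filter]
  simp only [add_assoc]

lemma md_eq (h : QH F q r A) {x v : E} (hx : x ∉ A) :
    (uC F A x v 0 : ℤ) = 1 + ((q:ℤ) ^ 2 - 1) * sC F A x v := by
  rw [u_eq_sum, ← Finset.add_sum_erase _ _ (Finset.mem_univ (0:F))]
  rw [Finset.sum_congr rfl fun c hc => by rw [zero_add, h.s_smul x v (Finset.ne_of_mem_erase hc)]]
  rw [Finset.sum_const, Finset.card_erase_of_mem (Finset.mem_univ _), Finset.card_univ, h.hF]
  have := h.s_mult hx 0
  rw [zero_smul] at this
  have hq : 1 ≤ q ^ 2 := Nat.one_le_pow _ _ (by have := h.q2; omega)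
  simp [this, hq]

lemma u_moment (h : QH F q r A) {x v : E} (hx : x ∉ A) (hv : ∀ c : F, v ≠ c • x) :
    ∑ w : E, (uC F A x v w : ℤ) = (q:ℤ) ^ 4 * A.card ∧
    ∑ w : E, ((uC F A x v w : ℤ) - q ^ 3) ^ 2 = (q:ℤ) ^ 4 * (q:ℤ) ^ (r - 1) *
      (q ^ 2 * (q - 1) * (q:ℤ) ^ (r - 1) + (-1) ^ r * q * (q - 2) * ((q:ℤ) ^ 3 - (1 + ((q:ℤ) ^ 2 - 1) * sC F A x v))) := by
  obtain ⟨e1, N1, N2, h1, h2, h3⟩ := moments' A h.smul _ _ h.hn (ι2 F x v) (h.ι2_inj hx hv)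
    ((q:ℤ) ^ 2) (A.card) ((q:ℤ) ^ 4) (((q:ℤ) ^ (r - 1)) ^ 2) _ _ _ (by rw [h.hF]; simp) rfl
    (by rw [Fintype.card_prod, h.hF]; push_cast; ring)
    (by have := h.cardE; rw [card_eq_pow_finrank (K := F), h.hF] at this; push_cast at this
        rw [this]; ring) rfl rfl rfl
  have hMD : ((Finset.univ.filter fun j => (ι2 F x v) j ∈ A).card : ℤ) = 1 + ((q:ℤ) ^ 2 - 1) * sC F A x v := by
    rw [← h.md_eq hx]
    simp [uC, ι2_apply]
  rw [hMD] at h1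
  have es : ∀ w, (Finset.univ.filter fun j => w + (ι2 F x v) j ∈ A).card
     = uC F A x v w := fun w => by simp [uC, ι2_apply]
  simp only [es] at e1 h3
  refine ⟨e1, ?_⟩
  have hexp : ∑ w : E, ((uC F A x v w : ℤ) - q ^ 3) ^ 2
     = ∑ w : E, (uC F A x v w : ℤ) ^ 2 - 2 * q ^ 3 * ∑ w : E, (uC F A x v w : ℤ) + q ^ 6 * Fintype.card E := by
    have : ∀ w, ((uC F A x v w : ℤ) - q ^ 3) ^ 2
      = (uC F A x v w : ℤ) ^ 2 - 2 * q ^ 3 * (uC F A x v w : ℤ) + q ^ 6 := fun v => by ring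
    simp only [this, Finset.sum_add_distrib, Finset.sum_sub_distrib, ← Finset.mul_sum]
    simp; ring
  rw [hexp, e1, h.cardE]
  generalize ∑ w : E, (uC F A x v w : ℤ) ^ 2 = U2 at h3 ⊢
  rw [h.hM] at h1 h2 h3 ⊢
  generalize (1 + ((q:ℤ) ^ 2 - 1) * sC F A x v) = MD at *
  have ha : (0:ℤ) < (q:ℤ) ^ (r - 1) := by have := h.q2; positivity
  generalize (q:ℤ) ^ (r - 1) = a at *
  have hq2 : (2:ℤ) ≤ q := by exact_mod_cast h.q2
  generalize (q:ℤ) = q at *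
  have hne : (q ^ 2 - 1) ^ 2 * (a ^ 2) ≠ 0 := by
    have : 0 < q ^ 2 - 1 := by nlinarith
    positivity
  apply mul_left_cancel₀ hne
  subst h2
  rcases eps r with he | he <;> rw [he] at h1 h3 ⊢
  · linear_combination (-1) * h3 + q ^ 4 * (q^2 * ((q * a ^ 2 + 1 * a * (q - 1)) + (q * a ^ 2 - 1 * a * q * (q - 1))) - 2 * (q ^ 3 * a ^ 2 - 1 * a * q * (q - 1))) * h1
  · linear_combination (-1) * h3 + q ^ 4 * (q^2 * ((q * a ^ 2 + (-1) * a * (q - 1)) + (q * a ^ 2 - (-1) * a * q * (q - 1))) - 2 * (q ^ 3 * a ^ 2 - (-1) * a * q * (q - 1))) * h1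

end QH
end

section
set_option linter.unusedSectionVars false
open scoped Classical
variable {F : Type} [Field F] [Fintype F]
variable {E : Type} [AddCommGroup E] [Module F E] [Fintype E]

namespace QH
variable {q r : ℕ} {A : Finset E}

lemma s_cast (h : QH F q r A) (hc : (fun v => if v ∈ A then (1:F) else 0) ∈ Cd F E) {x : E}
    (hx : x ∉ A) (v : E) : (sC F A x v : F) = 1 := by
  obtain ⟨P, h1, h2⟩ := exists_poly hc 0 v x 0
  have hP := Polynomial.eq_C_of_natDegree_le_zero h1
  have e0 := h2 0
  have e1 := h2 1
  rw [hP, Polynomial.eval_C] at e0 e1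
  rw [e0] at e1
  have hs := h.s_mult hx 0
  simp only [zero_smul, zero_add, pow_zero, mul_one, one_smul, Finset.sum_boole] at e1
  rw [zero_smul] at hs
  unfold sC at hs ⊢
  simp only [zero_add] at hs
  rw [← e1]; simp [hs]

lemma s_mod (h : QH F q r A) (hc : (fun v => if v ∈ A then (1:F) else 0) ∈ Cd F E) {x : E}
    (hx : x ∉ A) (v : E) (p : ℕ) [CharP F p] : sC F A x v ≡ 1 [MOD p] := by
  rw [← CharP.natCast_eq_natCast F p, h.s_cast hc hx, Nat.cast_one]

lemma s_pos (h : QH F q r A) (hc : (fun v => if v ∈ A then (1:F) else 0) ∈ Cd F E) {x : E}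
    (hx : x ∉ A) (v : E) : 1 ≤ sC F A x v := by
  by_contra h0
  have : sC F A x v = 0 := by omega
  have h1 := h.s_cast hc hx v
  rw [this] at h1
  simp at h1

lemma types_prime (h : QH F q r A) (hc : (fun v => if v ∈ A then (1:F) else 0) ∈ Cd F E) {x : E}
    (hx : x ∉ A) [CharP F q] (v : E) : sC F A x v = 1 ∨ sC F A x v = q + 1 := by
  have hs := h.s_moment hx
  have hq2 := h.q2
  have hnn : ∀ v, 0 ≤ ((sC F A x v : ℤ) - 1) * ((sC F A x v : ℤ) - q - 1) := by
    intro v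
    have h1 := h.s_mod hc hx v q
    have h2 := h.s_pos hc hx v
    obtain ⟨t, ht⟩ := (Nat.modEq_iff_dvd' h2).1 h1.symm
    have : (sC F A x v : ℤ) = 1 + q * t := by omega
    rw [this]
    rcases Nat.eq_zero_or_pos t with h0 | h0
    · subst h0; simp
    · have : (1:ℤ) ≤ t := by exact_mod_cast h0
      have h3 : (1 + (q:ℤ) * t - 1) * (1 + q * t - q - 1) = q ^ 2 * (t * (t - 1)) := by ring
      rw [h3]
      have : 0 ≤ (t:ℤ) - 1 := by omega
      positivity
  have := (Finset.sum_eq_zero_iff_of_nonneg fun v _ => hnn v).1 hs v (Finset.mem_univ _)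
  rcases mul_eq_zero.1 this with h | h
  · left; omega
  · right; omega

lemma u_add (x v w : E) (j : F × F) : uC F A x v (w + ι2 F x v j) = uC F A x v w := by
  unfold uC
  refine Finset.card_bij (fun z _ => j + z) ?_ ?_ ?_
  · intro z hz; rw [Finset.mem_filter] at hz ⊢
    rw [← ι2_apply, map_add, ← add_assoc, ι2_apply x v z]; exact ⟨Finset.mem_univ _, hz.2⟩
  · intro z _ z' _ hh; simpa using hh
  · intro z hz; refine ⟨z - j, ?_, by simp⟩
    rw [Finset.mem_filter] at hz ⊢
    refine ⟨Finset.mem_univ _, ?_⟩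
    rw [← ι2_apply, map_sub, add_assoc, add_sub_cancel, ι2_apply]; exact hz.2

lemma u_smul (h : QH F q r A) (x v w : E) {c : F} (hc : c ≠ 0) : uC F A x v (c • w) = uC F A x v w := by
  unfold uC
  refine Finset.card_bij (fun z _ => c⁻¹ • z) ?_ ?_ ?_
  · intro z hz; rw [Finset.mem_filter, ← ι2_apply] at hz ⊢
    refine ⟨Finset.mem_univ _, ?_⟩
    rw [← h.smul_mem hc, smul_add, map_smul, smul_smul, mul_inv_cancel₀ hc, one_smul]
    exact hz.2
  · intro z _ z' _ hh; exact smul_right_injective _ (inv_ne_zero hc) hh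
  · intro z hz; refine ⟨c • z, ?_, by simp [smul_smul, hc]⟩
    rw [Finset.mem_filter, ← ι2_apply] at hz ⊢
    refine ⟨Finset.mem_univ _, ?_⟩
    rw [map_smul, ← smul_add, h.smul_mem hc]; exact hz.2

/-- the plane as a finset -/
noncomputable def DD (F : Type) [Field F] [Fintype F] {E : Type} [AddCommGroup E] [Module F E] (x v : E) :
   Finset E := Finset.univ.image (ι2 F x v)

lemma card_DD (h : QH F q r A) {x v : E} (hx : x ∉ A) (hv : ∀ c : F, v ≠ c • x) :
    ((DD F x v).card : ℤ) = q ^ 4 := by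
  unfold DD
  rw [Finset.card_image_of_injective _ (h.ι2_inj hx hv), Finset.card_univ, Fintype.card_prod, h.hF]
  push_cast; ring

lemma a_ge (h : QH F q r A) : (q:ℤ) ^ 2 ≤ (q:ℤ) ^ (r - 1) :=
  pow_le_pow_right₀ (by have := h.q2; omega) (by have := h.r3; omega)

lemma exists_w (h : QH F q r A) (hc : (fun v => if v ∈ A then (1:F) else 0) ∈ Cd F E) {x v : E}
    (hx : x ∉ A) (hv : ∀ c : F, v ≠ c • x) :
    ∃ w, uC F A x v w ≤ q ^ 3 := by
  by_contra hcon
  push Not at hcon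
  have hsum := (h.u_moment hx hv).1
  have hD : ∑ w ∈ DD F x v, (uC F A x v w : ℤ) = q ^ 4 * uC F A x v 0 := by
    have : ∀ w ∈ DD F x v, (uC F A x v w : ℤ) = uC F A x v 0 := by
      intro w hw
      obtain ⟨j, -, rfl⟩ := Finset.mem_image.1 hw
      have := u_add (A := A) x v 0 j
      rw [zero_add] at this; rw [this]
    rw [Finset.sum_congr rfl this, Finset.sum_const, nsmul_eq_mul, h.card_DD hx hv]
  have hDc : ((q:ℤ) ^ 3 + 1) * (Fintype.card E - q ^ 4) ≤ ∑ w ∈ (DD F x v)ᶜ, (uC F A x v w : ℤ) := by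
    have h1 : ((DD F x v)ᶜ.card : ℤ) = Fintype.card E - q ^ 4 := by
      rw [← h.card_DD hx hv, Finset.card_compl, Nat.cast_sub (Finset.card_le_univ _)]
    rw [← h1, mul_comm, ← nsmul_eq_mul]
    refine Finset.card_nsmul_le_sum _ _ _ fun w _ => ?_
    have := hcon w
    exact_mod_cast this
  rw [← Finset.sum_add_sum_compl (DD F x v), hD, h.md_eq hx] at hsum
  rw [h.cardE] at hDc
  have hs := h.s_pos hc hx v
  have hag := h.a_ge
  have hM := h.hM
  have hq2 : (2:ℤ) ≤ q := by exact_mod_cast h.q2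
  have hs' : (1:ℤ) ≤ sC F A x v := by exact_mod_cast hs
  generalize (sC F A x v : ℤ) = s at *
  generalize (q:ℤ) ^ (r - 1) = a at *
  generalize (A.card : ℤ) = M at *
  generalize (q:ℤ) = q at *
  have key : q ^ 4 * ((q ^ 3 + 1) * (a ^ 2 - 1)) ≤ q ^ 4 * (M - (1 + (q ^ 2 - 1) * s)) := by linarith
  have key2 := le_of_mul_le_mul_left key (by positivity)
  have h5 : 1 + (q^2 - 1) * s ≥ q ^ 2 := by
    have : 0 ≤ (q ^ 2 - 1) * (s - 1) := mul_nonneg (by nlinarith) (by linarith)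
    linarith
  have h6 : M ≤ q ^ 3 * a ^ 2 + a * q * (q - 1) := by
    have : 0 ≤ a * q * (q - 1) := by
      have : 0 ≤ q - 1 := by linarith
      have : 0 ≤ a := by nlinarith
      positivity
    rcases eps r with he | he <;> rw [he] at hM <;> linarith
  have h7 : a * (a - q ^ 2 + q) ≥ q ^ 2 * q := by
    apply mul_le_mul hag (by linarith) (by linarith) (by nlinarith)
  nlinarith

lemma u_ge_aux (h : QH F q r A) (hc : (fun v => if v ∈ A then (1:F) else 0) ∈ Cd F E) {x v : E}
    (hx : x ∉ A) (w : E) :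
    (q:ℤ) ^ 2 * sC F A x v ≤ (sC F A x v : ℤ) ^ 2 + uC F A x v w - 1 := by
  have hH := lemmaH hc v w x 0 (fun m => sC F A x (v + m • w)) (by
    intro m; simp [sC])
  simp only [zero_smul, add_zero] at hH
  have h1 : (∑ m : F, (sC F A x v : ℤ)) - ∑ m : F, (sC F A x (v + m • w) : ℤ) ≤
      (sC F A x v : ℤ) * (sC F A x v - 1) := by
    rw [← Finset.sum_sub_distrib]
    have hp := h.s_pos hc hx v
    calc _ ≤ ∑ m : F, ((sC F A x v - sC F A x (v + m • w) : ℕ) : ℤ) :=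
          Finset.sum_le_sum fun m _ => by omega
      _ ≤ _ := by
        have : ((sC F A x v - 1 : ℕ) : ℤ) = (sC F A x v : ℤ) - 1 := by omega
        rw [← this]; exact_mod_cast hH
  rw [Finset.sum_const, Finset.card_univ, h.hF, nsmul_eq_mul] at h1
  have h2 : ∑ m : F, (sC F A x (v + m • w) : ℤ) = sC F A x v + (uC F A x v w - sC F A x w) := by
    rw [u_eq_sum, ← Finset.add_sum_erase _ _ (Finset.mem_univ (0:F))]
    push_cast
    rw [← Finset.add_sum_erase _ (fun α => (sC F A x (w + α • v) : ℤ)) (Finset.mem_univ (0:F))]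
    simp only [zero_smul, add_zero, add_sub_cancel_left]
    congr 1
    refine Finset.sum_bij (fun m _ => m⁻¹) ?_ ?_ ?_ ?_
    · intro m hm; simpa using hm
    · intro a _ b _ hab; exact inv_injective hab
    · intro b hb; exact ⟨b⁻¹, by simpa using hb, by simp⟩
    · intro m hm
      have hm0 := Finset.ne_of_mem_erase hm
      rw [← h.s_smul x (w + m⁻¹ • v) hm0, smul_add, smul_smul, mul_inv_cancel₀ hm0, one_smul, add_comm]
  have h3 := h.s_pos hc hx w
  push_cast at h1
  rw [h2] at h1
  have : (1:ℤ) ≤ sC F A x w := by exact_mod_cast h3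
  nlinarith

lemma dichotomy (h : QH F q r A) (hc : (fun v => if v ∈ A then (1:F) else 0) ∈ Cd F E) (hq5 : 5 ≤ q)
    {x v : E} (hx : x ∉ A) (hs : q + 1 < sC F A x v) : q ^ 2 ≤ sC F A x v + q + 1 := by
  have hv : ∀ c : F, v ≠ c • x := by
    rintro c rfl
    rw [h.s_mult hx] at hs; omega
  obtain ⟨w, hw⟩ := h.exists_w hc hx hv
  have h1 := h.u_ge_aux hc (v := v) hx w
  by_contra hcon
  push Not at hcon
  have hs' : (q:ℤ) + 2 ≤ sC F A x v := by exact_mod_cast hs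
  have hcon' : (sC F A x v : ℤ) + q + 2 ≤ q ^ 2 := by exact_mod_cast hcon
  have hw' : (uC F A x v w : ℤ) ≤ q ^ 3 := by exact_mod_cast hw
  have hq5' : (5:ℤ) ≤ q := by exact_mod_cast hq5
  generalize (sC F A x v : ℤ) = s at *
  generalize (uC F A x v w : ℤ) = u at *
  generalize (q:ℤ) = q at *
  have h2 : 0 ≤ (s - (q + 2)) * (q ^ 2 - q - 2 - s) := mul_nonneg (by linarith) (by linarith)
  nlinarith
end QH
end

section
set_option linter.unusedSectionVars false
open scoped Classical
variable {F : Type} [Field F] [Fintype F]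
variable {E : Type} [AddCommGroup E] [Module F E] [Fintype E]

namespace QH
variable {q r : ℕ} {A : Finset E}

lemma inv_smul_mem (h : QH F q r A) {z : F} (hz : z ≠ 0) (x y : E) :
    x + z • y ∈ A ↔ y + z⁻¹ • x ∈ A := by
  rw [← h.smul_mem hz (y + z⁻¹ • x), smul_add, smul_smul, mul_inv_cancel₀ hz, one_smul, add_comm]

lemma good_a (h : QH F q r A) (hc : (fun v => if v ∈ A then (1:F) else 0) ∈ Cd F E) (hq5 : 5 ≤ q)
    {x v : E} (hx : x ∉ A) {w : E} (hw : w ∉ DD F x v) (α1 : F)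
    (hs1 : sC F A x (w + α1 • v) = q + 1) :
    ((q:ℤ) + 2) * (q ^ 2 - q - 1) ≤ uC F A x v w + (q ^ 2 + 1 - sC F A x v) := by
  obtain ⟨z1, hz1⟩ : ∃ z1 : F, w + α1 • v + z1 • x ∉ A := by
    by_contra hcon
    push Not at hcon
    have : sC F A x (w + α1 • v) = q ^ 2 := by
      unfold sC; rw [Finset.filter_true_of_mem (by simpa using hcon), Finset.card_univ, h.hF]
    rw [hs1] at this
    nlinarith
  set y := w + α1 • v + z1 • x with hy
  have hyD : y = w + ι2 F x v (α1, z1) := by rw [ι2_apply, hy, add_assoc]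
  have hyr : y ∉ LinearMap.range (ι2 F x v) := by
    rintro ⟨j, hj⟩
    apply hw
    refine Finset.mem_image.2 ⟨j - (α1, z1), Finset.mem_univ _, ?_⟩
    rw [map_sub, hj, hyD, add_sub_cancel_right]
  obtain ⟨L, hL, hLk⟩ := Submodule.exists_le_ker_of_notMem hyr
  have hLx : L x = 0 := hLk ⟨(0, 1), by simp [ι2_apply]⟩
  have hLv : L v = 0 := hLk ⟨(1, 0), by simp [ι2_apply]⟩
  have hc' : (fun v => if v ∈ A then (1:F) else 0) - (fun v => if L v = 0 then (1:F) else 0) ∈ Cd F E :=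
    Submodule.sub_mem _ hc (Submodule.subset_span ⟨L, rfl⟩)
  let b : F → ℕ := fun m => (Finset.univ.filter fun z : F => z ≠ 0 ∧ x + m • v + z • y ∈ A).card
  let a : F → ℕ := fun m => (if x + m • v ∈ A then 0 else 1) + b m
  have ha : ∀ m, a m = (Finset.univ.filter fun z : F =>
     ((fun v => if v ∈ A then (1:F) else 0) - (fun v => if L v = 0 then (1:F) else 0)) (x + m • v + z • y) ≠ 0).card := by
    intro m
    have : (Finset.univ.filter fun z : F =>
     ((fun v => if v ∈ A then (1:F) else 0) - (fun v => if L v = 0 then (1:F) else 0)) (x + m • v + z • y) ≠ 0)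
       = (if x + m • v ∈ A then ∅ else {0}) ∪ (Finset.univ.filter fun z : F => z ≠ 0 ∧ x + m • v + z • y ∈ A) := by
      ext z
      by_cases hz : z = 0
      · subst hz
        by_cases hm : x + m • v ∈ A <;> simp [hm, hLx, hLv]
      · by_cases hm : x + m • v ∈ A <;> simp [hm, hLx, hLv, hz, hL]
    rw [this, Finset.card_union_of_disjoint]
    · by_cases hm : x + m • v ∈ A <;> simp [a, b, hm]
    · by_cases hm : x + m • v ∈ A <;> simp [hm]
  have hH := lemmaH hc' x v y 0 a ha
  have ha0 : a 0 = q + 2 := by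
    have : b 0 = q + 1 := by
      rw [← hs1, ← s_add x (w + α1 • v) z1, ← hy]
      refine Finset.card_bij (fun z _ => z⁻¹) ?_ ?_ ?_
      · intro z hz
        simp only [Finset.mem_filter, Finset.mem_univ, true_and, zero_smul, add_zero] at hz ⊢
        exact (h.inv_smul_mem hz.1 x y).1 hz.2
      · intro a _ b _ hab; exact inv_injective hab
      · intro z hz
        simp only [Finset.mem_filter, Finset.mem_univ, true_and, zero_smul, add_zero] at hz ⊢
        have hz0 : z ≠ 0 := by rintro rfl; apply hz1; simpa using hz
        exact ⟨z⁻¹, ⟨inv_ne_zero hz0, by rw [h.inv_smul_mem (inv_ne_zero hz0), inv_inv]; exact hz⟩, inv_inv z⟩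
    simp [a, this, hx]; omega
  have hb : ∑ m, b m ≤ uC F A x v w := by
    have : uC F A x v w = uC F A x v y := by rw [hyD, u_add]
    rw [this, ← Finset.card_sigma]
    refine Finset.card_le_card_of_injOn (fun t => (t.2⁻¹ * t.1, t.2⁻¹)) ?_ ?_
    · rintro ⟨m, z⟩ hz
      simp at hz
      simp only [Finset.coe_filter, Finset.mem_univ, true_and, Set.mem_ofPred_eq]
      have := (h.inv_smul_mem hz.1 _ _).1 hz.2
      rw [smul_add, smul_smul] at this
      rwa [add_comm ((z⁻¹ * m) • v)]
    · rintro ⟨m, z⟩ hz ⟨m', z'⟩ hz' heq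
      simp at hz hz' heq
      obtain ⟨h1, h2⟩ := heq
      subst h2
      have := mul_left_cancel₀ (inv_ne_zero hz.1) h1
      subst this; rfl
  have hx1 : ∑ m : F, (if x + m • v ∈ A then 0 else 1) + sC F A x v ≤ q ^ 2 + 1 := by
    have h1 : (∑ m : F, (if x + m • v ∈ A then 0 else 1)) = (Finset.univ.filter fun m : F => ¬ x + m • v ∈ A).card := by
      rw [Finset.card_filter]
      exact Finset.sum_congr rfl fun m _ => by split_ifs <;> simp_all
    have h2 : sC F A x v ≤ (Finset.univ.filter fun m : F => x + m • v ∈ A).card + 1 := by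
      unfold sC
      rw [← Nat.sub_le_iff_le_add]
      refine Finset.pred_card_le_card_erase (a := (0:F)) |>.trans ?_
      refine Finset.card_le_card_of_injOn (fun z => z⁻¹) ?_ ?_
      · intro z hz
        simp only [Finset.coe_erase, Finset.coe_filter, Finset.mem_univ, true_and, Set.mem_sdiff, Set.mem_ofPred_eq, Set.mem_singleton_iff] at hz ⊢
        exact (h.inv_smul_mem hz.2 v x).1 hz.1
      · intro a _ b _ hab; exact inv_injective hab
    have h3 := Finset.card_filter_add_card_filter_not (s := (Finset.univ : Finset F)) (fun m => x + m • v ∈ A)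
    rw [Finset.card_univ, h.hF] at h3
    omega
  have hsa : ∑ m, a m + sC F A x v ≤ uC F A x v w + q ^ 2 + 1 := by
    have : ∑ m, a m = ∑ m : F, (if x + m • v ∈ A then 0 else 1) + ∑ m, b m := Finset.sum_add_distrib
    omega
  rw [ha0] at hH
  have h4 : q ^ 2 * (q + 2) ≤ ∑ m : F, (q + 2 - a m) + ∑ m, a m := by
    rw [← Finset.sum_add_distrib, ← h.hF, ← Finset.card_univ, ← smul_eq_mul]
    refine Finset.card_nsmul_le_sum _ _ _ fun m _ => by omega
  have h5 : q ^ 2 * (q + 2) + sC F A x v ≤ (q + 2) * (q + 1) + uC F A x v w + q ^ 2 + 1 := by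
    have : q + 2 - 1 = q + 1 := by omega
    rw [this] at hH; omega
  have h6 : (q:ℤ) ^ 2 * (q + 2) + sC F A x v ≤ (q + 2) * (q + 1) + uC F A x v w + q ^ 2 + 1 := by
    exact_mod_cast h5
  linarith

/-- good planes have either many or few points -/
lemma good (h : QH F q r A) (hc : (fun v => if v ∈ A then (1:F) else 0) ∈ Cd F E) (hq5 : 5 ≤ q)
    (p : ℕ) (hp : p.Prime) [CharP F p] (hpq : p ∣ q)
    {x v : E} (hx : x ∉ A) {w : E} (hw : w ∉ DD F x v)
    (hg : ∀ α : F, sC F A x (w + α • v) ≤ q + 1) :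
    ((q:ℤ) + 2) * (q ^ 2 - q - 1) ≤ uC F A x v w + (q ^ 2 + 1 - sC F A x v) ∨
    (uC F A x v w : ℤ) ≤ q ^ 3 - q ^ 2 := by
  by_cases hex : ∃ α : F, sC F A x (w + α • v) = q + 1
  · obtain ⟨α, hα⟩ := hex
    exact Or.inl (h.good_a hc hq5 hx hw α hα)
  · right
    push Not at hex
    have h1 : ∀ α : F, (sC F A x (w + α • v) : ℤ) ≤ q - 1 := by
      intro α
      have h2 := hg α
      have h3 := hex α
      have h4 : sC F A x (w + α • v) ≠ q := by
        intro h4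
        have h5 := h.s_mod hc hx (w + α • v) p
        rw [h4] at h5
        have h6 := (Nat.modEq_zero_iff_dvd.2 hpq).symm.trans h5
        have h7 := (Nat.modEq_zero_iff_dvd (n := p) (a := 1)).1 h6.symm
        exact hp.one_lt.ne' (Nat.dvd_one.1 h7)
      omega
    rw [u_eq_sum]
    push_cast
    refine (Finset.sum_le_sum fun α _ => h1 α).trans ?_
    rw [Finset.sum_const, Finset.card_univ, h.hF, nsmul_eq_mul]
    push_cast
    apply le_of_eq; ring

/-- the set of points with long secants -/
noncomputable def BB (F : Type) [Field F] [Fintype F] {E : Type} [AddCommGroup E] [Module F E] [Fintype E] (q : ℕ)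
   (A : Finset E) (x : E) : Finset E := Finset.univ.filter fun v => q + 1 < sC F A x v

lemma card_BB (h : QH F q r A) (hc : (fun v => if v ∈ A then (1:F) else 0) ∈ Cd F E) (hq5 : 5 ≤ q)
    {x : E} (hx : x ∉ A) : 4 * ((BB F q A x).card : ℤ) * ((q ^ 2 - q - 2) * (q ^ 2 - 2 * q - 2)) ≤
      q ^ 2 * Fintype.card E := by
  have hm := h.s_moment hx
  have hq5' : (5:ℤ) ≤ q := by exact_mod_cast hq5
  have h1 : ∀ v, (if v ∈ BB F q A x then (4:ℤ) * (((q:ℤ) ^ 2 - q - 2) * (q ^ 2 - 2 * q - 2)) else 0) - q ^ 2 ≤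
      4 * (((sC F A x v : ℤ) - 1) * ((sC F A x v : ℤ) - q - 1)) := by
    intro v
    split_ifs with hv
    · have hv' : q + 1 < sC F A x v := by simpa [BB] using hv
      have := h.dichotomy hc hq5 hx hv'
      have this' : (q:ℤ) ^ 2 ≤ sC F A x v + q + 1 := by exact_mod_cast this
      have h2 : ((q:ℤ) ^ 2 - q - 2) * (q ^ 2 - 2 * q - 2) ≤ ((sC F A x v : ℤ) - 1) * ((sC F A x v : ℤ) - q - 1) := by
        apply mul_le_mul <;> nlinarith
      nlinarith
    · nlinarith [sq_nonneg (2 * (sC F A x v : ℤ) - q - 2)]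
  have h2 := Finset.sum_le_sum fun v (_ : v ∈ Finset.univ) => h1 v
  rw [← Finset.mul_sum, hm, Finset.sum_sub_distrib, Finset.sum_ite_mem, Finset.univ_inter, Finset.sum_const, Finset.sum_const,
    Finset.card_univ] at h2
  simp only [nsmul_eq_mul] at h2
  linarith

/-- the good vectors -/
noncomputable def GG (F : Type) [Field F] [Fintype F] {E : Type} [AddCommGroup E] [Module F E] [Fintype E] (q : ℕ)
   (A : Finset E) (x v : E) : Finset E :=
   Finset.univ.filter fun w => w ∉ DD F x v ∧ ∀ α : F, sC F A x (w + α • v) ≤ q + 1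

lemma count_bad (h : QH F q r A) {x v : E} (hx : x ∉ A) (hv : ∀ c : F, v ≠ c • x) :
    (Fintype.card E : ℤ) ≤ q ^ 4 + (GG F q A x v).card + q ^ 2 * (BB F q A x).card := by
  have h1 : (Finset.univ : Finset E) ⊆ DD F x v ∪ GG F q A x v ∪
      (Finset.univ : Finset F).biUnion (fun α => (BB F q A x).image fun b => b - α • v) := by
    intro w _
    by_cases hD : w ∈ DD F x v
    · simp [hD]
    by_cases hG : w ∈ GG F q A x v
    · simp [hG]
    simp only [GG, Finset.mem_filter, Finset.mem_univ, true_and, hD, not_false_eq_true, not_forall, not_le] at hG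
    obtain ⟨α, hα⟩ := hG
    refine Finset.mem_union_right _ ?_
    refine Finset.mem_biUnion.2 ⟨α, Finset.mem_univ _, Finset.mem_image.2 ⟨w + α • v, by simpa [BB] using hα, by simp⟩⟩
  have h2 := Finset.card_le_card h1
  have h3 : ((Finset.univ : Finset F).biUnion (fun α => (BB F q A x).image fun b => b - α • v)).card ≤
     q ^ 2 * (BB F q A x).card := by
    rw [← h.hF, ← Finset.card_univ]
    exact Finset.card_biUnion_le_card_mul _ _ _ fun α _ => Finset.card_image_le
  have h4 := Finset.card_union_le (DD F x v ∪ GG F q A x v) ((Finset.univ : Finset F).biUnion (fun α => (BB F q A x).image fun b => b - α • v))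
  have h5 := Finset.card_union_le (DD F x v) (GG F q A x v)
  have h6 := h.card_DD hx hv
  rw [Finset.card_univ] at h2
  have h7 : Fintype.card E ≤ (DD F x v).card + (GG F q A x v).card + q ^ 2 * (BB F q A x).card := by omega
  rw [← h6]; exact_mod_cast h7

set_option maxHeartbeats 1000000 in
lemma s_long_big (h : QH F q r A) (hc : (fun v => if v ∈ A then (1:F) else 0) ∈ Cd F E) (hq25 : 25 ≤ q)
    (hr : 4 ≤ r) (p : ℕ) (hp : p.Prime) [CharP F p] (hpq : p ∣ q)
    {x v : E} (hx : x ∉ A) : sC F A x v ≤ q + 1 := by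
  by_contra hcon
  push Not at hcon
  have hv : ∀ c : F, v ≠ c • x := by
    rintro c rfl
    rw [h.s_mult hx] at hcon; omega
  have hd := h.dichotomy hc (by omega) hx hcon
  have h1 := (h.u_moment hx hv).2
  have h2 : ((GG F q A x v).card : ℤ) * (q ^ 2 - 4 * q - 4) ^ 2 ≤ ∑ w : E, ((uC F A x v w : ℤ) - q ^ 3) ^ 2 := by
    rw [← nsmul_eq_mul]
    refine (Finset.card_nsmul_le_sum (GG F q A x v) (fun w => ((uC F A x v w : ℤ) - q ^ 3) ^ 2) _ ?_).trans
      (Finset.sum_le_sum_of_subset_of_nonneg (Finset.subset_univ _) fun _ _ _ => sq_nonneg _)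
    intro w hw
    have hw' : w ∉ DD F x v ∧ ∀ α : F, sC F A x (w + α • v) ≤ q + 1 := by simpa [GG] using hw
    have hq : (25:ℤ) ≤ q := by exact_mod_cast hq25
    have hd' : (q:ℤ) ^ 2 ≤ sC F A x v + q + 1 := by exact_mod_cast hd
    have h0 : (0:ℤ) ≤ q ^ 2 - 4 * q - 4 := by nlinarith
    rcases h.good hc (by omega) p hp hpq hx hw'.1 hw'.2 with hg | hg
    · exact pow_le_pow_left₀ h0 (by linarith) 2
    · have : ((uC F A x v w : ℤ) - q ^ 3) ^ 2 = (q ^ 3 - (uC F A x v w : ℤ)) ^ 2 := by ring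
      rw [this]
      exact pow_le_pow_left₀ h0 (by linarith) 2
  rw [h1] at h2
  have h3 := h.count_bad hx hv
  have h4 := h.card_BB hc (by omega) hx
  have hs : (sC F A x v : ℤ) ≤ q ^ 2 := by exact_mod_cast h.s_le x v
  have hs0 : (0:ℤ) ≤ sC F A x v := by positivity
  rw [h.cardE] at h3 h4
  have hag : (q:ℤ) ^ 3 ≤ (q:ℤ) ^ (r - 1) := pow_le_pow_right₀ (by omega) (by omega)
  have hq : (25:ℤ) ≤ q := by exact_mod_cast hq25
  have hG0 : (0:ℤ) ≤ (GG F q A x v).card := by positivity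
  have hB0 : (0:ℤ) ≤ (BB F q A x).card := by positivity
  generalize ((GG F q A x v).card : ℤ) = G at *
  generalize ((BB F q A x).card : ℤ) = B at *
  generalize (sC F A x v : ℤ) = s at *
  generalize (q:ℤ) ^ (r - 1) = a at *
  generalize (q:ℤ) = q at *
  have ha0 : 0 < a := lt_of_lt_of_le (by positivity) hag
  have h5 : q ^ 4 * a * (q ^ 2 * (q - 1) * a + (-1) ^ r * q * (q - 2) * (q ^ 3 - (1 + (q ^ 2 - 1) * s))) ≤
      2 * q ^ 3 * (q ^ 4 * a ^ 2) := by
    have e1 : q ^ 3 - (1 + (q ^ 2 - 1) * s) ≤ q ^ 4 := by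
      have : 0 ≤ (q ^ 2 - 1) * s := mul_nonneg (by nlinarith) hs0
      have : q ^ 3 ≤ q ^ 4 := pow_le_pow_right₀ (by linarith) (by norm_num)
      linarith
    have e2 : -q ^ 4 ≤ q ^ 3 - (1 + (q ^ 2 - 1) * s) := by
      have : (q ^ 2 - 1) * s ≤ (q ^ 2 - 1) * q ^ 2 := mul_le_mul_of_nonneg_left hs (by nlinarith)
      have : 0 < q ^ 3 := by positivity
      nlinarith
    have e3 : (-1) ^ r * (q ^ 3 - (1 + (q ^ 2 - 1) * s)) ≤ q ^ 4 := by
      rcases eps r with he | he <;> rw [he] <;> linarith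
    have e4 : q * (q - 2) * ((-1) ^ r * (q ^ 3 - (1 + (q ^ 2 - 1) * s))) ≤ q * (q - 2) * q ^ 4 :=
      mul_le_mul_of_nonneg_left e3 (by nlinarith)
    have e5 : q * (q - 2) * q ^ 4 ≤ q ^ 3 * a := by
      have : q ^ 3 * q ^ 3 ≤ q ^ 3 * a := mul_le_mul_of_nonneg_left hag (by positivity)
      have : 0 < q ^ 5 := by positivity
      nlinarith
    have e6 : q ^ 2 * (q - 1) * a + (-1) ^ r * q * (q - 2) * (q ^ 3 - (1 + (q ^ 2 - 1) * s)) ≤ 2 * q ^ 3 * a := by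
      have : 0 < q ^ 2 * a := by positivity
      linarith
    calc _ ≤ q ^ 4 * a * (2 * q ^ 3 * a) := mul_le_mul_of_nonneg_left e6 (by positivity)
      _ = _ := by ring
  have h6 : 16 * q ^ 3 ≤ (q ^ 2 - 4 * q - 4) ^ 2 := by
    have : (q ^ 2 - 4 * q - 4) ^ 2 - 16 * q ^ 3 = q ^ 3 * (q - 24) + 8 * q ^ 2 + 32 * q + 16 := by ring
    have : 0 ≤ q ^ 3 * (q - 24) := mul_nonneg (by positivity) (by linarith)
    nlinarith
  have hX : 8 * q ^ 4 ≤ q ^ 4 * a ^ 2 := by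
    have : 8 ≤ a ^ 2 := by
      have : q ^ 3 ≥ 25 := by nlinarith [sq_nonneg q]
      nlinarith
    nlinarith [show 0 < q ^ 4 by positivity]
  have hX0 : 0 < q ^ 4 * a ^ 2 := by positivity
  generalize q ^ 4 * a ^ 2 = X at *
  have h7 : 8 * G ≤ X := by
    have e1 := mul_le_mul_of_nonneg_left h6 hG0
    have e2 := h2.trans h5
    have e3 : (2 * q ^ 3) * (8 * G) = G * (16 * q ^ 3) := by ring
    have : (2 * q ^ 3) * (8 * G) ≤ (2 * q ^ 3) * X := by
      rw [e3]
      exact e1.trans e2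
    exact le_of_mul_le_mul_left this (by positivity)
  have h8 : 3 * X ≤ 4 * q ^ 2 * B := by linarith
  have hK : 0 < (q ^ 2 - q - 2) * (q ^ 2 - 2 * q - 2) := mul_pos (by nlinarith) (by nlinarith)
  have h9 : 3 * X * ((q ^ 2 - q - 2) * (q ^ 2 - 2 * q - 2)) ≤ q ^ 4 * X := by
    calc _ ≤ 4 * q ^ 2 * B * ((q ^ 2 - q - 2) * (q ^ 2 - 2 * q - 2)) := mul_le_mul_of_nonneg_right h8 hK.le
      _ = q ^ 2 * (4 * B * ((q ^ 2 - q - 2) * (q ^ 2 - 2 * q - 2))) := by ring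
      _ ≤ q ^ 2 * (q ^ 2 * X) := mul_le_mul_of_nonneg_left h4 (by positivity)
      _ = _ := by ring
  have h10 : 3 * ((q ^ 2 - q - 2) * (q ^ 2 - 2 * q - 2)) ≤ q ^ 4 := by
    apply le_of_mul_le_mul_right _ hX0
    linarith
  have h11 : 3 * ((q ^ 2 - q - 2) * (q ^ 2 - 2 * q - 2)) - q ^ 4 = q ^ 2 * (2 * q ^ 2 - 9 * q - 6) + 18 * q + 12 := by ring
  have : 0 ≤ q ^ 2 * (2 * q ^ 2 - 9 * q - 6) := mul_nonneg (by positivity) (by nlinarith)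
  linarith

lemma u_hyp (h : QH F q 3 A) {x v w : E} (hx : x ∉ A) (hv : ∀ c : F, v ≠ c • x) (hw : w ∉ DD F x v) :
    (uC F A x v w : ℤ) = q ^ 3 + 1 - sC F A x v ∨ (uC F A x v w : ℤ) = q ^ 3 + q ^ 2 + 1 - sC F A x v := by
  let ι3 : F × (F × F) →ₗ[F] E := (LinearMap.toSpanSingleton F E w).coprod (ι2 F x v)
  have ι3a : ∀ j, ι3 j = j.1 • w + ι2 F x v j.2 := fun j => by simp [ι3]
  have hinj : Function.Injective ι3 := by
    rw [← LinearMap.ker_eq_bot, LinearMap.ker_eq_bot']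
    rintro ⟨a, b⟩ hab
    rw [ι3a] at hab
    simp only at hab
    have ha : a = 0 := by
      by_contra ha
      apply hw
      refine Finset.mem_image.2 ⟨-(a⁻¹ • b), Finset.mem_univ _, ?_⟩
      have : a⁻¹ • (a • w + ι2 F x v b) = 0 := by rw [hab, smul_zero]
      rw [smul_add, smul_smul, inv_mul_cancel₀ ha, one_smul] at this
      rw [map_neg, map_smul]
      exact (eq_neg_of_add_eq_zero_left this).symm
    subst ha
    rw [zero_smul, zero_add] at hab
    have := h.ι2_inj hx hv (hab.trans (map_zero _).symm)
    simp [this]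
  have hfr : finrank F (LinearMap.range ι3) = 3 := by
    rw [LinearMap.finrank_range_of_inj hinj]; simp
  have hlt : LinearMap.range ι3 < ⊤ := by
    refine lt_top_iff_ne_top.2 fun ht => ?_
    rw [ht, finrank_top, h.hE] at hfr
    omega
  obtain ⟨L, hL0, hL⟩ := Submodule.exists_le_ker_of_lt_top _ hlt
  have hker : LinearMap.range ι3 = LinearMap.ker L := by
    refine Submodule.eq_of_le_of_finrank_eq hL ?_
    have := Dual.finrank_ker_add_one_of_ne_zero hL0
    rw [h.hE] at this
    omega
  have hn : nL A L = (Finset.univ.filter fun j => ι3 j ∈ A).card := by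
    symm
    refine Finset.card_bij (fun j _ => ι3 j) ?_ (fun a _ b _ hab => hinj hab) ?_
    · intro j hj
      have : L (ι3 j) = 0 := hL ⟨j, rfl⟩
      simp at hj ⊢; exact ⟨hj, this⟩
    · intro b hb
      simp at hb
      have : b ∈ LinearMap.range ι3 := by rw [hker]; exact hb.2
      obtain ⟨j, rfl⟩ := this
      exact ⟨j, by simpa using hb.1, rfl⟩
  have hn2 : (nL A L : ℤ) = 1 + ((q:ℤ) ^ 2 - 1) * sC F A x v + ((q:ℤ) ^ 2 - 1) * uC F A x v w := by
    have : nL A L = ∑ γ : F, uC F A x v (γ • w) := by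
      rw [hn]
      unfold uC
      rw [Finset.card_filter, Fintype.sum_prod_type]
      refine Finset.sum_congr rfl fun α _ => ?_
      rw [Finset.card_filter]
      refine Finset.sum_congr rfl fun β _ => ?_
      rw [ι3a, ι2_apply]
    rw [this, ← Finset.add_sum_erase _ _ (Finset.mem_univ (0:F))]
    rw [Finset.sum_congr rfl fun c hc => by rw [h.u_smul x v w (Finset.ne_of_mem_erase hc)]]
    rw [Finset.sum_const, Finset.card_erase_of_mem (Finset.mem_univ _), Finset.card_univ, h.hF, zero_smul]
    push_cast
    rw [h.md_eq hx]
    have hq : 1 ≤ q ^ 2 := Nat.one_le_pow _ _ (by have := h.q2; omega)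
    simp [hq]
  have h2 := h.hn L hL0
  have hq2 : (2:ℤ) ≤ q := by exact_mod_cast h.q2
  have hne : (q:ℤ) ^ 2 - 1 ≠ 0 := by nlinarith
  rw [hn2] at h2
  norm_num at h2
  rcases h2 with h2 | h2
  · left; apply mul_left_cancel₀ hne; linear_combination h2
  · right; apply mul_left_cancel₀ hne; linear_combination h2

lemma s_long_3 (h : QH F q 3 A) (hc : (fun v => if v ∈ A then (1:F) else 0) ∈ Cd F E) (hq8 : 8 ≤ q)
    (p : ℕ) (hp : p.Prime) [CharP F p] (hpq : p ∣ q)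
    {x v : E} (hx : x ∉ A) : sC F A x v ≤ q + 1 := by
  by_contra hcon
  push Not at hcon
  have hv : ∀ c : F, v ≠ c • x := by
    rintro c rfl
    rw [h.s_mult hx] at hcon; omega
  have hd := h.dichotomy hc (by omega) hx hcon
  have hq : (8:ℤ) ≤ q := by exact_mod_cast hq8
  have hd' : (q:ℤ) ^ 2 ≤ sC F A x v + q + 1 := by exact_mod_cast hd
  have hs : (sC F A x v : ℤ) ≤ q ^ 2 := by exact_mod_cast h.s_le x v
  have h2 : GG F q A x v = ∅ := by
    rw [Finset.eq_empty_iff_forall_notMem]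
    intro w hw
    have hw' : w ∉ DD F x v ∧ ∀ α : F, sC F A x (w + α • v) ≤ q + 1 := by simpa [GG] using hw
    rcases h.good hc (by omega) p hp hpq hx hw'.1 hw'.2 with hg | hg <;>
    rcases h.u_hyp hx hv hw'.1 with hu | hu <;> nlinarith
  have h3 := h.count_bad hx hv
  have h4 := h.card_BB hc (by omega) hx
  rw [h2] at h3
  rw [h.cardE] at h3 h4
  norm_num at h3 h4
  generalize ((BB F q A x).card : ℤ) = B at *
  generalize (q:ℤ) = q at *
  have hK : 0 < (q ^ 2 - q - 2) * (q ^ 2 - 2 * q - 2) := mul_pos (by nlinarith) (by nlinarith)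
  have h9 : 4 * (q ^ 4 * (q ^ 2) ^ 2 - q ^ 4) * ((q ^ 2 - q - 2) * (q ^ 2 - 2 * q - 2)) ≤ q ^ 4 * (q ^ 4 * (q ^ 2) ^ 2) := by
    calc _ ≤ 4 * (q ^ 2 * B) * ((q ^ 2 - q - 2) * (q ^ 2 - 2 * q - 2)) := mul_le_mul_of_nonneg_right (by linarith) hK.le
      _ = q ^ 2 * (4 * B * ((q ^ 2 - q - 2) * (q ^ 2 - 2 * q - 2))) := by ring
      _ ≤ q ^ 2 * (q ^ 2 * (q ^ 4 * (q ^ 2) ^ 2)) := mul_le_mul_of_nonneg_left h4 (by positivity)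
      _ = _ := by ring
  have h10 : 4 * (q ^ 4 - 1) * ((q ^ 2 - q - 2) * (q ^ 2 - 2 * q - 2)) ≤ q ^ 4 * q ^ 4 := by
    apply le_of_mul_le_mul_left _ (show 0 < q ^ 4 by positivity)
    linarith
  have hK2 : q ^ 4 ≤ 2 * ((q ^ 2 - q - 2) * (q ^ 2 - 2 * q - 2)) := by
    have : 2 * ((q ^ 2 - q - 2) * (q ^ 2 - 2 * q - 2)) - q ^ 4 = q ^ 2 * (q * (q - 6) - 4) + 12 * q + 8 := by ring
    have : 0 ≤ q ^ 2 * (q * (q - 6) - 4) := mul_nonneg (by positivity) (by nlinarith)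
    linarith
  have hq4 : 8 ≤ q ^ 4 := by nlinarith [sq_nonneg (q ^ 2), sq_nonneg q]
  have : (4 * (q ^ 4 - 1)) * q ^ 4 ≤ (4 * (q ^ 4 - 1)) * (2 * ((q ^ 2 - q - 2) * (q ^ 2 - 2 * q - 2))) :=
    mul_le_mul_of_nonneg_left hK2 (by linarith)
  nlinarith

lemma types_of_le (h : QH F q r A) (hc : (fun v => if v ∈ A then (1:F) else 0) ∈ Cd F E) {x : E}
    (hx : x ∉ A) (hle : ∀ v, sC F A x v ≤ q + 1) (v : E) : sC F A x v = 1 ∨ sC F A x v = q + 1 := by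
  have hs := h.s_moment hx
  have hnn : ∀ v, ((sC F A x v : ℤ) - 1) * ((sC F A x v : ℤ) - q - 1) ≤ 0 := by
    intro v
    have h1 := hle v
    have h2 := h.s_pos hc hx v
    exact mul_nonpos_of_nonneg_of_nonpos (by omega) (by omega)
  have := (Finset.sum_eq_zero_iff_of_nonpos fun v _ => hnn v).1 hs v (Finset.mem_univ _)
  rcases mul_eq_zero.1 this with h | h
  · left; omega
  · right; omega

theorem line_types (h : QH F q r A) (hc : (fun v => if v ∈ A then (1:F) else 0) ∈ Cd F E)
    (p e : ℕ) (hp : p.Prime) [CharP F p] (hq : q = p ^ e)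
    (hcase : (r = 3 ∧ 4 < q) ∨ (4 ≤ r ∧ q = p ∧ 4 < p) ∨ (4 ≤ r ∧ q = p ^ 2 ∧ 3 < p)) {x : E}
    (hx : x ∉ A) (v : E) : sC F A x v = 1 ∨ sC F A x v = q + 1 := by
  by_cases hqp : q = p
  · subst hqp
    exact h.types_prime hc hx v
  have hp2 := hp.two_le
  have hpq : p ∣ q := by
    rw [hq]; apply dvd_pow_self
    rintro rfl
    have := h.q2
    simp at hq; omega
  refine h.types_of_le hc hx (fun v => ?_) v
  rcases hcase with ⟨rfl, h4⟩ | ⟨_, h4, _⟩ | ⟨hr, h4, h3⟩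
  · refine h.s_long_3 hc ?_ p hp hpq hx
    have he : 2 ≤ e := by
      by_contra hcon
      interval_cases e
      · simp at hq; omega
      · simp at hq; exact hqp hq
    by_contra hlt
    have hp3 : p < 3 := by
      by_contra h3
      have : 3 ^ 2 ≤ p ^ e := (Nat.pow_le_pow_left (by omega) 2).trans (Nat.pow_le_pow_right (by omega) he)
      omega
    have : p = 2 := by omega
    subst this
    have he3 : e < 3 := by
      by_contra h3
      have : 2 ^ 3 ≤ 2 ^ e := Nat.pow_le_pow_right (by omega) (by omega)
      omega
    have : e = 2 := by omega
    subst this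
    omega
  · exact absurd h4 hqp
  · refine h.s_long_big hc ?_ hr p hp hpq hx
    have : p ≠ 4 := by rintro rfl; revert hp; decide
    have : 5 ≤ p := by omega
    nlinarith
end QH
end

section
open scoped Classical
open Polynomial
set_option linter.unusedSectionVars false
variable {F : Type} [Field F] [Fintype F]
variable {E : Type} [AddCommGroup E] [Module F E] [Fintype E]

lemma S_repr [FiniteDimensional F E] {f : E → F} (hc : f ∈ Cd F E) (x : E) :
    ∃ (μ : Dual F E → F) (m : Dual F E → Dual F E), ∀ k, 1 ≤ k → k < Fintype.card F - 1 →
      ∀ v, ∑ z : F, f (v + z • x) * z ^ k = ∑ᶠ L, μ L * (m L v) ^ k := by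
  have : Finite (Dual F E) := Module.finite_of_finite F
  have := Fintype.ofFinite (Dual F E)
  unfold Cd at hc
  rw [Submodule.mem_span_range_iff_exists_fun] at hc
  obtain ⟨μ, hμ⟩ := hc
  refine ⟨μ, fun L => -(L x)⁻¹ • L, fun k h1 h2 v => ?_⟩
  rw [finsum_eq_sum_of_fintype]
  have e : ∀ z : F, f (v + z • x) * z ^ k =
      ∑ L, μ L * ((if L (v + z • x) = 0 then (1:F) else 0) * z ^ k) := by
    intro z
    rw [← hμ]
    simp [Finset.sum_apply, Finset.sum_mul]
  simp_rw [e]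
  rw [Finset.sum_comm]
  refine Finset.sum_congr rfl fun L _ => ?_
  rw [← Finset.mul_sum]
  congr 1
  by_cases hL : L x = 0
  · simp only [map_add, map_smul, hL, smul_zero, add_zero, ← Finset.mul_sum,
      FiniteField.sum_pow_lt_card_sub_one F k h2]
    rw [mul_zero, _root_.inv_zero, neg_zero, zero_smul, LinearMap.zero_apply, zero_pow (by omega)]
  · rw [Finset.sum_eq_single (-(L x)⁻¹ * L v)]
    · rw [if_pos]
      · simp
      · simp only [map_add, map_smul, smul_eq_mul]; field_simp; ring
    · intro z _ hz
      rw [if_neg, zero_mul]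
      intro h
      apply hz
      simp only [map_add, map_smul, smul_eq_mul] at h
      field_simp
      linear_combination h
    · simp

/-- Schwartz-Zippel for homogeneous sums of powers -/
lemma SZ {ι : Type} [Fintype ι] (μ : ι → F) (m : ι → Dual F E) (k : ℕ) (v0 : E)
    (h0 : ∑ i, μ i * (m i v0) ^ k ≠ 0) :
    Fintype.card F * (Finset.univ.filter fun v : E => ∑ i, μ i * (m i v) ^ k = 0).card ≤
      Fintype.card E * k := by
  have e1 : Fintype.card F * (Finset.univ.filter fun v : E => ∑ i, μ i * (m i v) ^ k = 0).card
      = ∑ u : E, (Finset.univ.filter fun t : F => ∑ i, μ i * (m i (u + t • v0)) ^ k = 0).card := by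
    simp_rw [Finset.card_filter]
    rw [Finset.sum_comm]
    rw [← smul_eq_mul, ← Finset.card_univ, ← Finset.sum_const]
    refine Finset.sum_congr rfl fun t _ => ?_
    exact (Equiv.sum_comp (Equiv.addRight (t • v0))
      (fun v => if ∑ i, μ i * (m i v) ^ k = 0 then 1 else 0)).symm
  rw [e1, ← smul_eq_mul, ← Finset.card_univ]
  refine (Finset.sum_le_card_nsmul _ _ k fun u _ => ?_)
  let P : F[X] := ∑ i, C (μ i) * (C (m i v0) * X + C (m i u)) ^ k
  have hc : P.coeff k = ∑ i, μ i * (m i v0) ^ k := by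
    simp only [P, finsetSum_coeff, coeff_C_mul]
    refine Finset.sum_congr rfl fun i _ => ?_
    congr 1
    have := coeff_pow_of_natDegree_le (p := C (m i v0) * X + C (m i u)) (n := 1) (m := k)
      (by compute_degree)
    rw [mul_one] at this
    rw [this]; simp
  have hP : P ≠ 0 := by
    intro h; rw [h] at hc; simp at hc; exact h0 hc.symm
  have hd : P.natDegree ≤ k := by
    refine natDegree_sum_le_of_forall_le _ _ fun i _ => ?_
    refine (natDegree_C_mul_le _ _).trans (natDegree_pow_le.trans ?_)
    have : (C (m i v0) * X + C (m i u) : F[X]).natDegree ≤ 1 := by compute_degree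
    nlinarith
  have : (Finset.univ.filter fun t : F => ∑ i, μ i * (m i (u + t • v0)) ^ k = 0) ⊆ P.roots.toFinset := by
    intro t ht
    simp only [Finset.mem_filter, Finset.mem_univ, true_and] at ht
    rw [Multiset.mem_toFinset, mem_roots hP, IsRoot.def, ← ht]
    simp only [P, eval_finsetSum]
    refine Finset.sum_congr rfl fun i _ => ?_
    simp; left; ring
  calc _ ≤ P.roots.toFinset.card := Finset.card_le_card this
    _ ≤ Multiset.card P.roots := Multiset.toFinset_card_le _
    _ ≤ P.natDegree := card_roots' P
    _ ≤ k := hd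

/-- polynomial moments -/
lemma sum_eval_of_moments (Z : Finset F) (n : ℕ) (h0 : (Z.card : F) = 1)
    (h : ∀ k, 1 ≤ k → k ≤ n → ∑ z ∈ Z, z ^ k = 0) (φ : F[X]) (hφ : φ.natDegree ≤ n) :
    ∑ z ∈ Z, φ.eval z = φ.eval 0 := by
  simp_rw [eval_eq_sum_range' (Nat.lt_succ_of_le hφ)]
  rw [Finset.sum_comm]
  refine Finset.sum_congr rfl fun k hk => ?_
  rw [← Finset.mul_sum]
  congr 1
  rcases Nat.eq_zero_or_pos k with rfl | hk0
  · simp [h0]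
  · rw [h k hk0 (by simpa [Nat.lt_succ_iff] using hk), zero_pow hk0.ne']

/-- the rigid structure of a `(q+1)`-set -/
lemma rigid (q p e : ℕ) (hp : p.Prime) [CharP F p] (hq : q = p ^ e) (hq2 : 2 ≤ q)
    (hF : Fintype.card F = q ^ 2) (Z : Finset F) (hZ : Z.card = q + 1)
    (hm : ∀ φ : F[X], φ.natDegree ≤ q → ∑ z ∈ Z, φ.eval z = φ.eval 0) (z1 : F) (hz1 : z1 ∉ Z) (β : F)
    (hm' : ∀ φ : F[X], φ.natDegree ≤ q → ∑ z ∈ Z, φ.eval (z - z1)⁻¹ = φ.eval β) :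
    ∃ c : F, c ≠ 0 ∧ c ^ q = c ∧ ∀ z, z ∈ Z ↔ z ^ (q + 1) = c := by
  have : Fact p.Prime := ⟨hp⟩
  have hn1 : ∀ z ∈ Z, z - z1 ≠ 0 := fun z hz h => hz1 (by rw [sub_eq_zero] at h; rwa [← h])
  have hdeg : ∀ (g : F → F) (i : F), i ∈ Z → (∏ j ∈ Z.erase i, (X - C (g j))).natDegree ≤ q := by
    intro g i hi
    rw [natDegree_prod_of_monic _ _ fun j _ => monic_X_sub_C _]
    simp [Finset.card_erase_of_mem hi, hZ]
  have k1 : ∀ i ∈ Z, ∏ j ∈ Z.erase i, (j - i) = ∏ j ∈ Z.erase i, j := by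
    intro i hi
    have := hm _ (hdeg id i hi)
    rw [Finset.sum_eq_single_of_mem i hi] at this
    · simp only [eval_prod, eval_sub, eval_X, eval_C, id] at this
      have h2 : ∀ g : F → F, ∏ j ∈ Z.erase i, -(g j) = (-1) ^ q * ∏ j ∈ Z.erase i, g j := by
        intro g
        rw [Finset.prod_neg, Finset.card_erase_of_mem hi, hZ]; simp
      have e1 : ∏ j ∈ Z.erase i, (i - j) = ∏ j ∈ Z.erase i, -(j - i) := by simp
      have e2 : ∏ j ∈ Z.erase i, (0 - j) = ∏ j ∈ Z.erase i, -j := by simp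
      rw [e1, e2, h2, h2] at this
      exact mul_left_cancel₀ (by simp) this
    · intro b hb hbi
      rw [eval_prod]
      exact Finset.prod_eq_zero (Finset.mem_erase.2 ⟨hbi, hb⟩) (by simp)
  have k0 : ∀ z ∈ Z, z ≠ 0 := by
    intro z hz hz0
    obtain ⟨i, hi, hiz⟩ := Finset.exists_mem_ne (by omega : 1 < Z.card) z
    have := k1 i hi
    rw [Finset.prod_eq_zero (f := fun j => j) (i := z) (Finset.mem_erase.2 ⟨hiz.symm, hz⟩) hz0, Finset.prod_eq_zero_iff] at this
    obtain ⟨j, hj, hj0⟩ := this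
    exact (Finset.mem_erase.1 hj).1 (sub_eq_zero.1 hj0)
  have k2 : ∀ i ∈ Z, ∏ j ∈ Z.erase i, (j - i) = (i - z1) ^ q * ∏ j ∈ Z.erase i, (β * (j - z1) - 1) := by
    intro i hi
    have := hm' _ (hdeg (fun j => (j - z1)⁻¹) i hi)
    rw [Finset.sum_eq_single_of_mem i hi] at this
    · simp only [eval_prod, eval_sub, eval_X, eval_C] at this
      have hcard : (i - z1) ^ q = ∏ j ∈ Z.erase i, (i - z1) := by
        rw [Finset.prod_const, Finset.card_erase_of_mem hi, hZ]; simp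
      have e1 : ∏ j ∈ Z.erase i, (j - i) =
          (∏ j ∈ Z.erase i, ((i - z1)⁻¹ - (j - z1)⁻¹)) * ((i - z1) ^ q * ∏ j ∈ Z.erase i, (j - z1)) := by
        rw [hcard, ← Finset.prod_mul_distrib, ← Finset.prod_mul_distrib]
        refine Finset.prod_congr rfl fun j hj => ?_
        have := hn1 i hi
        have := hn1 j (Finset.mem_of_mem_erase hj)
        field_simp
        ring
      have e2 : ∏ j ∈ Z.erase i, (β * (j - z1) - 1) =
          (∏ j ∈ Z.erase i, (β - (j - z1)⁻¹)) * ∏ j ∈ Z.erase i, (j - z1) := by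
        rw [← Finset.prod_mul_distrib]
        refine Finset.prod_congr rfl fun j hj => ?_
        have := hn1 j (Finset.mem_of_mem_erase hj)
        field_simp
      rw [e1, e2, this]; ring
    · intro b hb hbi
      rw [eval_prod]
      exact Finset.prod_eq_zero (Finset.mem_erase.2 ⟨hbi, hb⟩) (by simp)
  have k3 : ∀ i ∈ Z, (β * (i - z1) - 1) * ∏ j ∈ Z, j = i * (i - z1) ^ q * ∏ j ∈ Z, (β * (j - z1) - 1) := by
    intro i hi
    rw [← Finset.mul_prod_erase Z _ hi, ← Finset.mul_prod_erase Z (fun j => β * (j - z1) - 1) hi,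
      ← k1 i hi, k2 i hi]
    ring
  have hP0 : ∏ j ∈ Z, j ≠ 0 := Finset.prod_ne_zero_iff.2 k0
  have hP' : ∏ j ∈ Z, (β * (j - z1) - 1) ≠ 0 := by
    rw [Finset.prod_ne_zero_iff]
    intro z hz hz0
    obtain ⟨i, hi, hiz⟩ := Finset.exists_mem_ne (by omega : 1 < Z.card) z
    have := (k1 i hi).symm.trans (k2 i hi)
    rw [Finset.prod_eq_zero (f := fun j => β * (j - z1) - 1) (i := z) (Finset.mem_erase.2 ⟨hiz.symm, hz⟩) hz0, mul_zero,
      Finset.prod_eq_zero_iff] at this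
    obtain ⟨j, hj, hj0⟩ := this
    exact k0 j (Finset.mem_of_mem_erase hj) hj0
  generalize ∏ j ∈ Z, (β * (j - z1) - 1) = P' at *
  generalize ∏ j ∈ Z, j = P at *
  have k4 : ∃ a c : F, ∀ z ∈ Z, z ^ (q + 1) = a * z + c := by
    refine ⟨z1 ^ q + β * P / P', (-β * z1 - 1) * P / P', fun z hz => ?_⟩
    have h3 := k3 z hz
    have hs : (z - z1) ^ q = z ^ q - z1 ^ q := by rw [hq]; exact sub_pow_char_pow z z1 e
    rw [hs] at h3
    field_simp
    linear_combination -h3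
  obtain ⟨a, c, hac⟩ := k4
  have k5 : ∀ z ∈ Z, a ^ q * z ^ q - a * z + (c ^ q - c) = 0 := by
    intro z hz
    have e1 := hac z hz
    have e2 : (z ^ (q + 1)) ^ q = a ^ q * z ^ q + c ^ q := by
      rw [e1, ← mul_pow, hq]; exact add_pow_char_pow _ _ p e
    have e3 : (z ^ (q + 1)) ^ q = z ^ (q + 1) := by
      rw [← pow_mul, show (q + 1) * q = q ^ 2 + q by ring, pow_add, ← hF, FiniteField.pow_card, pow_succ]
      ring
    rw [e3, e1] at e2
    linear_combination -e2
  obtain ⟨b, hb⟩ : ∃ b, b = a ^ q := ⟨_, rfl⟩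
  obtain ⟨d, hd⟩ : ∃ d, d = c ^ q - c := ⟨_, rfl⟩
  rw [← hb, ← hd] at k5
  let R : F[X] := C b * X ^ q - C a * X + C d
  have hR : R = 0 := by
    refine Polynomial.eq_zero_of_natDegree_lt_card_of_eval_eq_zero' R Z (fun z hz => ?_) ?_
    · simpa [R] using k5 z hz
    · rw [hZ, Nat.lt_succ_iff]
      simp only [R]
      compute_degree
      omega
  have ha : a = 0 := by
    have := congrArg (fun P => coeff P q) hR
    simp [R, coeff_X, coeff_C, show (1:ℕ) ≠ q by omega, show q ≠ 0 by omega] at this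
    rw [this] at hb
    exact eq_zero_of_pow_eq_zero hb.symm
  have hcq : c ^ q = c := by
    have := congrArg (fun P => coeff P 0) hR
    simp [R, coeff_X, coeff_C, show (0:ℕ) ≠ q by omega] at this
    rw [this] at hd
    exact sub_eq_zero.1 hd.symm
  have hac' : ∀ z ∈ Z, z ^ (q + 1) = c := by
    intro z hz; rw [hac z hz, ha]; ring
  refine ⟨c, ?_, hcq, fun z => ⟨hac' z, fun hz => ?_⟩⟩
  · obtain ⟨z, hz⟩ := Finset.card_pos.1 (by omega : 0 < Z.card)
    rw [← hac' z hz]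
    exact pow_ne_zero _ (k0 z hz)
  · by_contra hzZ
    have : (X ^ (q + 1) - C c : F[X]) = 0 := by
      refine Polynomial.eq_zero_of_natDegree_lt_card_of_eval_eq_zero' _ (insert z Z) (fun w hw => ?_) ?_
      · rcases Finset.mem_insert.1 hw with rfl | hw
        · simp [hz]
        · simp [hac' w hw]
      · rw [Finset.card_insert_of_notMem hzZ, hZ]
        simp
    exact X_pow_sub_C_ne_zero (by omega) c this
end

section
set_option linter.unusedSectionVars false
open scoped Classical
open Polynomial
variable {F : Type} [Field F] [Fintype F]
variable {E : Type} [AddCommGroup E] [Module F E] [Fintype E]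

/-- the parameters of the points of `A` on a line -/
noncomputable def Zs (F : Type) [Field F] [Fintype F] {E : Type} [AddCommGroup E] [Module F E]
   (A : Finset E) (x v : E) : Finset F := Finset.univ.filter fun z : F => v + z • x ∈ A

namespace QH
variable {q r : ℕ} {A : Finset E}

lemma mem_Zs (x v : E) (z : F) : z ∈ Zs F A x v ↔ v + z • x ∈ A := by simp [Zs]

lemma card_Zs (x v : E) : (Zs F A x v).card = sC F A x v := rfl

lemma many_ones (h : QH F q r A) {x : E} (hx : x ∉ A)
    (ht : ∀ v, sC F A x v = 1 ∨ sC F A x v = q + 1) :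
    Fintype.card E * (q - 1) < q ^ 2 * (Finset.univ.filter fun v : E => sC F A x v = 1).card := by
  have h1 := h.s_sum hx
  set N := (Finset.univ.filter fun v : E => sC F A x v = 1).card with hN
  have h2 : ∑ v : E, (sC F A x v : ℤ) = (q + 1) * Fintype.card E - q * N := by
    have : ∀ v : E, (sC F A x v : ℤ) = (q + 1) - q * (if sC F A x v = 1 then 1 else 0) := by
      intro v
      rcases ht v with hh | hh
      · simp [hh]
      · have := h.q2
        rw [hh, if_neg (by omega)]; push_cast; ring
    simp_rw [this]
    rw [Finset.sum_sub_distrib, ← Finset.mul_sum]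
    simp [hN, mul_comm]
  rw [h2, h.hM] at h1
  have hcE := h.cardE
  have hq2 := h.q2
  have hr3 := h.r3
  zify
  rw [Nat.cast_sub (by omega)]
  rw [hcE] at h1 ⊢
  have ha : (q:ℤ) ^ 2 ≤ (q:ℤ) ^ (r - 1) := pow_le_pow_right₀ (by omega) (by omega)
  have hq : (2:ℤ) ≤ q := by exact_mod_cast hq2
  generalize (q:ℤ) ^ (r - 1) = a at *
  generalize (N:ℤ) = N at *
  generalize (q:ℤ) = q at *
  have ha0 : 0 < a := by nlinarith
  have e1 : N = q ^ 3 * a ^ 2 + (-1) ^ r * a * q ^ 2 * (q - 1) := by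
    have : q * N = q * (q ^ 3 * a ^ 2 + (-1) ^ r * a * q ^ 2 * (q - 1)) := by linear_combination -h1
    exact mul_left_cancel₀ (by linarith) this
  rw [e1]
  have e2 : -(q - 1) ≤ (-1) ^ r * (q - 1) := by
    rcases eps r with he | he <;> rw [he] <;> linarith
  have e3 : 0 < a + (-1) ^ r * (q - 1) := by nlinarith
  have e4 : 0 < q ^ 4 * a * (a + (-1) ^ r * (q - 1)) := by positivity
  push_cast
  nlinarith

lemma centroid (h : QH F q r A) (hc : (fun v => if v ∈ A then (1:F) else 0) ∈ Cd F E)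
    (p e : ℕ) (hp : p.Prime) [CharP F p] (hq : q = p ^ e) (hq4 : 4 < q) {x : E} (hx : x ∉ A)
    (ht : ∀ v, sC F A x v = 1 ∨ sC F A x v = q + 1) :
    ∃ (ι : Type) (_ : Fintype ι) (μ : ι → F) (m : ι → Dual F E) (T : Dual F E), T x = -1 ∧
      (∀ v, ∑ z ∈ Zs F A x v, z ^ (q + 1) = ∑ i, μ i * (m i v) ^ (q + 1)) ∧
      ∀ v (φ : F[X]), φ.natDegree ≤ q → ∑ z ∈ Zs F A x v, φ.eval z = φ.eval (T v) := by
  have : Fact p.Prime := ⟨hp⟩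
  have : FiniteDimensional F E := FiniteDimensional.of_finrank_pos (by rw [h.hE]; omega)
  have : Finite (Dual F E) := Module.finite_of_finite F
  have := Fintype.ofFinite (Dual F E)
  obtain ⟨μ, m, hm⟩ := S_repr hc x
  have hQ : q + 1 < Fintype.card F - 1 := by
    rw [h.hF]
    have : q + 3 ≤ q ^ 2 := by nlinarith
    omega
  have hm' : ∀ k, 1 ≤ k → k < Fintype.card F - 1 → ∀ v, ∑ z ∈ Zs F A x v, z ^ k = ∑ L, μ L * (m L v) ^ k := by
    intro k h1 h2 v
    have := hm k h1 h2 v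
    rw [finsum_eq_sum_of_fintype] at this
    rw [← this, Zs, Finset.sum_filter]
    exact Finset.sum_congr rfl fun z _ => by split_ifs <;> simp
  let T : Dual F E := ∑ L, μ L • m L
  have hT : ∀ v, ∑ z ∈ Zs F A x v, z = T v := by
    intro v
    have := hm' 1 le_rfl (by omega) v
    simp only [pow_one] at this
    rw [this]
    simp [T, LinearMap.sum_apply]
  have hTx : T x = -1 := by
    rw [← hT]
    have : Zs F A x x = {-1} := by
      ext z
      rw [mem_Zs, Finset.mem_singleton]
      have : x + z • x = (1 + z) • x := by rw [add_smul, one_smul]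
      rw [this, h.smul_x_mem hx, add_eq_zero_iff_neg_eq]
      exact eq_comm
    rw [this]; simp
  let π : E →ₗ[F] E := LinearMap.id + T.smulRight x
  have hπ : ∀ v, π v = v + T v • x := fun v => rfl
  have hTπ : ∀ v, T (π v) = 0 := by
    intro v; rw [hπ]; simp [hTx]
  have hZ1 : ∀ v, sC F A x v = 1 → Zs F A x (π v) = {0} := by
    intro v hv
    rw [← s_add x v (T v), ← hπ, ← card_Zs, Finset.card_eq_one] at hv
    obtain ⟨z, hz⟩ := hv
    have := hT (π v)
    rw [hTπ, hz] at this
    simp at this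
    rw [hz, this]
  have key : ∀ k, 1 ≤ k → k ≤ q - 1 → ∀ v, ∑ z ∈ Zs F A x (π v), z ^ k = 0 := by
    intro k h1 h2 v
    by_contra hne
    rw [hm' k h1 (by omega)] at hne
    have hsz := SZ μ (fun L => (m L).comp π) k v hne
    have hsub : (Finset.univ.filter fun v : E => sC F A x v = 1) ⊆
        (Finset.univ.filter fun v : E => ∑ i, μ i * ((m i).comp π v) ^ k = 0) := by
      intro u hu
      simp only [Finset.mem_filter, Finset.mem_univ, true_and] at hu ⊢
      have := hm' k h1 (by omega) (π u)
      rw [hZ1 u hu] at this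
      simp only [Finset.sum_singleton, zero_pow (by omega : k ≠ 0)] at this
      exact this.symm
    have hle := Finset.card_le_card hsub
    have hmo := h.many_ones hx ht
    rw [h.hF] at hsz
    have a1 := Nat.mul_le_mul_left (q ^ 2) hle
    have a2 := Nat.mul_le_mul_left (Fintype.card E) h2
    exact absurd (hmo.trans_le (a1.trans (hsz.trans a2))) (lt_irrefl _)
  have key' : ∀ k, 1 ≤ k → k ≤ q → ∀ v, ∑ z ∈ Zs F A x (π v), z ^ k = 0 := by
    intro k h1 h2 v
    rcases Nat.lt_or_ge k q with h3 | h3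
    · exact key k h1 (by omega) v
    · have hk : k = p ^ e := by omega
      rw [hk, ← sum_pow_char_pow p e, hT, hTπ, zero_pow]
      rw [← hq]; omega
  refine ⟨Dual F E, inferInstance, μ, m, T, hTx, hm' (q + 1) (by omega) hQ, fun v φ hφ => ?_⟩
  have e1 : ∑ z ∈ Zs F A x (π v), (φ.comp (X + C (T v))).eval z = (φ.comp (X + C (T v))).eval 0 := by
    refine sum_eval_of_moments _ q ?_ (fun k h1 h2 => key' k h1 h2 v) _ ?_
    · rw [card_Zs, h.s_cast hc hx]
    · rw [natDegree_comp, natDegree_X_add_C, mul_one]; exact hφ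
  simp only [eval_comp, eval_add, eval_X, eval_C, zero_add] at e1
  rw [← e1]
  symm
  refine Finset.sum_bij (fun z _ => z + T v) ?_ ?_ ?_ ?_
  · intro z hz
    rw [mem_Zs] at hz ⊢
    rw [hπ] at hz
    convert hz using 1
    rw [add_smul]; abel
  · intro a _ b _ hab; simpa using hab
  · intro z hz
    refine ⟨z - T v, ?_, by simp⟩
    rw [mem_Zs] at hz ⊢
    rw [hπ]
    convert hz using 1
    rw [sub_smul]; abel
  · intro z _; rfl

lemma Zs_swap (h : QH F q r A) {x w : E} (hx : x ∉ A) {z1 : F} (ζ : F) :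
    ζ ∈ Zs F A (w + z1 • x) x ↔ ζ ≠ 0 ∧ ζ⁻¹ + z1 ∈ Zs F A x w := by
  rw [mem_Zs, mem_Zs]
  by_cases h0 : ζ = 0
  · simp [h0, hx]
  · simp only [ne_eq, h0, not_false_eq_true, true_and]
    rw [← h.smul_mem h0 (w + _)]
    congr! 1
    rw [smul_add, smul_add, smul_smul, smul_smul, mul_add, mul_inv_cancel₀ h0, add_smul, one_smul]
    abel

/-- `A` is the zero set of an `F_q`-valued diagonal sesquilinear expression. -/
theorem herm_form (h : QH F q r A) (hc : (fun v => if v ∈ A then (1:F) else 0) ∈ Cd F E)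
    (p e : ℕ) (hp : p.Prime) [CharP F p] (hq : q = p ^ e) (hq4 : 4 < q)
    (ht : ∀ x, x ∉ A → ∀ v, sC F A x v = 1 ∨ sC F A x v = q + 1) :
    ∃ (ι : Type) (_ : Fintype ι) (μ : ι → F) (m : ι → Dual F E),
      (∀ v, v ∈ A ↔ ∑ i, μ i * (m i v) ^ (q + 1) = 0) ∧
      ∀ v, (∑ i, μ i * (m i v) ^ (q + 1)) ^ q = ∑ i, μ i * (m i v) ^ (q + 1) := by
  have : Fact p.Prime := ⟨hp⟩
  obtain ⟨x, hx⟩ : ∃ x, x ∉ A := by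
    by_contra hcon
    push Not at hcon
    have hA : A = Finset.univ := Finset.eq_univ_iff_forall.2 hcon
    have h1 := h.hM
    rw [hA, Finset.card_univ, h.cardE] at h1
    have ha : (q:ℤ) ^ 2 ≤ (q:ℤ) ^ (r - 1) := pow_le_pow_right₀ (by omega) (by have := h.r3; omega)
    have hq : (4:ℤ) < q := by exact_mod_cast hq4
    generalize (q:ℤ) ^ (r - 1) = a at *
    generalize (q:ℤ) = q at *
    have ha0 : 0 < a := by nlinarith
    have e0 : 0 < q * (q - 1) := by nlinarith
    have e1 : q * a * (q ^ 2 * (q - 1) * a + (-1) ^ r * (q - 1)) = 0 := by linear_combination h1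
    have e2 : -(q - 1) ≤ (-1) ^ r * (q - 1) := by
      rcases eps r with he | he <;> rw [he] <;> linarith
    have e3 : (q - 1) * 1 < (q - 1) * (q ^ 2 * a) := by
      apply mul_lt_mul_of_pos_left _ (by linarith)
      nlinarith [mul_pos (show 0 < q ^ 2 by positivity) ha0]
    have e4 : 0 < q ^ 2 * (q - 1) * a + (-1) ^ r * (q - 1) := by nlinarith
    have : 0 < q * a * (q ^ 2 * (q - 1) * a + (-1) ^ r * (q - 1)) := by positivity
    linarith
  obtain ⟨ι, _, μ, m, T, hTx, hm, hφ⟩ := h.centroid hc p e hp hq hq4 hx (ht x hx)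
  let π : E →ₗ[F] E := LinearMap.id + T.smulRight x
  have hπ : ∀ v, π v = v + T v • x := fun v => rfl
  have hTπ : ∀ v, T (π v) = 0 := by
    intro v; rw [hπ]; simp [hTx]
  have main : ∀ w, T w = 0 → (∑ z ∈ Zs F A x w, z ^ (q + 1)) ^ q = ∑ z ∈ Zs F A x w, z ^ (q + 1) ∧
      ∀ z, w + z • x ∈ A ↔ z ^ (q + 1) = ∑ z ∈ Zs F A x w, z ^ (q + 1) := by
    intro w hw
    have hf := hφ w
    rw [hw] at hf
    rcases ht x hx w with h1 | h1
    · rw [← card_Zs, Finset.card_eq_one] at h1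
      obtain ⟨z, hz⟩ := h1
      have := hf X (by simp; omega)
      rw [hz] at this
      simp at this
      rw [this] at hz
      rw [hz]
      refine ⟨by simp; omega, fun z => ?_⟩
      rw [← mem_Zs, hz]; simp
    · rw [← card_Zs] at h1
      obtain ⟨z1, hz1⟩ : ∃ z1, z1 ∉ Zs F A x w := by
        by_contra hcon
        push Not at hcon
        rw [Finset.eq_univ_iff_forall.2 hcon, Finset.card_univ, h.hF] at h1
        nlinarith
      have hy : w + z1 • x ∉ A := by rwa [← mem_Zs]
      obtain ⟨-, -, -, -, T', -, -, hφ'⟩ := h.centroid hc p e hp hq hq4 hy (ht _ hy)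
      have hne : ∀ z ∈ Zs F A x w, z - z1 ≠ 0 := by
        intro z hz h0
        rw [sub_eq_zero] at h0
        exact hz1 (h0 ▸ hz)
      obtain ⟨c, hc0, hcq, hcZ⟩ := rigid q p e hp hq h.q2 h.hF _ h1 hf z1 hz1 (T' x) (by
        intro φ hd
        rw [← hφ' x φ hd]
        refine Finset.sum_bij (fun z _ => (z - z1)⁻¹) ?_ ?_ ?_ ?_
        · intro z hz
          rw [h.Zs_swap hx]
          refine ⟨inv_ne_zero (hne z hz), by simpa using hz⟩
        · intro a _ b _ hab
          simpa using hab
        · intro ζ hζ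
          rw [h.Zs_swap hx] at hζ
          exact ⟨_, hζ.2, by simp⟩
        · intro z _; rfl)
      have hsum : ∑ z ∈ Zs F A x w, z ^ (q + 1) = c := by
        rw [Finset.sum_congr rfl fun z hz => (hcZ z).1 hz]
        simp only [Finset.sum_const, nsmul_eq_mul]
        rw [card_Zs, h.s_cast hc hx, one_mul]
      rw [hsum]
      refine ⟨hcq, fun z => ?_⟩
      rw [← mem_Zs, hcZ]
  refine ⟨Option ι, inferInstance, fun o => o.elim 1 (fun i => -μ i),
    fun o => o.elim (-T) (fun i => (m i).comp π), ?_, ?_⟩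
  · intro v
    have := (main (π v) (hTπ v)).2 (-T v)
    rw [hπ, show v + T v • x + (-T v) • x = v by rw [neg_smul]; abel, ← hπ, hm] at this
    rw [this, Fintype.sum_option, ← sub_eq_zero]
    simp [sub_eq_add_neg]
  · intro v
    have h1 := (main (π v) (hTπ v)).1
    rw [hm] at h1
    have h2 : ((-T v) ^ (q + 1)) ^ q = (-T v) ^ (q + 1) := by
      rw [← pow_mul, show (q + 1) * q = q ^ 2 + q by ring, pow_add, ← h.hF, FiniteField.pow_card, pow_succ]
      ring
    have h3 : ∀ a b : F, (a - b) ^ q = a ^ q - b ^ q := by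
      intro a b; rw [hq]; exact sub_pow_char_pow a b e
    have h4 : ∑ o : Option ι, (o.elim 1 (fun i => -μ i)) *
        ((o.elim (-T) (fun i => (m i).comp π) : Dual F E) v) ^ (q + 1) =
        (-T v) ^ (q + 1) - ∑ i, μ i * (m i (π v)) ^ (q + 1) := by
      rw [Fintype.sum_option]
      simp [sub_eq_add_neg]
    rw [h4, h3, h1, h2]
end QH
end

section
set_option linter.unusedSectionVars false
open scoped Classical
variable {F : Type} [Field F] [Fintype F]

/-- the sesquilinear expression -/
def Phi {F E ι : Type} [Field F] [AddCommGroup E] [Module F E] [Fintype ι] (q : ℕ) (μ : ι → F)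
    (m : ι → Dual F E) (u v : E) : F := ∑ i, μ i * (m i u * (m i v) ^ q)

lemma Phi_herm {E ι : Type} [AddCommGroup E] [Module F E] [Fintype ι] (q p e : ℕ) (hp : p.Prime) [CharP F p]
    (hq : q = p ^ e) (hq2 : 2 ≤ q) (hF : Fintype.card F = q ^ 2)
    (μ : ι → F) (m : ι → Dual F E) (hH : ∀ v, (Phi q μ m v v) ^ q = Phi q μ m v v) (u v : E) :
    Phi q μ m v u = (Phi q μ m u v) ^ q := by
  have : Fact p.Prime := ⟨hp⟩
  have hadd : ∀ a b : F, (a + b) ^ q = a ^ q + b ^ q := fun a b => by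
    rw [hq]; exact add_pow_char_pow a b p e
  have hsub : ∀ a b : F, (a - b) ^ q = a ^ q - b ^ q := fun a b => by
    rw [hq]; exact sub_pow_char_pow a b e
  have hqq : ∀ a : F, (a ^ q) ^ q = a := fun a => by
    rw [← pow_mul, ← pow_two, ← hF, FiniteField.pow_card]
  have hexp : ∀ c : F, Phi q μ m (c • u + v) (c • u + v) =
      c * c ^ q * Phi q μ m u u + c * Phi q μ m u v + c ^ q * Phi q μ m v u + Phi q μ m v v := by
    intro c
    simp only [Phi, Finset.mul_sum, ← Finset.sum_add_distrib]
    refine Finset.sum_congr rfl fun i _ => ?_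
    rw [map_add, map_smul, smul_eq_mul, hadd, mul_pow]
    ring
  have hD : ∀ c : F, c ^ q * (Phi q μ m u v) ^ q + c * (Phi q μ m v u) ^ q =
      c * Phi q μ m u v + c ^ q * Phi q μ m v u := by
    intro c
    have := hH (c • u + v)
    rw [hexp] at this
    simp only [hadd, mul_pow, hqq, hH] at this
    linear_combination this
  set a := Phi q μ m u v
  set b := Phi q μ m v u
  by_contra hne
  have hD1 := hD 1
  simp at hD1
  have h2 : ∀ c : F, c ^ q = c := by
    intro c
    have := hD c
    have h3 : (c ^ q - c) * (a ^ q - b) = 0 := by linear_combination this - c * hD1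
    rcases mul_eq_zero.1 h3 with h4 | h4
    · exact sub_eq_zero.1 h4
    · exact absurd (sub_eq_zero.1 h4).symm hne
  have hX : (Polynomial.X ^ q - Polynomial.X : Polynomial F) ≠ 0 :=
    FiniteField.X_pow_card_sub_X_ne_zero F (by omega)
  apply hX
  refine Polynomial.eq_zero_of_natDegree_lt_card_of_eval_eq_zero' _ Finset.univ (fun c _ => by simp [h2]) ?_
  rw [FiniteField.X_pow_card_sub_X_natDegree_eq F (by omega), Finset.card_univ, hF]
  nlinarith

theorem QH.nonsing {q r : ℕ} {A : Finset (Fin (r + 1) → F)} (h : QH F q r A)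
    {f : (Fin (r + 1) → F) → F} (hf : f ∈ Cd F (Fin (r + 1) → F)) (hf1 : ∀ v, v ∈ A → f v = 1)
    (hf0 : ∀ v, v ∉ A → f v = 0)
    (p e : ℕ) (hp : p.Prime) [CharP F p] (hq : q = p ^ e) (hq4 : 4 < q)
    (ht : ∀ x, x ∉ A → ∀ v, sC F A x v = 1 ∨ sC F A x v = q + 1) :
    ∃ B : Matrix (Fin (r + 1)) (Fin (r + 1)) F, IsUnit B.det ∧ Bᵀ = B.map (fun a => a ^ q) ∧
      ∀ x, x ∈ A ↔ ∑ i, ∑ j, x i * B i j * (x j) ^ q = 0 := by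
  have : Fact p.Prime := ⟨hp⟩
  obtain ⟨ι, _, μ, m, h1, h2⟩ := h.herm_form (by
    convert hf using 1
    ext v
    split_ifs with hv
    · exact (hf1 v hv).symm
    · exact (hf0 v hv).symm) p e hp hq hq4 ht
  have hPh : ∀ v, ∑ i, μ i * (m i v) ^ (q + 1) = Phi q μ m v v := fun v =>
    Finset.sum_congr rfl fun i _ => by rw [pow_succ]; ring
  simp only [hPh] at h1 h2
  have hherm := Phi_herm q p e hp hq h.q2 h.hF μ m h2
  let B : Matrix (Fin (r + 1)) (Fin (r + 1)) F := fun i j => Phi q μ m (Pi.single i 1) (Pi.single j 1)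
  have hB : ∀ u v, ∑ i, ∑ j, u i * B i j * (v j) ^ q = Phi q μ m u v := by
    intro u v
    have hm : ∀ k, ∀ w, m k w = ∑ i, w i * m k (Pi.single i 1) := by
      intro k w
      rw [LinearMap.pi_apply_eq_sum_univ (m k) w]
      simp only [smul_eq_mul]
      refine Finset.sum_congr rfl fun i _ => ?_
      congr 2
      ext j
      simp [Pi.single_apply, eq_comm]
    have hmq : ∀ k, (m k v) ^ q = ∑ j, (v j) ^ q * (m k (Pi.single j 1)) ^ q := by
      intro k
      rw [hm k v, hq, sum_pow_char_pow]
      exact Finset.sum_congr rfl fun j _ => by rw [mul_pow]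
    have e1 : ∀ k, μ k * (m k u * (m k v) ^ q) = ∑ i, ∑ j, u i * (μ k * (m k (Pi.single i 1) *
        (m k (Pi.single j 1)) ^ q)) * v j ^ q := by
      intro k
      rw [hmq, hm k u, Finset.sum_mul_sum, Finset.mul_sum]
      refine Finset.sum_congr rfl fun i _ => ?_
      rw [Finset.mul_sum]
      refine Finset.sum_congr rfl fun j _ => ?_
      ring
    rw [Phi, Finset.sum_congr rfl fun k _ => e1 k]
    symm
    rw [Finset.sum_comm]
    refine Finset.sum_congr rfl fun i _ => ?_
    rw [Finset.sum_comm]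
    refine Finset.sum_congr rfl fun j _ => ?_
    simp only [B, Phi, Finset.mul_sum, Finset.sum_mul]
  refine ⟨B, ?_, ?_, fun x => by rw [hB, h1]⟩
  · rw [isUnit_iff_ne_zero]
    intro hdet
    obtain ⟨R, hR0, hR⟩ := Matrix.exists_vecMul_eq_zero_iff.2 hdet
    have hRv : ∀ v, Phi q μ m R v = 0 := by
      intro v
      rw [← hB, Finset.sum_comm]
      refine Finset.sum_eq_zero fun j _ => ?_
      rw [← Finset.sum_mul]
      have := congrFun hR j
      simp only [Matrix.vecMul, dotProduct, Pi.zero_apply] at this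
      rw [this, zero_mul]
    have hvR : ∀ v, Phi q μ m v R = 0 := by
      intro v
      rw [hherm R v, hRv, zero_pow (by omega)]
    have hadd : ∀ a b : F, (a + b) ^ q = a ^ q + b ^ q := fun a b => by
      rw [hq]; exact add_pow_char_pow a b p e
    have hexp : ∀ v (c : F), Phi q μ m (v + c • R) (v + c • R) = Phi q μ m v v := by
      intro v c
      have : Phi q μ m (v + c • R) (v + c • R) =
          c * c ^ q * Phi q μ m R R + c * Phi q μ m R v + c ^ q * Phi q μ m v R + Phi q μ m v v := by
        simp only [Phi, Finset.mul_sum, ← Finset.sum_add_distrib]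
        refine Finset.sum_congr rfl fun i _ => ?_
        rw [map_add, map_smul, smul_eq_mul, hadd, mul_pow]
        ring
      rw [this, hRv, hRv, hvR]; ring
    have hA : ∀ v (c : F), v + c • R ∈ A ↔ v ∈ A := by
      intro v c; rw [h1, h1, hexp]
    obtain ⟨i, hi⟩ := Function.ne_iff.1 hR0
    let L : Dual F (Fin (r + 1) → F) := LinearMap.proj i
    have hLR : L R ≠ 0 := hi
    have hL0 : L ≠ 0 := by
      intro h0; rw [h0] at hLR; simp at hLR
    have hcard : A.card = q ^ 2 * nL A L := by
      rw [← h.hF, ← Finset.card_univ, nL, ← Finset.card_product]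
      symm
      refine Finset.card_bij' (fun z _ => z.2 + z.1 • R) (fun v _ => (L v / L R, v - (L v / L R) • R)) ?_ ?_ ?_ ?_
      · rintro ⟨c, v⟩ hv
        simp only [Finset.mem_product, Finset.mem_univ, true_and, Finset.mem_filter] at hv
        exact (hA v c).2 hv.1
      · intro v hv
        simp only [Finset.mem_product, Finset.mem_univ, true_and, Finset.mem_filter]
        refine ⟨?_, ?_⟩
        · rw [sub_eq_add_neg, ← neg_smul, hA]; exact hv
        · rw [map_sub, map_smul, smul_eq_mul]; field_simp; ring
      · rintro ⟨c, v⟩ hv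
        simp only [Finset.mem_product, Finset.mem_univ, true_and, Finset.mem_filter] at hv
        have : L (v + c • R) / L R = c := by
          rw [map_add, map_smul, hv.2, smul_eq_mul]; field_simp; ring
        simp only [this]
        simp
      · intro v _; simp
    have hM := h.hM
    rw [hcard] at hM
    push_cast at hM
    have ha : (0:ℤ) < (q:ℤ) ^ (r - 1) := by positivity
    have hq' : (4:ℤ) < q := by exact_mod_cast hq4
    have he : ((-1:ℤ)) ^ r ≠ 0 := by simp
    have hn := h.hn L hL0
    generalize (nL A L : ℤ) = n at *
    generalize (q:ℤ) ^ (r - 1) = a at *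
    generalize (q:ℤ) = q at *
    generalize ((-1:ℤ)) ^ r = ε at *
    have hne : ε * a * q * (q - 1) ≠ 0 := by
      have : q - 1 ≠ 0 := by linarith
      have : q ≠ 0 := by linarith
      positivity
    rcases hn with hn | hn
    · have : ε * a * q * (q - 1) * (q + 1) = 0 := by rw [hn] at hM; linear_combination hM
      rcases mul_eq_zero.1 this with h3 | h3
      · exact hne h3
      · linarith
    · have : ε * a * q * (q - 1) * (q ^ 2 - 1) = 0 := by rw [hn] at hM; linear_combination -hM
      rcases mul_eq_zero.1 this with h3 | h3
      · exact hne h3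
      · nlinarith
  · ext i j
    exact hherm _ _
end

section
set_option linter.unusedSectionVars false
open scoped Classical
variable {F : Type} [Field F] [Fintype F]

lemma ker_mem_Cd {E : Type} [AddCommGroup E] [Module F E] (L : Dual F E) :
    (fun v => 1 - (L v) ^ (Fintype.card F - 1)) ∈ Cd F E := by
  have : (fun v => 1 - (L v) ^ (Fintype.card F - 1)) = fun v => if L v = 0 then (1:F) else 0 := by
    ext v; exact one_sub_pow_card _
  rw [this]
  exact Submodule.subset_span ⟨L, rfl⟩

lemma prod_mem_Cd {E : Type} [AddCommGroup E] [Module F E] (L1 L2 : Dual F E) (j l : ℕ) (hj : 0 < j)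
    (hl : 0 < l) (hjl : j + l = Fintype.card F - 1) :
    (fun v => (L1 v) ^ j * (L2 v) ^ l) ∈ Cd F E := by
  have e : (fun v => (L1 v) ^ j * (L2 v) ^ l) =
      ∑ t : F, ((-1) ^ j * t ^ j) • (fun v => 1 - ((L1 + t • L2) v) ^ (Fintype.card F - 1)) := by
    ext v
    simp only [Finset.sum_apply, Pi.smul_apply, smul_eq_mul, LinearMap.add_apply, LinearMap.smul_apply]
    generalize L1 v = a
    generalize L2 v = b
    simp only [one_sub_pow_card]
    by_cases hb : b = 0
    · subst hb
      simp only [mul_zero, add_zero, ← Finset.sum_mul, ← Finset.mul_sum]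
      rw [FiniteField.sum_pow_lt_card_sub_one F j (by omega), zero_pow (by omega)]
      simp
    · rw [Finset.sum_eq_single (-a / b)]
      · rw [if_pos (by field_simp; ring), mul_one, ← mul_pow]
        have h1 : b ^ (j + l) = 1 := by rw [hjl]; exact FiniteField.pow_card_sub_one_eq_one b hb
        have h2 : -1 * (-a / b) = a / b := by ring
        rw [h2, div_pow]
        have : b ^ l = (b ^ j)⁻¹ := by
          rw [pow_add] at h1
          exact eq_inv_of_mul_eq_one_right h1
        rw [this, div_eq_mul_inv]
      · intro t _ ht
        rw [if_neg, mul_zero]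
        intro h
        apply ht
        field_simp
        linear_combination h
      · simp
  rw [e]
  exact Submodule.sum_mem _ fun t _ => Submodule.smul_mem _ _ (ker_mem_Cd _)

lemma slice_decomp {X W : Type} [Fintype X] (G : X → W → F) :
    ∃ b : X → X → F, (∀ x, b x ∈ Submodule.span F (Set.range fun w => fun u => G u w)) ∧
      ∀ u w, G u w = ∑ x, b x u * G x w := by
  set P := Submodule.span F (Set.range fun w => fun u => G u w) with hP
  obtain ⟨π, hπ⟩ := LinearMap.exists_leftInverse_of_injective P.subtype (by simp)
  refine ⟨fun x => (π (Pi.single x 1)).1, fun x => (π _).2, fun u w => ?_⟩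
  have hm : (fun u => G u w) ∈ P := Submodule.subset_span ⟨w, rfl⟩
  have h1 : π (fun u => G u w) = ⟨_, hm⟩ := LinearMap.congr_fun hπ ⟨_, hm⟩
  have h2 : (fun u => G u w) = ∑ x, G x w • Pi.single (M := fun _ => F) x 1 := by
    ext u; simp [Finset.sum_apply, Pi.single_apply]
  have h3 : G u w = (π (fun u => G u w)).1 u := by rw [h1]
  rw [h3, h2, map_sum]
  simp [Finset.sum_apply, mul_comm]

theorem herm_mem_Cd {n q p e : ℕ} (hp : p.Prime) [CharP F p] (hq : q = p ^ e) (hq2 : 2 ≤ q)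
    (hF : Fintype.card F = q ^ 2) (B : Matrix (Fin n) (Fin n) F) :
    (fun x : Fin n → F => 1 - (∑ i, ∑ j, x i * B i j * (x j) ^ q) ^ (q - 1)) ∈ Cd F (Fin n → F) := by
  have : Fact p.Prime := ⟨hp⟩
  have hone : (fun _ : Fin n → F => (1:F)) ∈ Cd F (Fin n → F) :=
    Submodule.subset_span ⟨0, by simp⟩
  refine Submodule.sub_mem _ hone ?_
  let G : (Fin n → F) → (Fin n → F) → F := fun u v => (∑ i, ∑ j, u i * B i j * (v j) ^ q) ^ (q - 1)
  obtain ⟨b, hb, hG⟩ := slice_decomp G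
  have e1 : (fun x : Fin n → F => (∑ i, ∑ j, x i * B i j * (x j) ^ q) ^ (q - 1)) =
      ∑ x, (fun v => b x v * G x v) := by
    ext v; rw [Finset.sum_apply]; exact hG v v
  rw [e1]
  refine Submodule.sum_mem _ fun x _ => ?_
  let M : Dual F (Fin n → F) := ∑ j, (∑ i, x i * B i j) ^ q • LinearMap.proj j
  have hM : ∀ v, G x v = (M v) ^ (q * (q - 1)) := by
    intro v
    simp only [G]
    rw [pow_mul]
    congr 1
    have : M v = ∑ j, (∑ i, x i * B i j) ^ q * v j := by simp [M, LinearMap.sum_apply]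
    rw [this, Finset.sum_comm]
    conv_rhs => rw [hq, sum_pow_char_pow, ← hq]
    refine Finset.sum_congr rfl fun j _ => ?_
    rw [mul_pow, ← pow_mul, ← pow_two, ← hF, FiniteField.pow_card, Finset.sum_mul]
  simp_rw [hM]
  have hbx := hb x
  generalize b x = g at hbx
  induction hbx using Submodule.span_induction with
  | mem g hg =>
    obtain ⟨w, rfl⟩ := hg
    let L : Dual F (Fin n → F) := ∑ i, (∑ j, B i j * (w j) ^ q) • LinearMap.proj i
    have hL : ∀ v, G v w = (L v) ^ (q - 1) := by
      intro v
      simp only [G]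
      congr 1
      simp only [L, LinearMap.sum_apply, LinearMap.smul_apply, LinearMap.proj_apply, smul_eq_mul, Finset.sum_mul]
      refine Finset.sum_congr rfl fun i _ => Finset.sum_congr rfl fun j _ => ?_
      ring
    simp only [hL]
    obtain ⟨k, rfl⟩ : ∃ k, q = k + 2 := ⟨q - 2, by omega⟩
    refine prod_mem_Cd L M _ _ (by omega) (by simp) ?_
    rw [hF]
    have : (k + 2) ^ 2 = (k + 1) + (k + 2) * (k + 1) + 1 := by ring
    rw [this]; rfl
  | zero =>
    simp only [Pi.zero_apply, zero_mul]; exact Submodule.zero_mem _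
  | add g g' _ _ h1 h2 =>
    simp only [Pi.add_apply, add_mul]; exact Submodule.add_mem _ h1 h2
  | smul c g _ h1 =>
    simp only [Pi.smul_apply, smul_eq_mul, mul_assoc]; exact Submodule.smul_mem _ c h1
end

section
set_option linter.unusedSectionVars false
open scoped Classical
variable {F : Type} [Field F] [Fintype F]

instance finite_projPoint (n : ℕ) : Finite (ProjPoint F n) :=
  inferInstanceAs (Finite {W : Submodule F (Fin n → F) // finrank F W = 1})

lemma exists_rep {n : ℕ} (P : ProjPoint F n) : ∃ v : Fin n → F, v ≠ 0 ∧ P.1 = Submodule.span F {v} := by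
  obtain ⟨⟨v, hvP⟩, hv0, hv⟩ := finrank_eq_one_iff'.1 P.2
  refine ⟨v, fun h => hv0 (Subtype.ext h), le_antisymm ?_ ?_⟩
  · intro w hw
    obtain ⟨c, hc⟩ := hv ⟨w, hw⟩
    rw [Submodule.mem_span_singleton]
    exact ⟨c, congrArg Subtype.val hc⟩
  · rw [Submodule.span_singleton_le_iff_mem]; exact hvP

/-- a representative vector of a point -/
noncomputable def rep {n : ℕ} (P : ProjPoint F n) : Fin n → F := (exists_rep P).choose

lemma rep_ne {n : ℕ} (P : ProjPoint F n) : rep P ≠ 0 := (exists_rep P).choose_spec.1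
lemma rep_span {n : ℕ} (P : ProjPoint F n) : P.1 = Submodule.span F {rep P} := (exists_rep P).choose_spec.2
lemma rep_mem {n : ℕ} (P : ProjPoint F n) : rep P ∈ P.1 := by
  have := Submodule.mem_span_singleton_self (R := F) (rep P)
  rwa [← rep_span] at this

lemma pt_unique {n : ℕ} {P P' : ProjPoint F n} {v : Fin n → F} (hv : v ≠ 0) (h : v ∈ P.1) (h' : v ∈ P'.1) :
    P = P' := by
  have key : ∀ R : ProjPoint F n, v ∈ R.1 → R.1 = Submodule.span F {v} := by
    intro R hR
    have hle : Submodule.span F {v} ≤ R.1 := by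
      rw [Submodule.span_singleton_le_iff_mem]; exact hR
    exact (Submodule.eq_of_le_of_finrank_eq hle (by rw [finrank_span_singleton hv]; exact R.2.symm)).symm
  exact Subtype.ext ((key P h).trans (key P' h').symm)

lemma exists_pt {n : ℕ} {v : Fin n → F} (hv : v ≠ 0) : ∃ P : ProjPoint F n, v ∈ P.1 :=
  ⟨⟨Submodule.span F {v}, finrank_span_singleton hv⟩, Submodule.mem_span_singleton_self v⟩

lemma pt_le {n : ℕ} {P : ProjPoint F n} {v : Fin n → F} (hv : v ≠ 0) (h : v ∈ P.1)
    (H : Submodule F (Fin n → F)) : P ∈ pointsIn F n H ↔ v ∈ H := by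
  constructor
  · intro hP; exact hP h
  · intro hvH
    have hle : Submodule.span F {v} ≤ P.1 := by
      rw [Submodule.span_singleton_le_iff_mem]; exact h
    have := Submodule.eq_of_le_of_finrank_eq hle (by rw [finrank_span_singleton hv]; exact P.2.symm)
    change P.1 ≤ H
    rw [← this, Submodule.span_singleton_le_iff_mem]
    exact hvH

lemma count_pts {n : ℕ} (S : Set (ProjPoint F n)) :
    {v : Fin n → F | v ≠ 0 ∧ ∃ P ∈ S, v ∈ P.1}.ncard = S.ncard * (Fintype.card F - 1) := by
  have h1 : {v : Fin n → F | v ≠ 0 ∧ ∃ P ∈ S, v ∈ P.1} =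
      (fun z : ProjPoint F n × F => z.2 • rep z.1) '' (S ×ˢ {c : F | c ≠ 0}) := by
    ext v
    constructor
    · rintro ⟨hv, P, hP, hvP⟩
      rw [rep_span, Submodule.mem_span_singleton] at hvP
      obtain ⟨c, rfl⟩ := hvP
      exact ⟨(P, c), ⟨hP, fun h0 => hv (by
        have h1 : c = 0 := h0
        rw [h1, zero_smul])⟩, rfl⟩
    · rintro ⟨⟨P, c⟩, ⟨hP, hc⟩, rfl⟩
      exact ⟨smul_ne_zero hc (rep_ne P), P, hP, P.1.smul_mem c (rep_mem P)⟩
  rw [h1, Set.ncard_image_of_injOn, Set.ncard_prod]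
  · congr 1
    have : {c : F | c ≠ 0} = ((Finset.univ.erase (0:F) : Finset F) : Set F) := by ext; simp
    rw [this, Set.ncard_coe_finset, Finset.card_erase_of_mem (Finset.mem_univ _), Finset.card_univ]
  · rintro ⟨P, c⟩ ⟨hP, hc⟩ ⟨P', c'⟩ ⟨hP', hc'⟩ h
    simp only at h
    have hPP : P = P' := by
      refine pt_unique (smul_ne_zero hc (rep_ne P)) (P.1.smul_mem c (rep_mem P)) ?_
      rw [h]; exact P'.1.smul_mem c' (rep_mem P')
    subst hPP
    have := smul_left_injective F (rep_ne P) h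
    rw [this]

/-- the cone over `V` -/
noncomputable def cone {n : ℕ} (V : Set (ProjPoint F n)) : Finset (Fin n → F) :=
  Finset.univ.filter fun v => v = 0 ∨ ∃ P ∈ V, v ∈ P.1

lemma mem_cone {n : ℕ} (V : Set (ProjPoint F n)) (v : Fin n → F) :
    v ∈ cone V ↔ v = 0 ∨ ∃ P ∈ V, v ∈ P.1 := by simp [cone]

lemma mem_cone_iff {n : ℕ} (V : Set (ProjPoint F n)) {P : ProjPoint F n} {v : Fin n → F} (hv : v ≠ 0)
    (h : v ∈ P.1) : v ∈ cone V ↔ P ∈ V := by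
  rw [mem_cone]
  constructor
  · rintro (h0 | ⟨P', hP', hvP'⟩)
    · exact absurd h0 hv
    · rwa [pt_unique hv h hvP']
  · intro hP; exact Or.inr ⟨P, hP, h⟩

lemma card_cone {n : ℕ} (V : Set (ProjPoint F n)) :
    (cone V).card = 1 + V.ncard * (Fintype.card F - 1) := by
  rw [← count_pts, ← Set.ncard_coe_finset]
  have : ((cone V : Finset _) : Set (Fin n → F)) = insert 0 {v : Fin n → F | v ≠ 0 ∧ ∃ P ∈ V, v ∈ P.1} := by
    ext v
    simp only [Finset.mem_coe, mem_cone, Set.mem_insert_iff, Set.mem_ofPred_eq]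
    tauto
  rw [this, Set.ncard_insert_of_notMem (by simp) (Set.toFinite _), add_comm]

lemma nL_cone {n : ℕ} (V : Set (ProjPoint F n)) (L : Dual F (Fin n → F)) :
    nL (cone V) L = 1 + secant F n V (LinearMap.ker L) * (Fintype.card F - 1) := by
  rw [secant, ← count_pts, nL, ← Set.ncard_coe_finset]
  have : (((cone V).filter fun v => L v = 0 : Finset _) : Set (Fin n → F)) =
      insert 0 {v : Fin n → F | v ≠ 0 ∧ ∃ P ∈ V ∩ pointsIn F n (LinearMap.ker L), v ∈ P.1} := by
    ext v
    simp only [Finset.mem_coe, Finset.mem_filter, mem_cone, Set.mem_insert_iff, Set.mem_ofPred_eq]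
    by_cases hv : v = 0
    · simp [hv]
    · simp only [hv, false_or, ne_eq, not_false_eq_true, true_and]
      constructor
      · rintro ⟨⟨P, hP, hvP⟩, hL⟩
        exact ⟨P, ⟨hP, (pt_le hv hvP _).2 hL⟩, hvP⟩
      · rintro ⟨P, ⟨hP, hPk⟩, hvP⟩
        exact ⟨⟨P, hP, hvP⟩, (pt_le hv hvP _).1 hPk⟩
  rw [this, Set.ncard_insert_of_notMem (by simp) (Set.toFinite _), add_comm]

lemma QH_of {q r : ℕ} (hq2 : 2 ≤ q) (hr : 3 ≤ r) (hF : Fintype.card F = q ^ 2)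
    (V : Set (ProjPoint F (r + 1))) (hV : IsQuasiHermitian F q r V) : QH F q r (cone V) := by
  have hs1 : ((Fintype.card F - 1 : ℕ) : ℤ) = (q:ℤ) ^ 2 - 1 := by
    rw [hF, Nat.cast_sub (Nat.one_le_pow _ _ (by omega))]; push_cast; rfl
  obtain ⟨k, rfl⟩ : ∃ k, r = k + 2 := ⟨r - 2, by omega⟩
  have hε : ((-1:ℤ)) ^ k * (-1) ^ k = 1 := by rw [← mul_pow]; simp
  refine ⟨hq2, hr, hF, by simp, by simp [mem_cone], ?_, ?_, ?_⟩
  · intro c v hv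
    rw [mem_cone] at hv ⊢
    rcases hv with rfl | ⟨P, hP, hvP⟩
    · left; simp
    · exact Or.inr ⟨P, hP, P.1.smul_mem c hvP⟩
  · rw [card_cone]
    push_cast
    rw [hs1, hV.1]
    simp only [Nat.add_sub_cancel, show k + 2 - 1 = k + 1 from rfl, pow_add]
    linear_combination -hε
  · intro L hL
    have hk := Dual.finrank_ker_add_one_of_ne_zero hL
    rw [Module.finrank_fin_fun] at hk
    rw [nL_cone]
    push_cast
    rw [hs1]
    rcases hV.2 (LinearMap.ker L) (by omega) with h | h
    · left
      rw [h]
      simp only [show k + 2 - 1 = k + 1 from rfl, pow_add]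
      linear_combination -hε
    · right
      rw [h]
      simp only [Nat.add_sub_cancel, show k + 2 - 1 = k + 1 from rfl, pow_add]
      linear_combination -(q:ℤ) ^ 2 * hε

lemma hyp_eq_ker {n : ℕ} (hn : 0 < n) (H : Submodule F (Fin n → F)) (hH : finrank F H = n - 1) :
    ∃ L : Dual F (Fin n → F), L ≠ 0 ∧ H = LinearMap.ker L := by
  have hlt : H < ⊤ := by
    rw [lt_top_iff_ne_top]
    rintro rfl
    rw [finrank_top, Module.finrank_fin_fun] at hH
    omega
  obtain ⟨L, hL, hle⟩ := Submodule.exists_le_ker_of_lt_top H hlt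
  refine ⟨L, hL, Submodule.eq_of_le_of_finrank_eq hle ?_⟩
  have hk := Dual.finrank_ker_add_one_of_ne_zero hL
  rw [Module.finrank_fin_fun] at hk
  omega

lemma charVec_apply (p n : ℕ) (S : Set (ProjPoint F n)) (P : ProjPoint F n) :
    charVec F p n S P = if P ∈ S then 1 else 0 := by
  simp [charVec, Set.indicator_apply]

lemma charVec_sum (p n : ℕ) [Fintype (ProjPoint F n)] (S : Set (ProjPoint F n)) :
    ∑ P, charVec F p n S P = (S.ncard : ZMod p) := by
  simp only [charVec_apply, Finset.sum_boole]
  rw [← Set.ncard_coe_finset]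
  simp

/-- from the code to `Cd` -/
lemma Cd_of_code {p n : ℕ} (hp : p.Prime) [CharP F p] (hn : 2 ≤ n) [Fintype (ProjPoint F n)]
    {c : ProjPoint F n → ZMod p} (hc : c ∈ hypCode F p n) :
    ∃ g ∈ Cd F (Fin n → F), (∀ v, v ≠ 0 → ∀ P : ProjPoint F n, v ∈ P.1 → g v = ZMod.castHom (dvd_refl p) F (c P)) ∧
      g 0 = ZMod.castHom (dvd_refl p) F (∑ P, c P) := by
  have : Fact p.Prime := ⟨hp⟩
  unfold hypCode at hc
  induction hc using Submodule.span_induction with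
  | mem c h =>
    obtain ⟨H, hH, rfl⟩ := h
    obtain ⟨L, hL, rfl⟩ := hyp_eq_ker (by omega) H hH
    refine ⟨_, Submodule.subset_span ⟨L, rfl⟩, ?_, ?_⟩
    · intro v hv P hP
      rw [charVec_apply]
      have := pt_le hv hP (LinearMap.ker L)
      rw [LinearMap.mem_ker] at this
      by_cases hLv : L v = 0
      · simp [this, hLv]
      · simp [this, hLv]
    · rw [charVec_sum]
      simp only [map_zero, if_true, map_natCast]
      have h1 := count_pts (pointsIn F n (LinearMap.ker L))
      have h2 := fib_card L hL
      have h3 : (Finset.univ.filter fun g => L g = 0).card = 1 +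
          {v : Fin n → F | v ≠ 0 ∧ ∃ P ∈ pointsIn F n (LinearMap.ker L), v ∈ P.1}.ncard := by
        rw [← Set.ncard_coe_finset]
        have : ((Finset.univ.filter fun v => L v = 0 : Finset _) : Set (Fin n → F)) =
            insert 0 {v : Fin n → F | v ≠ 0 ∧ ∃ P ∈ pointsIn F n (LinearMap.ker L), v ∈ P.1} := by
          ext v
          simp only [Finset.mem_coe, Finset.mem_filter, Finset.mem_univ, true_and, Set.mem_insert_iff,
            Set.mem_ofPred_eq]
          by_cases hv : v = 0
          · simp [hv]
          · simp only [hv, false_or, ne_eq, not_false_eq_true, true_and]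
            constructor
            · intro h
              obtain ⟨P, hP⟩ := exists_pt hv
              exact ⟨P, (pt_le hv hP _).2 h, hP⟩
            · rintro ⟨P, hP, hvP⟩
              exact (pt_le hv hvP _).1 hP
        rw [this, Set.ncard_insert_of_notMem (by simp) (Set.toFinite _), add_comm]
      rw [h3, h1, Fintype.card_fun, Fintype.card_fin] at h2
      obtain ⟨k, rfl⟩ : ∃ k, n = k + 2 := ⟨n - 2, by omega⟩
      have hpos : 0 < Fintype.card F := Fintype.card_pos
      have h4 : 1 + (pointsIn F (k + 2) (LinearMap.ker L)).ncard * (Fintype.card F - 1) =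
          Fintype.card F ^ (k + 1) := by
        apply Nat.eq_of_mul_eq_mul_left hpos
        rw [h2]; ring
      have h5 := congrArg (Nat.cast (R := F)) h4
      push_cast [Nat.cast_sub (show 1 ≤ Fintype.card F from hpos)] at h5
      rw [FiniteField.cast_card_eq_zero F, zero_pow (by omega)] at h5
      linear_combination h5
  | zero => exact ⟨0, Submodule.zero_mem _, by simp, by simp⟩
  | add c d _ _ h1 h2 =>
    obtain ⟨g1, a1, b1, c1⟩ := h1
    obtain ⟨g2, a2, b2, c2⟩ := h2
    refine ⟨g1 + g2, Submodule.add_mem _ a1 a2, fun v hv P hP => ?_, ?_⟩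
    · simp [b1 v hv P hP, b2 v hv P hP]
    · simp only [Pi.add_apply, c1, c2, Finset.sum_add_distrib, map_add]
  | smul a c _ h1 =>
    obtain ⟨g1, a1, b1, c1⟩ := h1
    refine ⟨ZMod.castHom (dvd_refl p) F a • g1, Submodule.smul_mem _ _ a1, fun v hv P hP => ?_, ?_⟩
    · simp only [Pi.smul_apply, smul_eq_mul, b1 v hv P hP, map_mul]
    · simp only [Pi.smul_apply, smul_eq_mul, c1, ← Finset.mul_sum, map_mul]

/-- from `Cd` to the code -/
lemma code_of_Cd {p n : ℕ} (hp : p.Prime) [CharP F p] (hn : 2 ≤ n)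
    {c : ProjPoint F n → ZMod p} {g : (Fin n → F) → F} (hg : g ∈ Cd F (Fin n → F))
    (hgc : ∀ P, g (rep P) = ZMod.castHom (dvd_refl p) F (c P)) : c ∈ hypCode F p n := by
  have : Fact p.Prime := ⟨hp⟩
  have := Fintype.ofFinite (ProjPoint F n)
  have : Finite (Dual F (Fin n → F)) := Module.finite_of_finite F
  have := Fintype.ofFinite (Dual F (Fin n → F))
  by_contra hcon
  obtain ⟨w, hwc, hw⟩ := Submodule.exists_le_ker_of_notMem hcon
  let κ := ZMod.castHom (dvd_refl p) F
  let wt : ProjPoint F n → ZMod p := fun P => w (Pi.single P 1)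
  have hwt : ∀ d, w d = ∑ P, wt P * d P := by
    intro d
    have : d = ∑ P, d P • Pi.single (M := fun _ => ZMod p) P 1 := by
      ext P; simp [Finset.sum_apply, Pi.single_apply]
    conv_lhs => rw [this]
    rw [map_sum]
    simp [wt, mul_comm]
  let W : ((Fin n → F) → F) →ₗ[F] F := ∑ P, κ (wt P) • LinearMap.proj (rep P)
  have hW : ∀ g, W g = ∑ P, κ (wt P) * g (rep P) := by
    intro g; simp [W, LinearMap.sum_apply]
  let χ : Dual F (Fin n → F) → (Fin n → F) → F := fun L v => if L v = 0 then 1 else 0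
  have hWL : ∀ L, L ≠ 0 → W (χ L) = 0 := by
    intro L hL
    have hk := Dual.finrank_ker_add_one_of_ne_zero hL
    rw [Module.finrank_fin_fun] at hk
    have h1 : w (charVec F p n (pointsIn F n (LinearMap.ker L))) = 0 := by
      have : charVec F p n (pointsIn F n (LinearMap.ker L)) ∈ hypCode F p n :=
        Submodule.subset_span ⟨_, by omega, rfl⟩
      exact hw this
    rw [hwt] at h1
    have h2 := congrArg κ h1
    rw [map_sum, map_zero] at h2
    rw [hW, ← h2]
    refine Finset.sum_congr rfl fun P _ => ?_
    rw [map_mul, charVec_apply]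
    have := pt_le (rep_ne P) (rep_mem P) (LinearMap.ker L)
    rw [LinearMap.mem_ker] at this
    by_cases hLv : L (rep P) = 0
    · simp [χ, this, hLv]
    · simp [χ, this, hLv]
  have hsum : ∀ v : Fin n → F, v ≠ 0 → ∑ L, χ L v = 0 := by
    intro v hv
    simp only [χ, Finset.sum_boole]
    have hev : Dual.eval F (Fin n → F) v ≠ 0 := by
      intro h0
      exact hv ((Module.eval_apply_eq_zero_iff F v).1 h0)
    have h1 := fib_card (Dual.eval F (Fin n → F) v) hev
    have hcard : Fintype.card (Dual F (Fin n → F)) = Fintype.card F ^ n := by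
      rw [card_eq_pow_finrank (K := F), Subspace.dual_finrank_eq, Module.finrank_fin_fun]
    rw [hcard] at h1
    obtain ⟨k, rfl⟩ : ∃ k, n = k + 2 := ⟨n - 2, by omega⟩
    have hpos : 0 < Fintype.card F := Fintype.card_pos
    have h4 : (Finset.univ.filter fun L : Dual F (Fin (k + 2) → F) => L v = 0).card = Fintype.card F ^ (k + 1) := by
      apply Nat.eq_of_mul_eq_mul_left hpos
      refine Eq.trans ?_ (h1.trans (by ring))
      congr!
    rw [h4]
    push_cast
    rw [FiniteField.cast_card_eq_zero F, zero_pow (by omega)]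
  have hW0 : W (χ 0) = 0 := by
    have h1 : ∑ L, W (χ L) = 0 := by
      simp only [hW]
      rw [Finset.sum_comm]
      refine Finset.sum_eq_zero fun P _ => ?_
      rw [← Finset.mul_sum, hsum _ (rep_ne P), mul_zero]
    rwa [Finset.sum_eq_single_of_mem 0 (Finset.mem_univ _) (fun L _ hL => hWL L hL)] at h1
  have hWC : Cd F (Fin n → F) ≤ LinearMap.ker W := by
    unfold Cd
    rw [Submodule.span_le]
    rintro _ ⟨L, rfl⟩
    by_cases hL : L = 0
    · rw [hL]; exact hW0
    · exact hWL L hL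
  have h1 := hWC hg
  rw [LinearMap.mem_ker, hW] at h1
  apply hwc
  have hinj : Function.Injective κ := κ.injective
  apply hinj
  rw [hwt, map_sum, map_zero, ← h1]
  refine Finset.sum_congr rfl fun P _ => ?_
  rw [map_mul, hgc]

theorem main_thm (p h q r : ℕ) (hp : p.Prime) (hq : q = p ^ h)
    (hcase : (r = 3 ∧ 4 < q) ∨ (4 ≤ r ∧ q = p ∧ 4 < p) ∨ (4 ≤ r ∧ q = p ^ 2 ∧ 3 < p))
    (hF : Fintype.card F = q ^ 2)
    (V : Set (ProjPoint F (r + 1))) (hV : IsQuasiHermitian F q r V) :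
    IsNonsingHermitian F q (r + 1) V ↔ charVec F p (r + 1) V ∈ hypCode F p (r + 1) := by
  have : Fact p.Prime := ⟨hp⟩
  have hchar : CharP F p := charP_of_card_eq_prime_pow (f := h * 2) (by rw [hF, hq, ← pow_mul])
  have hq4 : 4 < q := by
    rcases hcase with ⟨_, h1⟩ | ⟨_, h1, h2⟩ | ⟨_, h1, h2⟩
    · exact h1
    · omega
    · rw [h1]; nlinarith
  have hr : 3 ≤ r := by omega
  have hqq : ∀ a : F, (a ^ q) ^ q = a := fun a => by
    rw [← pow_mul, ← pow_two, ← hF, FiniteField.pow_card]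
  constructor
  · rintro ⟨B, -, hB, rfl⟩
    refine code_of_Cd hp (by omega) (herm_mem_Cd hp hq (by omega) hF B) ?_
    intro P
    have hHq : ∀ x : Fin (r + 1) → F, (∑ i, ∑ j, x i * B i j * (x j) ^ q) ^ q =
        ∑ i, ∑ j, x i * B i j * (x j) ^ q := by
      intro x
      conv_lhs => rw [hq, sum_pow_char_pow, ← hq]
      conv_rhs => rw [Finset.sum_comm]
      refine Finset.sum_congr rfl fun i _ => ?_
      conv_lhs => rw [hq, sum_pow_char_pow, ← hq]
      refine Finset.sum_congr rfl fun j _ => ?_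
      have : B j i = (B i j) ^ q := congrFun (congrFun hB i) j
      rw [mul_pow, mul_pow, hqq, this]; ring
    have hsm : ∀ (c : F) (x : Fin (r + 1) → F), ∑ i, ∑ j, (c • x) i * B i j * ((c • x) j) ^ q =
        c ^ (q + 1) * ∑ i, ∑ j, x i * B i j * (x j) ^ q := by
      intro c x
      rw [Finset.mul_sum]
      refine Finset.sum_congr rfl fun i _ => ?_
      rw [Finset.mul_sum]
      refine Finset.sum_congr rfl fun j _ => ?_
      simp only [Pi.smul_apply, smul_eq_mul]
      ring
    have hP : P ∈ hermSet F q (r + 1) B ↔ ∑ i, ∑ j, rep P i * B i j * (rep P j) ^ q = 0 := by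
      constructor
      · intro hP; exact hP _ (rep_mem P)
      · intro h0 x hx
        rw [rep_span, Submodule.mem_span_singleton] at hx
        obtain ⟨c, rfl⟩ := hx
        rw [hsm, h0, mul_zero]
    rw [charVec_apply]
    have h1 := hHq (rep P)
    by_cases h0 : ∑ i, ∑ j, rep P i * B i j * (rep P j) ^ q = 0
    · rw [if_pos (hP.2 h0), h0, zero_pow (by omega)]; simp
    · rw [if_neg (fun hh => h0 (hP.1 hh)), map_zero, sub_eq_zero]
      symm
      generalize ∑ i, ∑ j, rep P i * B i j * (rep P j) ^ q = y at *
      have : y ^ (q - 1) * y = 1 * y := by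
        rw [← pow_succ, show q - 1 + 1 = q by omega, h1, one_mul]
      exact mul_right_cancel₀ h0 this
  · intro hcode
    have := Fintype.ofFinite (ProjPoint F (r + 1))
    obtain ⟨f, hf, hfv, hf0⟩ := Cd_of_code hp (by omega) hcode
    have hQ := QH_of (by omega) hr hF V hV
    have hq0 : (q : F) = 0 := by
      have := FiniteField.cast_card_eq_zero F
      rw [hF] at this
      push_cast at this
      exact eq_zero_of_pow_eq_zero this
    have hf0' : f 0 = 1 := by
      rw [hf0, charVec_sum, map_natCast]
      have h1 := congrArg (Int.cast (R := F)) hV.1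
      push_cast at h1
      have hε : ((-1:F)) ^ r * (-1) ^ r = 1 := by rw [← mul_pow]; simp
      rw [hq0, zero_pow (by omega), zero_pow (by omega), zero_pow (by omega)] at h1
      linear_combination -h1 + hε
    have hf1 : ∀ v, v ∈ cone V → f v = 1 := by
      intro v hv
      by_cases h0 : v = 0
      · rw [h0, hf0']
      · obtain ⟨P, hP⟩ := exists_pt h0
        rw [hfv v h0 P hP, charVec_apply, if_pos ((mem_cone_iff V h0 hP).1 hv), map_one]
    have hf2 : ∀ v, v ∉ cone V → f v = 0 := by
      intro v hv
      by_cases h0 : v = 0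
      · exact absurd ((mem_cone V v).2 (Or.inl h0)) hv
      · obtain ⟨P, hP⟩ := exists_pt h0
        rw [hfv v h0 P hP, charVec_apply, if_neg (fun hh => hv ((mem_cone_iff V h0 hP).2 hh)), map_zero]
    have ht : ∀ x, x ∉ cone V → ∀ v, sC F (cone V) x v = 1 ∨ sC F (cone V) x v = q + 1 := by
      intro x hx v
      refine hQ.line_types ?_ p h hp hq hcase hx v
      convert hf using 1
      ext v
      split_ifs with hv
      · exact (hf1 v hv).symm
      · exact (hf2 v hv).symm
    obtain ⟨B, hB1, hB2, hB3⟩ := hQ.nonsing hf hf1 hf2 p h hp hq hq4 ht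
    refine ⟨B, hB1, hB2, ?_⟩
    ext P
    constructor
    · intro hP x hx
      rw [← hB3, mem_cone]
      exact Or.inr ⟨P, hP, hx⟩
    · intro hP
      rw [← mem_cone_iff V (rep_ne P) (rep_mem P), hB3]
      exact hP _ (rep_mem P)
end

/-- Main theorem: under the stated conditions on `r` and `q = p^h`,
a quasi-Hermitian variety of PG(r, q²) is a non-singular Hermitian variety iff its
characteristic vector lies in the `F_p`-code spanned by the hyperplanes. -/
theorem stmt0 (p h q r : ℕ) (hp : p.Prime) (hq : q = p ^ h)
    (hcase : (r = 3 ∧ 4 < q) ∨ (4 ≤ r ∧ q = p ∧ 4 < p) ∨ (4 ≤ r ∧ q = p ^ 2 ∧ 3 < p))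
    (F : Type) [Field F] [Fintype F] (hF : Fintype.card F = q ^ 2)
    (V : Set (ProjPoint F (r + 1))) (hV : IsQuasiHermitian F q r V) :
    IsNonsingHermitian F q (r + 1) V ↔ charVec F p (r + 1) V ∈ hypCode F p (r + 1) := by
  exact main_thm p h q r hp hq hcase hF V hV
end

section
/- Let r ≥ 3 and q = p^h with p prime, h ≥ 1, and let V be a quasi-Hermitian variety of PG(r,q^2) whose characteristic vector v^V belongs to C_p. Then every line of PG(r,q^2) meets V in a number of points congruent to 1 modulo p; in particular no line of PG(r,q^2) is disjoint from V. -/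
/-!
Common framework: `ProjPoint F n` is the set of points of the projective space
PG(n-1, |F|) (so PG(r, q²) corresponds to `n = r + 1` and `Fintype.card F = q ^ 2`).
Projective subspaces of projective dimension `k` are the submodules of `Fin n → F`
of `finrank` equal to `k + 1`; lines have finrank 2, planes finrank 3 and
hyperplanes finrank `n - 1 = r`.
-/

open Module Matrix

theorem aux_card (F : Type) [Field F] [Fintype F] (p n : ℕ) [Fact p.Prime]
    (hpF : (Fintype.card F : ZMod p) = 0) (W : Submodule F (Fin n → F))
    (hW : 1 ≤ finrank F W) : ((pointsIn F n W).ncard : ZMod p) = 1 := by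
  classical
  have h1 : Nat.card (Projectivization F W) = (pointsIn F n W).ncard := by
    rw [Nat.card_congr (Projectivization.equivSubmodule F W), ← Nat.card_coe_set_eq]
    let f : {H : Submodule F W // finrank F H = 1} → pointsIn F n W := fun H =>
      ⟨⟨H.1.map W.subtype, by
        rw [(Submodule.equivMapOfInjective _ W.injective_subtype H.1).symm.finrank_eq]; exact H.2⟩,
        Submodule.map_subtype_le W H.1⟩
    refine Nat.card_eq_of_bijective f ⟨?_, ?_⟩
    · intro a b hab
      have h2 : a.1.map W.subtype = b.1.map W.subtype :=
        congrArg (fun x : pointsIn F n W => x.1.1) hab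
      exact Subtype.ext (Submodule.map_injective_of_injective W.injective_subtype h2)
    · rintro ⟨P, hP⟩
      have h3 : (P.1.comap W.subtype).map W.subtype = P.1 := by
        rw [Submodule.map_comap_subtype]; exact inf_eq_right.mpr hP
      refine ⟨⟨P.1.comap W.subtype, ?_⟩, ?_⟩
      · rw [(Submodule.equivMapOfInjective _ W.injective_subtype _).finrank_eq, h3]; exact P.2
      · exact Subtype.ext (Subtype.ext h3)
  have h2 := Projectivization.card' F W
  rw [h1, Module.natCard_eq_pow_finrank (K := F), Nat.card_eq_fintype_card] at h2
  have h3 : 1 ≤ Fintype.card F := Fintype.card_pos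
  have h4 := congrArg (Nat.cast : ℕ → ZMod p) h2
  push_cast [Nat.cast_sub h3] at h4
  rw [hpF, zero_pow (by omega)] at h4
  linear_combination h4

theorem aux_sum (F : Type) [Field F] (p n : ℕ) [Fintype (ProjPoint F n)]
    (S T : Set (ProjPoint F n)) :
    ∑ P, charVec F p n S P * charVec F p n T P = ((T ∩ S).ncard : ZMod p) := by
  classical
  rw [Set.ncard_eq_toFinset_card', Finset.card_eq_sum_ones, Nat.cast_sum, ← Finset.sum_filter_add_sum_filter_not Finset.univ (· ∈ T ∩ S)]
  rw [Finset.sum_eq_zero (s := Finset.univ.filter (fun x => ¬ x ∈ T ∩ S)), add_zero]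
  · apply Finset.sum_congr
    · ext; simp
    · intro x hx
      simp at hx
      simp [charVec, hx]
  · intro x hx
    simp only [Finset.mem_filter, Finset.mem_univ, true_and, Set.mem_inter_iff] at hx
    by_cases h : x ∈ T <;> simp_all [charVec]

theorem aux_code (F : Type) [Field F] [Fintype F] (p r : ℕ) [Fact p.Prime]
    [Fintype (ProjPoint F (r + 1))]
    (hpF : (Fintype.card F : ZMod p) = 0) (v : ProjPoint F (r + 1) → ZMod p)
    (hv : v ∈ hypCode F p (r + 1)) (hr : 1 ≤ r) (W : Submodule F (Fin (r + 1) → F))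
    (hW : 2 ≤ finrank F W) :
    ∑ P, charVec F p (r + 1) (pointsIn F (r + 1) W) P * v P = ∑ P, v P := by
  induction hv using Submodule.span_induction with
  | mem x hx =>
    obtain ⟨H, hH, rfl⟩ := hx
    have key : ∀ U : Submodule F (Fin (r + 1) → F), 2 ≤ finrank F U →
        ∑ P, charVec F p (r + 1) (pointsIn F (r + 1) U) P *
          charVec F p (r + 1) (pointsIn F (r + 1) H) P = 1 := by
      intro U hU
      rw [aux_sum]
      have : pointsIn F (r + 1) H ∩ pointsIn F (r + 1) U = pointsIn F (r + 1) (H ⊓ U) := by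
        ext P; simp [pointsIn]
      rw [this]
      apply aux_card F p _ hpF
      have h1 := Submodule.finrank_sup_add_finrank_inf_eq H U
      have h2 := Submodule.finrank_le (H ⊔ U)
      simp at h2
      omega
    rw [key W hW, ← key ⊤ (by simp; omega)]
    simp [charVec, pointsIn]
  | zero => simp
  | add x y _ _ hx hy => simp [mul_add, Finset.sum_add_distrib, hx, hy]
  | smul a x _ hx =>
    simp only [Pi.smul_apply, smul_eq_mul, mul_left_comm _ a, ← Finset.mul_sum, hx]

/-- every line of PG(r, q²) meets a quasi-Hermitian variety whose
characteristic vector lies in `C_p` in `1 (mod p)` points; in particular no line is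
disjoint from it. -/
theorem stmt2 (p h q r : ℕ) (hp : p.Prime) (hh : 1 ≤ h) (hq : q = p ^ h) (hr : 3 ≤ r)
    (F : Type) [Field F] [Fintype F] (hF : Fintype.card F = q ^ 2)
    (V : Set (ProjPoint F (r + 1))) (hV : IsQuasiHermitian F q r V)
    (hcode : charVec F p (r + 1) V ∈ hypCode F p (r + 1)) :
    ∀ L : Submodule F (Fin (r + 1) → F), finrank F L = 2 →
      secant F (r + 1) V L ≡ 1 [MOD p] ∧ (V ∩ pointsIn F (r + 1) L).Nonempty := by
  classical
  intro L hL
  have : Fact p.Prime := ⟨hp⟩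
  have : Finite (ProjPoint F (r + 1)) := by unfold ProjPoint; infer_instance
  have := Fintype.ofFinite (ProjPoint F (r + 1))
  have hq0 : (q : ZMod p) = 0 := by
    rw [hq]; push_cast; rw [ZMod.natCast_self, zero_pow (by omega)]
  have hpF : (Fintype.card F : ZMod p) = 0 := by
    rw [hF]; push_cast; rw [hq0]; simp
  have h1 := aux_code F p r hpF _ hcode (by omega) L (by omega)
  have h2 := aux_code F p r hpF _ hcode (by omega) ⊤ (by simp; omega)
  rw [← h2, aux_sum, aux_sum] at h1
  have htop : V ∩ pointsIn F (r + 1) ⊤ = V := by ext P; simp [pointsIn]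
  rw [htop] at h1
  have h3 := congrArg (Int.cast : ℤ → ZMod p) hV.1
  push_cast at h3
  rw [hq0, zero_pow (by omega), zero_pow (by omega), zero_pow (by omega)] at h3
  have h4 : ((-1 : ZMod p) ^ r) * (-1) ^ r = 1 := by rw [← mul_pow]; simp
  have h5 : (secant F (r + 1) V L : ZMod p) = 1 := by
    unfold secant; rw [h1]; linear_combination -h3 + h4
  have h6 : secant F (r + 1) V L ≡ 1 [MOD p] := by
    rw [← ZMod.natCast_eq_natCast_iff]; simpa using h5
  refine ⟨h6, ?_⟩
  by_contra hne
  rw [Set.not_nonempty_iff_eq_empty] at hne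
  unfold secant at h5
  rw [hne] at h5
  simp at h5
end

section
/- Let r ≥ 3 and q = p^h with p prime, h ≥ 1, and let V be a set of points of PG(r,q^2) whose characteristic vector v^V belongs to C_p. Then for every hyperplane H of PG(r,q^2), the characteristic vector of V ∩ H, regarded as a function on the points of H, lies in the F_p-span of the characteristic vectors of the hyperplanes of H (i.e., of the (r-2)-dimensional subspaces of PG(r,q^2) contained in H). -/
/-!
Common framework: `ProjPoint F n` is the set of points of the projective space
PG(n-1, |F|) (so PG(r, q²) corresponds to `n = r + 1` and `Fintype.card F = q ^ 2`).
Projective subspaces of projective dimension `k` are the submodules of `Fin n → F`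
of `finrank` equal to `k + 1`; lines have finrank 2, planes finrank 3 and
hyperplanes finrank `n - 1 = r`.
-/

open Module Matrix

lemma point_gen (F : Type) [Field F] (n : ℕ) (P : ProjPoint F n) :
    ∃ x : Fin n → F, x ≠ 0 ∧ P.1 = Submodule.span F {x} := by
  obtain ⟨v, hv, hs⟩ := finrank_eq_one_iff'.1 P.2
  refine ⟨v, fun h => hv (Subtype.ext h), le_antisymm ?_ ?_⟩
  · intro y hy
    obtain ⟨c, hc⟩ := hs ⟨y, hy⟩
    exact Submodule.mem_span_singleton.2 ⟨c, congrArg Subtype.val hc⟩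
  · rw [Submodule.span_singleton_le_iff_mem]
    exact v.2

lemma hyp_mem (p r : ℕ) (hr : 3 ≤ r) (F : Type) [Field F] [Fintype F]
    (hF : ((Fintype.card F : ℕ) : ZMod p) = 0)
    (H : Submodule F (Fin (r + 1) → F)) (hH : finrank F H = r) :
    charVec F p (r + 1) (pointsIn F (r + 1) H) ∈
        Submodule.span (ZMod p)
          {v | ∃ W : Submodule F (Fin (r + 1) → F), W ≤ H ∧ finrank F W = r - 1 ∧
            v = charVec F p (r + 1) (pointsIn F (r + 1) W)} := by
  classical
  haveI : Finite (Dual F H) := Module.finite_of_finite F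
  haveI : Fintype (Dual F H) := Fintype.ofFinite _
  have key : charVec F p (r + 1) (pointsIn F (r + 1) H) =
      - ∑ f ∈ (Finset.univ : Finset (Dual F H)).erase 0,
        charVec F p (r + 1) (pointsIn F (r + 1) ((LinearMap.ker f).map H.subtype)) := by
    funext P
    obtain ⟨x, hx0, hx⟩ := point_gen F _ P
    have hm : ∀ W : Submodule F (Fin (r + 1) → F),
        charVec F p (r + 1) (pointsIn F (r + 1) W) P = if x ∈ W then 1 else 0 := by
      intro W
      simp [charVec, pointsIn, Set.indicator_apply, hx]
    simp only [Pi.neg_apply, Finset.sum_apply, hm]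
    by_cases hxH : x ∈ H
    · have e : ∀ f : Dual F H, x ∈ (LinearMap.ker f).map H.subtype ↔
          f ∈ LinearMap.ker (Dual.eval F H ⟨x, hxH⟩) := by
        intro f
        simp [hxH]
      simp only [e, hxH, if_true]
      have h1 : ∑ f : Dual F H, (if f ∈ LinearMap.ker (Dual.eval F H ⟨x, hxH⟩)
          then (1 : ZMod p) else 0) = 0 := by
        rw [Finset.sum_boole]
        have hc : (Finset.univ.filter fun f : Dual F H =>
            f ∈ LinearMap.ker (Dual.eval F H ⟨x, hxH⟩)).card
            = Fintype.card F ^ finrank F (LinearMap.ker (Dual.eval F H ⟨x, hxH⟩)) := by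
          have h4 := Module.natCard_eq_pow_finrank (K := F)
            (V := LinearMap.ker (Dual.eval F H ⟨x, hxH⟩))
          rw [Nat.card_eq_fintype_card (α := F)] at h4
          refine Eq.trans ?_ h4
          rw [Nat.card_eq_fintype_card, Fintype.card_subtype]
        have hpos : finrank F (LinearMap.ker (Dual.eval F H ⟨x, hxH⟩)) ≠ 0 := by
          have h2 := LinearMap.finrank_range_add_finrank_ker (Dual.eval F H ⟨x, hxH⟩)
          have h3 := Submodule.finrank_le (LinearMap.range (Dual.eval F H ⟨x, hxH⟩))
          rw [Subspace.dual_finrank_eq, hH] at h2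
          rw [Module.finrank_self] at h3
          omega
        rw [hc, Nat.cast_pow, hF, zero_pow hpos]
      rw [← Finset.add_sum_erase _ _ (Finset.mem_univ (0 : Dual F H))] at h1
      rw [if_pos (Submodule.zero_mem _)] at h1
      exact eq_neg_of_add_eq_zero_left h1
    · rw [if_neg hxH, Finset.sum_eq_zero, neg_zero]
      intro f _
      rw [if_neg]
      intro h
      exact hxH (Submodule.map_subtype_le _ _ h)
  rw [key]
  refine Submodule.neg_mem _ (Submodule.sum_mem _ fun f hf => Submodule.subset_span ?_)
  refine ⟨_, Submodule.map_subtype_le _ _, ?_, rfl⟩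
  have hf0 : f ≠ 0 := (Finset.mem_erase.1 hf).1
  rw [Submodule.finrank_map_subtype_eq]
  have h2 := LinearMap.finrank_range_add_finrank_ker f
  rw [LinearMap.range_eq_top.2 (LinearMap.surjective hf0), finrank_top, Module.finrank_self, hH] at h2
  omega

/-- for a point set `V` with characteristic vector in `C_p`, for every
hyperplane `H` the characteristic vector of `V ∩ H` lies in the `F_p`-span of the
characteristic vectors of the hyperplanes of `H` (the (r-2)-dimensional subspaces
contained in `H`). -/
theorem stmt3 (p h q r : ℕ) (hp : p.Prime) (hh : 1 ≤ h) (hq : q = p ^ h) (hr : 3 ≤ r)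
    (F : Type) [Field F] [Fintype F] (hF : Fintype.card F = q ^ 2)
    (V : Set (ProjPoint F (r + 1)))
    (hcode : charVec F p (r + 1) V ∈ hypCode F p (r + 1)) :
    ∀ H : Submodule F (Fin (r + 1) → F), finrank F H = r →
      charVec F p (r + 1) (V ∩ pointsIn F (r + 1) H) ∈
        Submodule.span (ZMod p)
          {v | ∃ W : Submodule F (Fin (r + 1) → F), W ≤ H ∧ finrank F W = r - 1 ∧
            v = charVec F p (r + 1) (pointsIn F (r + 1) W)} := by
  intro H hH
  classical
  have hF0 : ((Fintype.card F : ℕ) : ZMod p) = 0 := by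
    rw [hF, hq, ← pow_mul, Nat.cast_pow, ZMod.natCast_self, zero_pow (by omega)]
  set S := Submodule.span (ZMod p)
          {v | ∃ W : Submodule F (Fin (r + 1) → F), W ≤ H ∧ finrank F W = r - 1 ∧
            v = charVec F p (r + 1) (pointsIn F (r + 1) W)} with hS
  have hmul : ∀ A : Set (ProjPoint F (r + 1)), charVec F p (r + 1) (A ∩ pointsIn F (r + 1) H)
      = LinearMap.mulLeft (ZMod p) (charVec F p (r + 1) (pointsIn F (r + 1) H))
        (charVec F p (r + 1) A) := by
    intro A
    funext P
    by_cases h1 : P ∈ A <;> by_cases h2 : P ∈ pointsIn F (r + 1) H <;>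
      simp [charVec, Set.indicator_apply, h1, h2]
  rw [hmul]
  have hle : hypCode F p (r + 1) ≤ S.comap
      (LinearMap.mulLeft (ZMod p) (charVec F p (r + 1) (pointsIn F (r + 1) H))) := by
    refine Submodule.span_le.2 ?_
    rintro v ⟨K, hK, rfl⟩
    rw [SetLike.mem_coe, Submodule.mem_comap, ← hmul]
    have hint : pointsIn F (r + 1) K ∩ pointsIn F (r + 1) H = pointsIn F (r + 1) (K ⊓ H) := by
      ext P
      simp [pointsIn]
    rw [hint]
    by_cases hKH : H ≤ K
    · rw [inf_eq_right.2 hKH]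
      exact hyp_mem p r hr F hF0 H hH
    · refine Submodule.subset_span ⟨_, inf_le_right, ?_, rfl⟩
      have h1 := Submodule.finrank_sup_add_finrank_inf_eq K H
      have h2 : finrank F K < finrank F (K ⊔ H : Submodule F (Fin (r + 1) → F)) := by
        apply Submodule.finrank_lt_finrank_of_lt
        exact left_lt_sup.2 hKH
      have h3 := Submodule.finrank_le (K ⊔ H)
      rw [Module.finrank_fin_fun] at h3
      omega
  exact hle hcode
end

section
/- Let r ≥ 3 and q = p^h with p prime, h ≥ 1, and let V be a set of points of PG(r,q^2) whose characteristic vector v^V belongs to C_p. Then for every projective subspace S of PG(r,q^2) of dimension at least 2, the characteristic vector of V ∩ S, regarded as a function on the points of S, lies in the F_p-span of the characteristic vectors of the hyperplanes of S (i.e., of the subspaces of codimension 1 in S). -/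
/-!
Common framework: `ProjPoint F n` is the set of points of the projective space
PG(n-1, |F|) (so PG(r, q²) corresponds to `n = r + 1` and `Fintype.card F = q ^ 2`).
Projective subspaces of projective dimension `k` are the submodules of `Fin n → F`
of `finrank` equal to `k + 1`; lines have finrank 2, planes finrank 3 and
hyperplanes finrank `n - 1 = r`.
-/

open Module Matrix

open Module in
theorem pt_le_iff {F : Type} [Field F] {n : ℕ} (P : ProjPoint F n) :
    ∃ x : Fin n → F, x ≠ 0 ∧ ∀ W : Submodule F (Fin n → F), P.1 ≤ W ↔ x ∈ W := by
  obtain ⟨v, hv, hs⟩ := finrank_eq_one_iff'.1 P.2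
  refine ⟨v.1, fun h => hv (Subtype.ext h), fun W => ⟨fun h => h v.2, fun h y hy => ?_⟩⟩
  obtain ⟨c, hc⟩ := hs ⟨y, hy⟩
  have : c • v.1 = y := congrArg Subtype.val hc
  rw [← this]
  exact W.smul_mem c h

open Module in
theorem whole_mem (F : Type) [Field F] [Fintype F] (p n : ℕ)
    (hcard : (Fintype.card F : ZMod p) = 0)
    (S : Submodule F (Fin n → F)) (hS : 3 ≤ finrank F S) :
    charVec F p n (pointsIn F n S) ∈ Submodule.span (ZMod p)
          {v | ∃ W : Submodule F (Fin n → F), W ≤ S ∧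
            finrank F W = finrank F S - 1 ∧
            v = charVec F p n (pointsIn F n W)} := by
  classical
  let b := finBasis F S
  let i0 : Fin (finrank F S) := ⟨0, by omega⟩
  let i1 : Fin (finrank F S) := ⟨1, by omega⟩
  have h01 : i1 ≠ i0 := by simp [i0, i1]
  let f : S →ₗ[F] F := b.coord i0
  let g : S →ₗ[F] F := b.coord i1
  let K : (S →ₗ[F] F) → Submodule F (Fin n → F) := fun φ => (LinearMap.ker φ).map S.subtype
  have hK : ∀ φ : S →ₗ[F] F, φ ≠ 0 → charVec F p n (pointsIn F n (K φ)) ∈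
      Submodule.span (ZMod p)
          {v | ∃ W : Submodule F (Fin n → F), W ≤ S ∧
            finrank F W = finrank F S - 1 ∧
            v = charVec F p n (pointsIn F n W)} := by
    intro φ hφ
    refine Submodule.subset_span ⟨K φ, Submodule.map_subtype_le _ _, ?_, rfl⟩
    have h1 := Module.Dual.finrank_ker_add_one_of_ne_zero (f := φ) hφ
    have h2 : finrank F (K φ) = finrank F (LinearMap.ker φ) :=
      (Submodule.equivMapOfInjective S.subtype S.injective_subtype _).finrank_eq.symm
    omega
  have key : charVec F p n (pointsIn F n S) =
      charVec F p n (pointsIn F n (K g)) +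
        ∑ t : F, charVec F p n (pointsIn F n (K (f + t • g))) := by
    funext P
    obtain ⟨x, hx, hP⟩ := pt_le_iff P
    have hc : ∀ W, charVec F p n (pointsIn F n W) P = if x ∈ W then 1 else 0 := by
      intro W
      simp [charVec, pointsIn, Set.indicator, hP]
    simp only [Pi.add_apply, Finset.sum_apply, hc]
    by_cases hxS : x ∈ S
    · have hmem : ∀ φ : S →ₗ[F] F, x ∈ K φ ↔ φ ⟨x, hxS⟩ = 0 := by
        intro φ
        simp [K, hxS]
      simp only [hmem, hxS, if_true, LinearMap.add_apply, LinearMap.smul_apply, smul_eq_mul]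
      generalize f ⟨x, hxS⟩ = a
      generalize g ⟨x, hxS⟩ = c
      by_cases hc0 : c = 0
      · subst hc0
        by_cases ha : a = 0 <;> simp [ha, hcard]
      · have : ∀ t : F, a + t * c = 0 ↔ t = -a / c := by
          intro t
          rw [eq_div_iff hc0]
          constructor <;> intro h <;> linear_combination h
        simp [this, hc0]
    · have hmem : ∀ φ : S →ₗ[F] F, x ∉ K φ := fun φ h =>
        hxS (Submodule.map_subtype_le _ _ h)
      simp [hmem, hxS]
  rw [key]
  refine Submodule.add_mem _ (hK _ ?_) (Submodule.sum_mem _ fun t _ => hK _ ?_)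
  · intro h
    have := LinearMap.congr_fun h (b i1)
    simp [g] at this
  · intro h
    have := LinearMap.congr_fun h (b i0)
    simp [f, g, h01.symm] at this

/-- for a point set `V` with characteristic vector in `C_p`, for every
projective subspace `S` of projective dimension at least 2 (i.e. `finrank ≥ 3`), the
characteristic vector of `V ∩ S` lies in the `F_p`-span of the characteristic vectors
of the hyperplanes of `S` (subspaces of codimension 1 in `S`). -/
theorem stmt4 (p h q r : ℕ) (hp : p.Prime) (hh : 1 ≤ h) (hq : q = p ^ h) (hr : 3 ≤ r)
    (F : Type) [Field F] [Fintype F] (hF : Fintype.card F = q ^ 2)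
    (V : Set (ProjPoint F (r + 1)))
    (hcode : charVec F p (r + 1) V ∈ hypCode F p (r + 1)) :
    ∀ S : Submodule F (Fin (r + 1) → F), 3 ≤ finrank F S →
      charVec F p (r + 1) (V ∩ pointsIn F (r + 1) S) ∈
        Submodule.span (ZMod p)
          {v | ∃ W : Submodule F (Fin (r + 1) → F), W ≤ S ∧
            finrank F W = finrank F S - 1 ∧
            v = charVec F p (r + 1) (pointsIn F (r + 1) W)} := by
  intro S hS
  classical
  have hcard : (Fintype.card F : ZMod p) = 0 := by
    rw [hF, hq]
    push_cast
    simp [show h ≠ 0 by omega]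
  let ρ : (ProjPoint F (r + 1) → ZMod p) →ₗ[ZMod p] (ProjPoint F (r + 1) → ZMod p) :=
    LinearMap.mulRight (ZMod p) (charVec F p (r + 1) (pointsIn F (r + 1) S))
  have hρ : ∀ A : Set (ProjPoint F (r + 1)),
      ρ (charVec F p (r + 1) A) = charVec F p (r + 1) (A ∩ pointsIn F (r + 1) S) := by
    intro A
    funext P
    simp only [ρ, charVec, LinearMap.mulRight_apply, Pi.mul_apply, Set.indicator_apply,
      Set.mem_inter_iff]
    by_cases h1 : P ∈ A <;> by_cases h2 : P ∈ pointsIn F (r + 1) S <;> simp [h1, h2]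
  rw [← hρ]
  rw [← Submodule.mem_comap]
  refine (Submodule.span_le (p := Submodule.comap ρ _)).2 ?_ hcode
  rintro _ ⟨H, hH, rfl⟩
  rw [SetLike.mem_coe, Submodule.mem_comap]
  have hint : pointsIn F (r + 1) H ∩ pointsIn F (r + 1) S = pointsIn F (r + 1) (H ⊓ S) := by
    ext P
    simp [pointsIn]
  rw [hρ, hint]
  by_cases hSH : S ≤ H
  · rw [inf_eq_right.2 hSH]
    exact whole_mem F p (r + 1) hcard S hS
  · refine Submodule.subset_span ⟨H ⊓ S, inf_le_right, ?_, rfl⟩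
    have h1 := Submodule.finrank_sup_add_finrank_inf_eq H S
    have h2 : finrank F H < finrank F (H ⊔ S : Submodule F (Fin (r + 1) → F)) :=
      Submodule.finrank_lt_finrank_of_lt (lt_of_le_of_ne le_sup_left
        fun h => hSH (h ▸ le_sup_right))
    have h3 := Submodule.finrank_le (H ⊔ S)
    rw [finrank_fin_fun] at h3
    omega
end
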